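/- (Riemann–Hurwitz type inequality for multinets.) Let (L₁,…,L_k; m; X) be a multinet on a line arrangement L in the complex projective plane, with the multiplicities m(ℓ) having greatest common divisor 1. Let X̄ denote the set of points lying on at least two lines of L but not in X, and for a point p let m_p = |{ℓ ∈ L : p ∈ ℓ}|. Then 3 + |X| ≥ (2−k)·[3d − d² + ∑_{p∈X}(n_p² − n_p)] + 2|L| − ∑_{p∈X̄}(m_p − 1). -/

import Mathlib

/-!
The classes of the multinet define polynomials `F c = ∏ line ^ m` of degree `d`. In an affine chart
containing all intersection points (`exists_basis`), Bézout's theorem shows that two of them, `F`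
and `G`, meet only in the points of `X`, that `∑ n² = d²`, and that every class lies in the pencil
spanned by `F` and `G` (`Net.sum_sq`, `Net.mem_span`). The inequality is obtained by counting the
zeros of the `1`-form `F dG - G dF`, which defines the foliation by the members of the pencil.

The coefficients of this form have greatest common divisor `Q * H`, where `Q = ∏ line ^ (m - 1)` and
`H` is carried by the other multiple components of members (`Net.exists_H`); this uses that `G / F`
is constant along a curve where `F dG - G dF` vanishes (`exists_dvd_of_dvd_wr`). The residual form
`A dx + B dy`, of degree `a` say, defines a foliation of the projective plane, so `(A, B)` has
colength at most `a² - a + 1` (`foliation_colength`). On the other hand the local colength is at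
least `ν² + ν - 1` at a point of `X`, where the form is dicritical of order `ν`
(`local_dicritical`), and at least `(m_p - 1)²` at a point of `X̄` (`local_mul`). By the Chinese
remainder theorem (`sum_local_le`) the local colengths add up to at most the global one, and all the
bounds are proved by comparing dimensions of spaces of polynomials and jets. With the incidence
counts `Net.sum_line`, `Net.sum_sq`, `Net.sum_mu_sq`, this is the asserted inequality when `H = 1`.

In general the contribution of `H` has the right sign provided that
`deg H ² + 3 deg H ≤ ∑ (ord_p H ² + ord_p H)` (`Net.kappa`). This says that the expected dimension
of the linear system of `H`, with its multiplicities on `X` assigned, is at most one, and holds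
if the part of `H` in each member of the pencil does not move. By a Hodge index argument
(`Pencil.moving`), a component of a member that moves gives a pencil whose numerical class is a
proper fraction `b / d` of that of the net. Connectedness of the classes off `X` makes each `F c`
a power of a member of such a pencil, up to taking powers, so that `d` divides `b * m` for every
multiplicity `m`; as the multiplicities have greatest common divisor `1`, this forces `b ≥ d`
(`Net.le_of_coprime`).
-/

namespace Multinet

open MvPolynomial

/-! ### Polynomials, translations and orders of vanishing -/

/-- The coordinate ring of the affine plane. -/
abbrev Poly := MvPolynomial (Fin 2) ℂ

/-- Polynomials all of whose monomials have degree `< n`. The strict bound makes the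
dimension `n(n+1)/2` valid for `n = 0` too. -/
noncomputable def degLT (n : ℕ) : Submodule ℂ Poly :=
  restrictSupport ℂ {s | Finsupp.degree s < n}

lemma mem_degLT {n : ℕ} {f : Poly} : f ∈ degLT n ↔ ∀ s, n ≤ Finsupp.degree s → coeff s f = 0 := by
  unfold degLT
  rw [mem_restrictSupport_iff]
  constructor
  · intro h s hs
    by_contra hc
    have := h (by simpa using hc : s ∈ (f.support : Set _))
    simp only [Set.mem_ofPred_eq] at this
    omega
  · intro h s hs
    simp only [Set.mem_ofPred_eq]
    by_contra hc
    exact (by simpa using hs : coeff s f ≠ 0) (h s (by omega))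

lemma mem_degLT_succ {n : ℕ} {f : Poly} : f ∈ degLT (n + 1) ↔ f.totalDegree ≤ n := by
  rw [mem_degLT]
  constructor
  · intro h
    rw [totalDegree]
    refine Finset.sup_le fun s hs => ?_
    by_contra hc
    refine (by simpa using hs : coeff s f ≠ 0) (h s ?_)
    have : Finsupp.degree s = s.sum fun _ e => e := rfl
    omega
  · intro h s hs
    apply coeff_eq_zero_of_totalDegree_lt
    rw [← Finsupp.degree_apply]
    omega

lemma card_degree_eq (n : ℕ) : Nat.card {s : Fin 2 →₀ ℕ | Finsupp.degree s = n} = n + 1 := by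
  have e : {s : Fin 2 →₀ ℕ | Finsupp.degree s = n} ≃ {x : ℕ × ℕ // x ∈ Finset.HasAntidiagonal.antidiagonal n} :=
    (Finsupp.equivFunOnFinite.trans (finTwoArrowEquiv ℕ)).subtypeEquiv (by
      intro s
      simp [Finsupp.degree_eq_sum])
  rw [Nat.card_congr e, Nat.card_eq_fintype_card, Fintype.card_coe, Finset.Nat.card_antidiagonal]

lemma finite_degree_lt (n : ℕ) : {s : Fin 2 →₀ ℕ | Finsupp.degree s < n}.Finite := by
  have : {s : Fin 2 →₀ ℕ | Finsupp.degree s < n}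
      = ⋃ i ∈ Finset.range n, {s : Fin 2 →₀ ℕ | Finsupp.degree s = i} := by
    ext s; simp
  rw [this]
  exact Set.Finite.biUnion (Finset.finite_toSet _) fun i _ => Finsupp.finite_of_degree_eq i

lemma card_degree_lt (n : ℕ) :
    2 * Nat.card {s : Fin 2 →₀ ℕ | Finsupp.degree s < n} = n * (n + 1) := by
  induction n with
  | zero => simp
  | succ n ih =>
    have h1 : {s : Fin 2 →₀ ℕ | Finsupp.degree s < n + 1}
      = {s : Fin 2 →₀ ℕ | Finsupp.degree s < n} ∪ {s : Fin 2 →₀ ℕ | Finsupp.degree s = n} := by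
      ext s; simp only [Set.mem_ofPred_eq, Set.mem_union]; omega
    have hd : Disjoint {s : Fin 2 →₀ ℕ | Finsupp.degree s < n}
        {s : Fin 2 →₀ ℕ | Finsupp.degree s = n} := by
      rw [Set.disjoint_left]; intro s; simp only [Set.mem_ofPred_eq]; omega
    have h2 := Set.ncard_union_eq hd (finite_degree_lt n) (Finsupp.finite_of_degree_eq n)
    have h3 := card_degree_eq n
    rw [Nat.card_coe_set_eq] at *
    rw [h1, h2, h3]
    rw [mul_add, ih]; ring

instance finite_degLT (n : ℕ) : FiniteDimensional ℂ (degLT n) := by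
  have := (finite_degree_lt n).to_subtype
  exact (basisRestrictSupport ℂ {s : Fin 2 →₀ ℕ | Finsupp.degree s < n}).finiteDimensional_of_finite

lemma finrank_degLT (n : ℕ) : 2 * Module.finrank ℂ (degLT n) = n * (n + 1) := by
  have := Module.finrank_eq_nat_card_basis
    (basisRestrictSupport ℂ {s : Fin 2 →₀ ℕ | Finsupp.degree s < n})
  rw [degLT, this, card_degree_lt]

/-- Homogeneous polynomials of degree `n`. -/
noncomputable def homog (n : ℕ) : Submodule ℂ Poly :=
  restrictSupport ℂ {s | Finsupp.degree s = n}

lemma mem_homog {n : ℕ} {f : Poly} : f ∈ homog n ↔ ∀ s, Finsupp.degree s ≠ n → coeff s f = 0 := by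
  unfold homog
  rw [mem_restrictSupport_iff]
  constructor
  · intro h s hs
    by_contra hc
    have := h (by simpa using hc : s ∈ (f.support : Set _))
    simp only [Set.mem_ofPred_eq] at this
    omega
  · intro h s hs
    simp only [Set.mem_ofPred_eq]
    by_contra hc
    exact (by simpa using hs : coeff s f ≠ 0) (h s (by omega))

instance finite_homog (n : ℕ) : FiniteDimensional ℂ (homog n) := by
  have := (Finsupp.finite_of_degree_eq (σ := Fin 2) n).to_subtype
  exact (basisRestrictSupport ℂ {s : Fin 2 →₀ ℕ | Finsupp.degree s = n}).finiteDimensional_of_finite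

lemma finrank_homog (n : ℕ) : Module.finrank ℂ (homog n) = n + 1 := by
  have := Module.finrank_eq_nat_card_basis
    (basisRestrictSupport ℂ {s : Fin 2 →₀ ℕ | Finsupp.degree s = n})
  rw [homog, this, card_degree_eq]

lemma mem_homog_iff {n : ℕ} {f : Poly} : f ∈ homog n ↔ f.IsHomogeneous n := by
  rw [mem_homog]
  constructor
  · intro h s hs
    by_contra hc
    apply hs
    apply h
    rwa [Finsupp.degree_eq_weight_one]
  · intro h s hs
    exact h.coeff_eq_zero hs

/-- The translation `f(x) ↦ f(x + p)`. -/
noncomputable def tr (p : Fin 2 → ℂ) : Poly →ₐ[ℂ] Poly := aeval (fun i => X i + C (p i))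

lemma tr_X (p : Fin 2 → ℂ) (i : Fin 2) : tr p (X i) = X i + C (p i) := by simp [tr]

lemma tr_neg_tr (p : Fin 2 → ℂ) (f : Poly) : tr (-p) (tr p f) = f := by
  have : (tr (-p)).comp (tr p) = AlgHom.id ℂ Poly := by
    ext i
    simp only [AlgHom.comp_apply, tr_X, map_add, AlgHom.id_apply]
    simp [tr]
  exact congrArg (fun φ => φ f) this

lemma tr_tr_neg (p : Fin 2 → ℂ) (f : Poly) : tr p (tr (-p) f) = f := by
  simpa using tr_neg_tr (-p) f

lemma tr_injective (p : Fin 2 → ℂ) : Function.Injective (tr p) :=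
  Function.LeftInverse.injective (tr_neg_tr p)

lemma tr_ne_zero {p : Fin 2 → ℂ} {f : Poly} (hf : f ≠ 0) : tr p f ≠ 0 := by
  intro h; exact hf (tr_injective p (by simpa using h))

lemma pderiv_tr (p : Fin 2 → ℂ) (i : Fin 2) (f : Poly) : pderiv i (tr p f) = tr p (pderiv i f) := by
  induction f using MvPolynomial.induction_on with
  | C a => simp [tr]
  | add f g hf hg => simp [hf, hg]
  | mul_X f j hf =>
    simp only [map_mul, tr_X, Derivation.leibniz, smul_eq_mul, hf, map_add, pderiv_C, pderiv_X]
    rcases eq_or_ne j i with rfl | h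
    · simp
    · simp [h]

lemma constantCoeff_tr (p : Fin 2 → ℂ) (f : Poly) : constantCoeff (tr p f) = eval p f := by
  induction f using MvPolynomial.induction_on with
  | C a => simp [tr]
  | add f g hf hg => simp [hf, hg]
  | mul_X f j hf => simp [hf, tr_X]

/-- The ideal of polynomials vanishing to order at least `n` at `p`. -/
noncomputable def vanish (p : Fin 2 → ℂ) (n : ℕ) : Ideal Poly :=
  (idealOfVars (Fin 2) ℂ ^ n).comap (tr p)

lemma mem_vanish {p : Fin 2 → ℂ} {n : ℕ} {f : Poly} :
    f ∈ vanish p n ↔ tr p f ∈ idealOfVars (Fin 2) ℂ ^ n := Iff.rfl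

lemma mem_vanish' {p : Fin 2 → ℂ} {n : ℕ} {f : Poly} :
    f ∈ vanish p n ↔ ∀ s, Finsupp.degree s < n → coeff s (tr p f) = 0 :=
  mem_pow_idealOfVars_iff' n _

/-- The order of vanishing at `p`; the value at the zero polynomial is a junk `0`. -/
noncomputable def ord (p : Fin 2 → ℂ) (f : Poly) : ℕ :=
  sInf (Set.image (fun s => Finsupp.degree s) ((tr p f).support : Set (Fin 2 →₀ ℕ)))

lemma exists_ord {p : Fin 2 → ℂ} {f : Poly} (hf : f ≠ 0) :
    ∃ s, coeff s (tr p f) ≠ 0 ∧ Finsupp.degree s = ord p f := by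
  have hne : (Set.image (fun s => Finsupp.degree s) ((tr p f).support : Set (Fin 2 →₀ ℕ))).Nonempty := by
    simpa using tr_ne_zero hf
  obtain ⟨s, hs, h⟩ := Nat.sInf_mem hne
  exact ⟨s, by simpa using hs, h⟩

lemma mem_vanish_iff {p : Fin 2 → ℂ} {n : ℕ} {f : Poly} (hf : f ≠ 0) :
    f ∈ vanish p n ↔ n ≤ ord p f := by
  rw [mem_vanish']
  constructor
  · intro h
    obtain ⟨s, hs, h'⟩ := exists_ord (p := p) hf
    by_contra hc
    exact hs (h s (by omega))
  · intro h s hs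
    by_contra hc
    have : ord p f ≤ Finsupp.degree s := Nat.sInf_le ⟨s, by simpa using hc, rfl⟩
    omega

lemma mem_vanish_ord (p : Fin 2 → ℂ) (f : Poly) : f ∈ vanish p (ord p f) := by
  rcases eq_or_ne f 0 with rfl | h
  · simp
  · exact (mem_vanish_iff h).2 le_rfl

lemma vanish_anti {p : Fin 2 → ℂ} {m n : ℕ} (h : m ≤ n) : vanish p n ≤ vanish p m :=
  Ideal.comap_mono (Ideal.pow_le_pow_right h)

lemma mul_mem_vanish {p : Fin 2 → ℂ} {m n : ℕ} {f g : Poly} (hf : f ∈ vanish p m)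
    (hg : g ∈ vanish p n) : f * g ∈ vanish p (m + n) := by
  rw [mem_vanish] at *
  rw [map_mul, pow_add]
  exact Ideal.mul_mem_mul hf hg

lemma sub_homogeneousComponent_mem {n : ℕ} {f : Poly} (hf : f ∈ idealOfVars (Fin 2) ℂ ^ n) :
    f - homogeneousComponent n f ∈ idealOfVars (Fin 2) ℂ ^ (n + 1) := by
  rw [mem_pow_idealOfVars_iff'] at *
  intro s hs
  rw [coeff_sub, coeff_homogeneousComponent]
  split_ifs with h
  · simp
  · rw [hf s (by omega)]; simp

lemma homogeneousComponent_mem' (n : ℕ) (f : Poly) :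
    homogeneousComponent n f ∈ idealOfVars (Fin 2) ℂ ^ n := by
  rw [mem_pow_idealOfVars_iff']
  intro s hs
  rw [coeff_homogeneousComponent, if_neg (by omega)]

lemma homogeneousComponent_eq_zero_of_mem {n : ℕ} {f : Poly}
    (hf : f ∈ idealOfVars (Fin 2) ℂ ^ (n + 1)) : homogeneousComponent n f = 0 := by
  rw [mem_pow_idealOfVars_iff'] at hf
  ext s
  rw [coeff_homogeneousComponent]
  split_ifs with h
  · rw [hf s (by omega)]; simp
  · simp

/-- Leading forms multiply. -/
lemma homogeneousComponent_mul {a b : ℕ} {f g : Poly} (hf : f ∈ idealOfVars (Fin 2) ℂ ^ a)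
    (hg : g ∈ idealOfVars (Fin 2) ℂ ^ b) :
    homogeneousComponent (a + b) (f * g) = homogeneousComponent a f * homogeneousComponent b g := by
  have h1 : f * g - homogeneousComponent a f * homogeneousComponent b g
      ∈ idealOfVars (Fin 2) ℂ ^ (a + b + 1) := by
    have : f * g - homogeneousComponent a f * homogeneousComponent b g
      = (f - homogeneousComponent a f) * g
        + homogeneousComponent a f * (g - homogeneousComponent b g) := by ring
    rw [this]
    refine Ideal.add_mem _ ?_ ?_
    · rw [show a + b + 1 = (a + 1) + b by ring, pow_add]
      exact Ideal.mul_mem_mul (sub_homogeneousComponent_mem hf) hg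
    · rw [show a + b + 1 = a + (b + 1) by ring, pow_add]
      exact Ideal.mul_mem_mul (homogeneousComponent_mem' _ _) (sub_homogeneousComponent_mem hg)
  have h2 := homogeneousComponent_eq_zero_of_mem h1
  rw [map_sub, sub_eq_zero] at h2
  rw [h2]
  exact homogeneousComponent_eq_self
    ((homogeneousComponent_isHomogeneous a f).mul (homogeneousComponent_isHomogeneous b g))

lemma homogeneousComponent_ord_ne_zero {p : Fin 2 → ℂ} {f : Poly} (hf : f ≠ 0) :
    homogeneousComponent (ord p f) (tr p f) ≠ 0 := by
  obtain ⟨s, hs, h⟩ := exists_ord (p := p) hf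
  intro h0
  have := congrArg (coeff s) h0
  rw [coeff_homogeneousComponent, if_pos h] at this
  exact hs (by simpa using this)

lemma ord_mul {p : Fin 2 → ℂ} {f g : Poly} (hf : f ≠ 0) (hg : g ≠ 0) :
    ord p (f * g) = ord p f + ord p g := by
  apply le_antisymm
  · by_contra hc
    have h1 : f * g ∈ vanish p (ord p f + ord p g + 1) :=
      (mem_vanish_iff (mul_ne_zero hf hg)).2 (by omega)
    have h2 := homogeneousComponent_eq_zero_of_mem h1
    change homogeneousComponent _ (tr p (f * g)) = 0 at h2
    rw [map_mul, homogeneousComponent_mul (mem_vanish_ord p f) (mem_vanish_ord p g)] at h2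
    exact mul_ne_zero (homogeneousComponent_ord_ne_zero hf) (homogeneousComponent_ord_ne_zero hg) h2
  · rw [← mem_vanish_iff (mul_ne_zero hf hg)]
    exact mul_mem_vanish (mem_vanish_ord p f) (mem_vanish_ord p g)

lemma ord_eq_zero_iff {p : Fin 2 → ℂ} {f : Poly} (hf : f ≠ 0) : ord p f = 0 ↔ eval p f ≠ 0 := by
  have h := mem_vanish_iff (p := p) (n := 1) hf
  rw [mem_vanish'] at h
  have h2 : (∀ s : Fin 2 →₀ ℕ, Finsupp.degree s < 1 → coeff s (tr p f) = 0) ↔ eval p f = 0 := by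
    rw [← constantCoeff_tr, constantCoeff_eq]
    constructor
    · intro h; exact h 0 (by simp)
    · intro h s hs
      have : s = 0 := by rw [← Finsupp.degree_eq_zero_iff]; omega
      rw [this, h]
  rw [h2] at h
  constructor
  · intro h0 h1
    have := h.1 h1; omega
  · intro h0
    by_contra h1
    exact h0 (h.2 (by omega))

lemma ord_C (p : Fin 2 → ℂ) {c : ℂ} (hc : c ≠ 0) : ord p (C c) = 0 := by
  rw [ord_eq_zero_iff (by simpa using hc)]; simpa using hc

lemma ord_one (p : Fin 2 → ℂ) : ord p 1 = 0 := by simpa using ord_C p one_ne_zero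

lemma ord_pow {p : Fin 2 → ℂ} {f : Poly} (hf : f ≠ 0) (n : ℕ) : ord p (f ^ n) = n * ord p f := by
  induction n with
  | zero => simp [ord_one]
  | succ n ih => rw [pow_succ, ord_mul (pow_ne_zero _ hf) hf, ih]; ring

lemma ord_prod {ι : Type*} {p : Fin 2 → ℂ} (s : Finset ι) (f : ι → Poly) (hf : ∀ i ∈ s, f i ≠ 0) :
    ord p (∏ i ∈ s, f i) = ∑ i ∈ s, ord p (f i) := by
  classical
  induction s using Finset.induction_on with
  | empty => simp [ord_one]
  | insert a s ha ih =>
    rw [Finset.prod_insert ha, Finset.sum_insert ha, ord_mul (hf a (by simp)), ih]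
    · intro i hi; exact hf i (by simp [hi])
    · rw [Finset.prod_ne_zero_iff]; intro i hi; exact hf i (by simp [hi])

lemma tdeg_prod {ι : Type*} (s : Finset ι) (f : ι → Poly) (hf : ∀ i ∈ s, f i ≠ 0) :
    (∏ i ∈ s, f i).totalDegree = ∑ i ∈ s, (f i).totalDegree := by
  classical
  induction s using Finset.induction_on with
  | empty => simp
  | insert a s ha ih =>
    rw [Finset.prod_insert ha, Finset.sum_insert ha,
      totalDegree_mul_of_isDomain (hf a (by simp)), ih]
    · intro i hi; exact hf i (by simp [hi])
    · rw [Finset.prod_ne_zero_iff]; intro i hi; exact hf i (by simp [hi])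

lemma tdeg_pow {f : Poly} (hf : f ≠ 0) (n : ℕ) : (f ^ n).totalDegree = n * f.totalDegree := by
  induction n with
  | zero => simp
  | succ n ih => rw [pow_succ, totalDegree_mul_of_isDomain (pow_ne_zero _ hf) hf, ih]; ring

lemma isUnit_iff_tdeg {f : Poly} (hf : f ≠ 0) : IsUnit f ↔ f.totalDegree = 0 := by
  constructor
  · intro h
    obtain ⟨g, hg⟩ := h.exists_right_inv
    have hg0 : g ≠ 0 := by rintro rfl; simp at hg
    have := totalDegree_mul_of_isDomain hf hg0
    rw [hg] at this
    simp at this; omega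
  · intro h
    rw [totalDegree_eq_zero_iff_eq_C] at h
    rw [h] at hf ⊢
    exact (IsUnit.mk0 _ (by simpa using hf)).map C

lemma tdeg_pos_of_irreducible {f : Poly} (hf : Irreducible f) : 0 < f.totalDegree := by
  by_contra h
  exact hf.not_isUnit ((isUnit_iff_tdeg hf.ne_zero).2 (by omega))

lemma tdeg_le_of_dvd {f g : Poly} (hg : g ≠ 0) (h : f ∣ g) : f.totalDegree ≤ g.totalDegree := by
  obtain ⟨u, rfl⟩ := h
  rw [totalDegree_mul_of_isDomain (left_ne_zero_of_mul hg) (right_ne_zero_of_mul hg)]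
  omega

/-- A divisor of full degree is a scalar multiple. -/
lemma eq_C_mul_of_dvd {f g : Poly} (hg : g ≠ 0) (h : f ∣ g) (hd : g.totalDegree ≤ f.totalDegree) :
    ∃ c : ℂ, c ≠ 0 ∧ g = C c * f := by
  obtain ⟨u, rfl⟩ := h
  have hu := right_ne_zero_of_mul hg
  rw [totalDegree_mul_of_isDomain (left_ne_zero_of_mul hg) hu] at hd
  have h0 : u.totalDegree = 0 := by omega
  rw [totalDegree_eq_zero_iff_eq_C] at h0
  refine ⟨coeff 0 u, ?_, ?_⟩
  · intro h; rw [h] at h0; exact hu (by simpa using h0)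
  · rw [mul_comm, ← h0]

lemma pderiv_mem_vanish {p : Fin 2 → ℂ} {n : ℕ} {f : Poly} (i : Fin 2) (hf : f ∈ vanish p (n + 1)) :
    pderiv i f ∈ vanish p n := by
  rw [mem_vanish'] at *
  intro s hs
  rw [← pderiv_tr, coeff_pderiv, hf, zero_mul]
  simp; omega

lemma totalDegree_pderiv_le (i : Fin 2) (f : Poly) :
    (pderiv i f).totalDegree ≤ f.totalDegree - 1 := by
  rw [← mem_degLT_succ, mem_degLT]
  intro s hs
  rw [coeff_pderiv, coeff_eq_zero_of_totalDegree_lt, zero_mul]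
  rw [← Finsupp.degree_apply]
  simp
  omega

/-- A polynomial dividing both of its partial derivatives is constant. -/
lemma isUnit_of_dvd_pderiv {f : Poly} (hf : f ≠ 0) (h : ∀ i, f ∣ pderiv i f) : IsUnit f := by
  rw [isUnit_iff_tdeg hf]
  by_contra hd
  have h0 : ∀ i, pderiv i f = 0 := by
    intro i
    by_contra hi
    have := tdeg_le_of_dvd hi (h i)
    have := totalDegree_pderiv_le i f
    omega
  apply hd
  rw [totalDegree_eq_zero_iff_eq_C]
  ext s
  rw [coeff_C]
  split_ifs with hs
  · rw [hs]
  · obtain ⟨i, hi⟩ : ∃ i, s i ≠ 0 := by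
      by_contra hc
      push Not at hc
      exact hs (by ext i; simp [hc i])
    have h1 := congrArg (coeff (s - Finsupp.single i 1)) (h0 i)
    rw [coeff_pderiv, tsub_add_cancel_of_le (by simpa using Nat.one_le_iff_ne_zero.2 hi)] at h1
    simp only [coeff_zero, mul_eq_zero] at h1
    rcases h1 with h1 | h1
    · exact h1
    · exfalso
      norm_cast at h1

/-! ### Dimension counts -/

lemma exists_trunc (n : ℕ) (f : Poly) : ∃ u ∈ degLT n, f - u ∈ idealOfVars (Fin 2) ℂ ^ n := by
  refine ⟨∑ i ∈ Finset.range n, homogeneousComponent i f, ?_, ?_⟩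
  · rw [mem_degLT]
    intro s hs
    rw [coeff_sum]
    refine Finset.sum_eq_zero fun i hi => ?_
    rw [coeff_homogeneousComponent, if_neg]
    simp at hi; omega
  · rw [mem_pow_idealOfVars_iff']
    intro s hs
    rw [coeff_sub, coeff_sum]
    simp only [coeff_homogeneousComponent]
    rw [Finset.sum_ite_eq, if_pos (by simpa using hs), sub_self]

lemma exists_trunc_vanish (p : Fin 2 → ℂ) (n : ℕ) (f : Poly) :
    ∃ u ∈ degLT n, f - tr (-p) u ∈ vanish p n := by
  obtain ⟨u, hu, h⟩ := exists_trunc n (tr p f)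
  refine ⟨u, hu, ?_⟩
  rw [mem_vanish, map_sub, tr_tr_neg]
  exact h

/-- Taylor polynomials represent the classes modulo `vanish p n`. -/
noncomputable def jetEquiv (p : Fin 2 → ℂ) (n : ℕ) : degLT n ≃ₗ[ℂ] (Poly ⧸ vanish p n) :=
  LinearEquiv.ofBijective
    ((Ideal.Quotient.mkₐ ℂ (vanish p n)).toLinearMap ∘ₗ (tr (-p)).toLinearMap ∘ₗ (degLT n).subtype)
    (by
      constructor
      · rw [← LinearMap.ker_eq_bot, LinearMap.ker_eq_bot']
        rintro ⟨u, hu⟩ h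
        have h1 : tr (-p) u ∈ vanish p n := by
          rw [← Ideal.Quotient.eq_zero_iff_mem]; exact h
        rw [mem_vanish, tr_tr_neg, mem_pow_idealOfVars_iff'] at h1
        rw [mem_degLT] at hu
        ext s
        rcases lt_or_ge (Finsupp.degree s) n with hs | hs
        · simpa using h1 s hs
        · simpa using hu s hs
      · intro y
        obtain ⟨f, rfl⟩ := Ideal.Quotient.mk_surjective y
        obtain ⟨u, hu, h⟩ := exists_trunc_vanish p n f
        refine ⟨⟨u, hu⟩, ?_⟩
        exact (Ideal.Quotient.eq.2 h).symm)

instance finite_quot_vanish (p : Fin 2 → ℂ) (n : ℕ) : FiniteDimensional ℂ (Poly ⧸ vanish p n) :=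
  (jetEquiv p n).finiteDimensional

lemma finrank_quot_vanish (p : Fin 2 → ℂ) (n : ℕ) :
    2 * Module.finrank ℂ (Poly ⧸ vanish p n) = n * (n + 1) := by
  rw [← (jetEquiv p n).finrank_eq, finrank_degLT]

lemma X_sub_C_mem_vanish (p : Fin 2 → ℂ) (i : Fin 2) : (X i - C (p i) : Poly) ∈ vanish p 1 := by
  rw [mem_vanish, map_sub, tr_X, pow_one]
  have : tr p (C (p i)) = C (p i) := by simp [tr]
  rw [this, add_sub_cancel_right]
  exact Ideal.subset_span ⟨i, rfl⟩

lemma pow_mem_vanish {p : Fin 2 → ℂ} {a : ℕ} {f : Poly} (hf : f ∈ vanish p a) (n : ℕ) :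
    f ^ n ∈ vanish p (a * n) := by
  rw [mem_vanish, map_pow, pow_mul]
  exact Ideal.pow_mem_pow (mem_vanish.1 hf) n

lemma isCoprime_vanish {p q : Fin 2 → ℂ} (hpq : p ≠ q) (m n : ℕ) :
    IsCoprime (vanish p m) (vanish q n) := by
  obtain ⟨i, hi⟩ := Function.ne_iff.1 hpq
  have h1 : IsCoprime (X i - C (p i) : Poly) (X i - C (q i)) := by
    refine ⟨-C ((p i - q i)⁻¹), C ((p i - q i)⁻¹), ?_⟩
    have : (p i - q i) ≠ 0 := sub_ne_zero.2 hi
    have h2 : -C ((p i - q i)⁻¹) * (X i - C (p i)) + C ((p i - q i)⁻¹) * (X i - C (q i))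
      = (C ((p i - q i)⁻¹ * (p i - q i)) : Poly) := by
      simp only [C_mul, C_sub]; ring
    rw [h2, inv_mul_cancel₀ this, C_1]
  obtain ⟨a, b, hab⟩ := h1.pow (m := m) (n := n)
  rw [Ideal.isCoprime_iff_exists]
  refine ⟨_, Ideal.mul_mem_left _ a ?_, _, Ideal.mul_mem_left _ b ?_, hab⟩
  · simpa using pow_mem_vanish (X_sub_C_mem_vanish p i) m
  · simpa using pow_mem_vanish (X_sub_C_mem_vanish q i) n

/-- Chinese remainder: local colengths of an ideal at distinct points add up to at most its
global colength. -/
lemma sum_local_le (J : Ideal Poly) [FiniteDimensional ℂ (Poly ⧸ J)] (S : Finset (Fin 2 → ℂ))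
    (M b : (Fin 2 → ℂ) → ℕ)
    (hb : ∀ p ∈ S, b p ≤ Module.finrank ℂ (Poly ⧸ (J ⊔ vanish p (M p)))) :
    ∑ p ∈ S, b p ≤ Module.finrank ℂ (Poly ⧸ J) := by
  have hfin : ∀ p : S, FiniteDimensional ℂ (Poly ⧸ (J ⊔ vanish p.1 (M p.1))) := fun p =>
    Module.Finite.of_surjective (Ideal.Quotient.factorₐ ℂ (le_sup_left : J ≤ J ⊔ vanish p.1 (M p.1))).toLinearMap
      (Ideal.Quotient.factor_surjective (le_sup_left : J ≤ J ⊔ vanish p.1 (M p.1)))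
  let φ : (Poly ⧸ J) →ₗ[ℂ] (Π p : S, Poly ⧸ (J ⊔ vanish p.1 (M p.1))) :=
    LinearMap.pi fun p => (Ideal.Quotient.factorₐ ℂ le_sup_left).toLinearMap
  have hφ : Function.Surjective φ := by
    have h := Ideal.pi_mkQ_surjective (I := fun p : S => J ⊔ vanish p.1 (M p.1)) (by
      intro p q hpq
      have : p.1 ≠ q.1 := fun h => hpq (Subtype.ext h)
      have h := isCoprime_vanish this (M p.1) (M q.1)
      rw [Ideal.isCoprime_iff_sup_eq] at h
      simp only [Function.onFun]
      rw [Ideal.isCoprime_iff_sup_eq, eq_top_iff, ← h]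
      exact sup_le_sup le_sup_right le_sup_right)
    intro y
    obtain ⟨f, hf⟩ := h y
    exact ⟨Ideal.Quotient.mk J f, hf⟩
  calc ∑ p ∈ S, b p = ∑ p : S, b p.1 := (Finset.sum_coe_sort S b).symm
    _ ≤ ∑ p : S, Module.finrank ℂ (Poly ⧸ (J ⊔ vanish p.1 (M p.1))) :=
      Finset.sum_le_sum fun p _ => hb p.1 p.2
    _ = Module.finrank ℂ (Π p : S, Poly ⧸ (J ⊔ vanish p.1 (M p.1))) :=
      (Module.finrank_pi_fintype ℂ).symm
    _ ≤ _ := LinearMap.finrank_le_finrank_of_surjective hφ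

/-- If an ideal has codimension at most `c` in arbitrarily large degrees, its colength is
at most `c`. -/
lemma finrank_quot_le (J : Ideal Poly) (c : ℕ)
    (h : ∀ N, ∃ t, N ≤ t ∧ ∃ W : Submodule ℂ Poly, W ≤ degLT t ∧ W ≤ J.restrictScalars ℂ ∧
      Module.finrank ℂ (degLT t) ≤ Module.finrank ℂ W + c) :
    FiniteDimensional ℂ (Poly ⧸ J) ∧ Module.finrank ℂ (Poly ⧸ J) ≤ c := by
  have key : Module.rank ℂ (Poly ⧸ J) ≤ c := by
    apply rank_le
    intro s hs
    choose g hg using fun y : Poly ⧸ J => Ideal.Quotient.mk_surjective (I := J) y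
    obtain ⟨t, ht, W, hW1, hW2, hW3⟩ := h (s.sup (fun y => (g y).totalDegree) + 1)
    let π : degLT t →ₗ[ℂ] (Poly ⧸ J) := (Ideal.Quotient.mkₐ ℂ J).toLinearMap ∘ₗ (degLT t).subtype
    have h1 := LinearMap.finrank_range_add_finrank_ker π
    have h2 : Module.finrank ℂ W ≤ Module.finrank ℂ (LinearMap.ker π) := by
      let ψ : W →ₗ[ℂ] LinearMap.ker π :=
        LinearMap.codRestrict _ (Submodule.inclusion hW1) (by
          intro w
          rw [LinearMap.mem_ker]
          exact Ideal.Quotient.eq_zero_iff_mem.2 (hW2 w.2))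
      refine LinearMap.finrank_le_finrank_of_injective (f := ψ) ?_
      intro a b hab
      have := congrArg (fun x : LinearMap.ker π => ((x : degLT t) : Poly)) hab
      exact Subtype.ext this
    have h3 : s.card ≤ Module.finrank ℂ (LinearMap.range π) := by
      have hmem : ∀ y : s, (y : Poly ⧸ J) ∈ LinearMap.range π := by
        intro y
        refine ⟨⟨g y.1, ?_⟩, hg _⟩
        have : (g y.1).totalDegree ≤ s.sup (fun y => (g y).totalDegree) :=
          Finset.le_sup (f := fun y => (g y).totalDegree) y.2
        rw [mem_degLT]
        intro r hr
        apply coeff_eq_zero_of_totalDegree_lt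
        rw [← Finsupp.degree_apply]
        omega
      have hli : LinearIndependent ℂ (fun y : s => (⟨y.1, hmem y⟩ : LinearMap.range π)) := by
        apply LinearIndependent.of_comp (LinearMap.range π).subtype
        exact hs
      simpa using hli.fintype_card_le_finrank
    omega
  have hfin : FiniteDimensional ℂ (Poly ⧸ J) :=
    Module.rank_lt_aleph0_iff.1 (key.trans_lt (Cardinal.natCast_lt_aleph0))
  refine ⟨hfin, ?_⟩
  rw [← Module.finrank_eq_rank] at key
  exact_mod_cast key

/-! ### Colength bounds -/

lemma totalDegree_mul_le {f g : Poly} {a b : ℕ} (hf : f.totalDegree ≤ a) (hg : g.totalDegree ≤ b) :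
    (f * g).totalDegree ≤ a + b :=
  (totalDegree_mul f g).trans (add_le_add hf hg)

lemma finrank_degLT_succ (n : ℕ) :
    2 * Module.finrank ℂ (degLT (n + 1)) = (n + 1) * (n + 2) := finrank_degLT (n + 1)

/-- Colength bound for the ideal of two coprime polynomials: the upper half of Bézout's theorem. -/
lemma bezout_colength {A B : Poly} (hB : B ≠ 0) (hAB : IsRelPrime A B) :
    FiniteDimensional ℂ (Poly ⧸ Ideal.span {A, B}) ∧
      Module.finrank ℂ (Poly ⧸ Ideal.span {A, B}) ≤ A.totalDegree * B.totalDegree := by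
  apply finrank_quot_le
  intro N
  set α := A.totalDegree with hα
  set β := B.totalDegree with hβ
  refine ⟨α + β + N + 1, by omega, ?_⟩
  -- the map `(u, v) ↦ uA + vB`, whose kernel consists of the Koszul syzygies `(wB, -wA)`
  let φ : (degLT (β + N + 1) × degLT (α + N + 1)) →ₗ[ℂ] Poly :=
    ((LinearMap.mulLeft ℂ A) ∘ₗ (degLT (β + N + 1)).subtype).coprod
      ((LinearMap.mulLeft ℂ B) ∘ₗ (degLT (α + N + 1)).subtype)
  have hφ : ∀ u v, φ (u, v) = A * u.1 + B * v.1 := fun u v => rfl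
  refine ⟨LinearMap.range φ, ?_, ?_, ?_⟩
  · rintro _ ⟨⟨u, v⟩, rfl⟩
    rw [hφ, mem_degLT_succ]
    have hu := mem_degLT_succ.1 u.2
    have hv := mem_degLT_succ.1 v.2
    refine (totalDegree_add _ _).trans (max_le ?_ ?_)
    · refine (totalDegree_mul_le le_rfl hu).trans ?_; omega
    · refine (totalDegree_mul_le le_rfl hv).trans ?_; omega
  · rintro _ ⟨⟨u, v⟩, rfl⟩
    rw [hφ]
    exact Ideal.add_mem _ (Ideal.mul_mem_right _ _ (Ideal.subset_span (by simp)))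
      (Ideal.mul_mem_right _ _ (Ideal.subset_span (by simp)))
  · have h1 := LinearMap.finrank_range_add_finrank_ker φ
    have h2 : Module.finrank ℂ (LinearMap.ker φ) ≤ Module.finrank ℂ (degLT (N + 1)) := by
      have hw : ∀ x ∈ LinearMap.ker φ, ∃ w ∈ degLT (N + 1), x.1.1 = B * w := by
        rintro ⟨u, v⟩ hx
        rw [LinearMap.mem_ker, hφ] at hx
        have hdvd : B ∣ A * u.1 := ⟨-v.1, by linear_combination hx⟩
        obtain ⟨w, hw⟩ := hAB.symm.dvd_of_dvd_mul_left hdvd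
        refine ⟨w, ?_, hw⟩
        rcases eq_or_ne w 0 with rfl | hw0
        · exact Submodule.zero_mem _
        · rw [mem_degLT_succ]
          have hu := mem_degLT_succ.1 u.2
          rw [hw, totalDegree_mul_of_isDomain hB hw0] at hu
          omega
      have hle : Submodule.map ((degLT (β + N + 1)).subtype ∘ₗ LinearMap.fst ℂ _ _) (LinearMap.ker φ)
          ≤ Submodule.map (LinearMap.mulLeft ℂ B) (degLT (N + 1)) := by
        rintro _ ⟨x, hx, rfl⟩
        obtain ⟨w, hw, h⟩ := hw x hx
        exact ⟨w, hw, h.symm⟩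
      have hinj : Function.Injective
          (((degLT (β + N + 1)).subtype ∘ₗ LinearMap.fst ℂ _ (degLT (α + N + 1))).domRestrict
            (LinearMap.ker φ)) := by
        refine (injective_iff_map_eq_zero _).2 ?_
        rintro ⟨⟨u, v⟩, hx⟩ h
        rw [LinearMap.mem_ker, hφ] at hx
        have h0 : u.1 = 0 := h
        rw [h0] at hx
        have hv : v.1 = 0 := by
          have : B * v.1 = 0 := by simpa using hx
          exact (mul_eq_zero.1 this).resolve_left hB
        simp only [Submodule.mk_eq_zero, Prod.mk_eq_zero]
        exact ⟨Subtype.ext h0, Subtype.ext hv⟩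
      calc Module.finrank ℂ (LinearMap.ker φ)
          = Module.finrank ℂ (LinearMap.range
            (((degLT (β + N + 1)).subtype ∘ₗ LinearMap.fst ℂ _ (degLT (α + N + 1))).domRestrict
            (LinearMap.ker φ))) := (LinearMap.finrank_range_of_inj hinj).symm
        _ = Module.finrank ℂ (Submodule.map ((degLT (β + N + 1)).subtype ∘ₗ
              LinearMap.fst ℂ _ (degLT (α + N + 1))) (LinearMap.ker φ)) := by
            rw [LinearMap.range_domRestrict]
        _ ≤ Module.finrank ℂ (Submodule.map (LinearMap.mulLeft ℂ B) (degLT (N + 1))) :=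
            Submodule.finrank_mono hle
        _ ≤ _ := Submodule.finrank_map_le _ _
    have h3 : Module.finrank ℂ (degLT (β + N + 1) × degLT (α + N + 1))
        = Module.finrank ℂ (degLT (β + N + 1)) + Module.finrank ℂ (degLT (α + N + 1)) :=
      Module.finrank_prod
    have e1 := finrank_degLT_succ (α + β + N)
    have e2 := finrank_degLT_succ (β + N)
    have e3 := finrank_degLT_succ (α + N)
    have e4 := finrank_degLT_succ N
    nlinarith

/-- If `J` is, modulo `vanish p M`, the image of a finite-dimensional space `E` under `Φ`, and the
kernel of `Φ` modulo `vanish p M` has dimension at least `κ`, then the local colength of `J` is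
bounded below. -/
lemma local_general {E : Type*} [AddCommGroup E] [Module ℂ E] [FiniteDimensional ℂ E]
    (p : Fin 2 → ℂ) (M : ℕ) (J : Ideal Poly) (Φ : E →ₗ[ℂ] Poly)
    (hΦ : ∀ f ∈ J, ∃ e, f - Φ e ∈ vanish p M) (κ : ℕ) (K : Submodule ℂ E)
    (hK : ∀ e ∈ K, Φ e ∈ vanish p M) (hκ : κ ≤ Module.finrank ℂ K) :
    Module.finrank ℂ (Poly ⧸ vanish p M) + κ
      ≤ Module.finrank ℂ (Poly ⧸ (J ⊔ vanish p M)) + Module.finrank ℂ E := by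
  let π : (Poly ⧸ vanish p M) →ₗ[ℂ] (Poly ⧸ (J ⊔ vanish p M)) :=
    (Ideal.Quotient.factorₐ ℂ (le_sup_right : vanish p M ≤ J ⊔ vanish p M)).toLinearMap
  let Ψ : E →ₗ[ℂ] (Poly ⧸ vanish p M) := (Ideal.Quotient.mkₐ ℂ (vanish p M)).toLinearMap ∘ₗ Φ
  have hπ : Function.Surjective π :=
    Ideal.Quotient.factor_surjective (le_sup_right : vanish p M ≤ J ⊔ vanish p M)
  have h1 := LinearMap.finrank_range_add_finrank_ker π
  have h2 := LinearMap.finrank_range_add_finrank_ker Ψ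
  rw [LinearMap.range_eq_top.2 hπ, finrank_top] at h1
  have h3 : LinearMap.ker π ≤ LinearMap.range Ψ := by
    intro y hy
    obtain ⟨f, rfl⟩ := Ideal.Quotient.mk_surjective y
    have hf : f ∈ J ⊔ vanish p M := Ideal.Quotient.eq_zero_iff_mem.1 hy
    obtain ⟨g, hg, v, hv, rfl⟩ := Submodule.mem_sup.1 hf
    obtain ⟨e, he⟩ := hΦ g hg
    refine ⟨e, ?_⟩
    refine (Ideal.Quotient.eq.2 ?_).symm
    rw [add_sub_right_comm]
    exact Ideal.add_mem _ he hv
  have h4 : K ≤ LinearMap.ker Ψ := by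
    intro e he
    exact Ideal.Quotient.eq_zero_iff_mem.2 (hK e he)
  have h5 := Submodule.finrank_mono h3
  have h6 := Submodule.finrank_mono h4
  omega

/-- Multiplication by `A`, `B` on Taylor polynomials at `p`. -/
noncomputable def jetMap (p : Fin 2 → ℂ) (A B : Poly) (r s : ℕ) :
    (degLT r × degLT s) →ₗ[ℂ] Poly :=
  ((LinearMap.mulLeft ℂ A) ∘ₗ (tr (-p)).toLinearMap ∘ₗ (degLT r).subtype).coprod
      ((LinearMap.mulLeft ℂ B) ∘ₗ (tr (-p)).toLinearMap ∘ₗ (degLT s).subtype)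

lemma jetMap_apply (p : Fin 2 → ℂ) (A B : Poly) (r s : ℕ) (u : degLT r) (v : degLT s) :
    jetMap p A B r s (u, v) = A * tr (-p) u.1 + B * tr (-p) v.1 := rfl

lemma jetMap_approx {p : Fin 2 → ℂ} {A B : Poly} {α β r s M : ℕ} (hA : A ∈ vanish p α)
    (hB : B ∈ vanish p β) (h1 : M ≤ α + r) (h2 : M ≤ β + s) (f : Poly)
    (hf : f ∈ Ideal.span {A, B}) : ∃ e, f - jetMap p A B r s e ∈ vanish p M := by
  obtain ⟨a, b, rfl⟩ := Ideal.mem_span_pair.1 hf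
  obtain ⟨u, hu, hau⟩ := exists_trunc_vanish p r a
  obtain ⟨v, hv, hbv⟩ := exists_trunc_vanish p s b
  refine ⟨(⟨u, hu⟩, ⟨v, hv⟩), ?_⟩
  rw [jetMap_apply]
  have : a * A + b * B - (A * tr (-p) u + B * tr (-p) v)
      = A * (a - tr (-p) u) + B * (b - tr (-p) v) := by ring
  rw [this]
  exact Ideal.add_mem _ (vanish_anti h1 (mul_mem_vanish hA hau))
    (vanish_anti h2 (mul_mem_vanish hB hbv))

/-- The local intersection number is at least the product of the multiplicities. -/
lemma local_mul {p : Fin 2 → ℂ} {A B : Poly} {α β : ℕ} (hA : A ∈ vanish p α)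
    (hB : B ∈ vanish p β) :
    α * β ≤ Module.finrank ℂ (Poly ⧸ (Ideal.span {A, B} ⊔ vanish p (α + β))) := by
  have h := local_general p (α + β) (Ideal.span {A, B}) (jetMap p A B β α)
    (jetMap_approx hA hB le_rfl (by omega)) 0 ⊥
    (by intro e he; rw [(Submodule.mem_bot ℂ).1 he]; simp) (by simp)
  have h3 : Module.finrank ℂ (degLT β × degLT α)
        = Module.finrank ℂ (degLT β) + Module.finrank ℂ (degLT α) := Module.finrank_prod
  have e1 := finrank_quot_vanish p (α + β)
  have e2 := finrank_degLT α
  have e3 := finrank_degLT β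
  nlinarith

/-- At a dicritical point (where the form `A dx + B dy` has leading part proportional to
`x dy - y dx`) the local colength of `(A, B)` is at least `ν² + ν - 1`. -/
lemma local_dicritical {p : Fin 2 → ℂ} {A B : Poly} {ν : ℕ} (hA : A ∈ vanish p ν)
    (hB : B ∈ vanish p ν)
    (hAB : (X 0 - C (p 0)) * A + (X 1 - C (p 1)) * B ∈ vanish p (ν + 2)) :
    ν ^ 2 + ν ≤ Module.finrank ℂ (Poly ⧸ (Ideal.span {A, B} ⊔ vanish p (2 * ν + 1))) + 1 := by
  rcases ν with _ | ν
  · simp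
  have hX : ∀ (i : Fin 2) (c : Poly), c ∈ homog ν → X i * c ∈ degLT (ν + 1 + 1) := by
    intro i c hc
    rw [mem_degLT_succ]
    rw [mem_homog_iff] at hc
    refine (totalDegree_mul_le (totalDegree_X i).le hc.totalDegree_le).trans (by omega)
  let ι : homog ν →ₗ[ℂ] (degLT (ν + 1 + 1) × degLT (ν + 1 + 1)) :=
    (LinearMap.codRestrict _ (LinearMap.mulLeft ℂ (X 0) ∘ₗ (homog ν).subtype)
      (fun c => hX 0 _ c.2)).prod
    (LinearMap.codRestrict _ (LinearMap.mulLeft ℂ (X 1) ∘ₗ (homog ν).subtype)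
      (fun c => hX 1 _ c.2))
  have hι : Function.Injective ι := by
    refine (injective_iff_map_eq_zero _).2 ?_
    intro c hc
    have h0 := congrArg (fun z : degLT (ν + 1 + 1) × degLT (ν + 1 + 1) => z.1.1) hc
    have h1 : (X 0 : Poly) * c.1 = 0 := h0
    exact Subtype.ext ((mul_eq_zero.1 h1).resolve_left (X_ne_zero 0))
  have h := local_general p (2 * (ν + 1) + 1) (Ideal.span {A, B})
    (jetMap p A B (ν + 1 + 1) (ν + 1 + 1))
    (jetMap_approx hA hB (by omega) (by omega)) (ν + 1) (LinearMap.range ι)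
    (by
      rintro _ ⟨c, rfl⟩
      have e : jetMap p A B (ν + 1 + 1) (ν + 1 + 1) (ι c)
        = A * tr (-p) (X 0 * c.1) + B * tr (-p) (X 1 * c.1) := rfl
      have e2 : jetMap p A B (ν + 1 + 1) (ν + 1 + 1) (ι c)
        = tr (-p) c.1 * ((X 0 - C (p 0)) * A + (X 1 - C (p 1)) * B) := by
        rw [e, map_mul, map_mul, tr_X, tr_X]
        simp only [Pi.neg_apply, C_neg]
        ring
      rw [e2, show 2 * (ν + 1) + 1 = ν + (ν + 1 + 2) by ring]
      refine mul_mem_vanish ?_ hAB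
      rw [mem_vanish, tr_tr_neg, mem_pow_idealOfVars_iff']
      intro s hs
      exact mem_homog.1 c.2 s (by omega))
    (by rw [LinearMap.finrank_range_of_inj hι, finrank_homog])
  have h3 : Module.finrank ℂ (degLT (ν + 1 + 1) × degLT (ν + 1 + 1))
        = Module.finrank ℂ (degLT (ν + 1 + 1)) + Module.finrank ℂ (degLT (ν + 1 + 1)) :=
    Module.finrank_prod
  have e1 := finrank_quot_vanish p (2 * (ν + 1) + 1)
  have e2 := finrank_degLT (ν + 1 + 1)
  nlinarith

/-- The local form of Bézout's inequality. -/
lemma bezout {f g : Poly} (hg : g ≠ 0) (h : IsRelPrime f g)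
    (S : Finset (Fin 2 → ℂ)) :
    ∑ p ∈ S, ord p f * ord p g ≤ f.totalDegree * g.totalDegree := by
  obtain ⟨h1, h2⟩ := bezout_colength hg h
  refine le_trans ?_ h2
  exact sum_local_le _ S (fun p => ord p f + ord p g) (fun p => ord p f * ord p g)
    fun p _ => local_mul (mem_vanish_ord p f) (mem_vanish_ord p g)

lemma finrank_le_of_injOn {E : Type*} [AddCommGroup E] [Module ℂ E] [FiniteDimensional ℂ E]
    (K : Submodule ℂ E) (ψ : E →ₗ[ℂ] Poly) (B : Poly) (n : ℕ)
    (hinj : ∀ x ∈ K, ψ x = 0 → x = 0) (h : ∀ x ∈ K, ∃ w ∈ degLT n, ψ x = B * w) :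
    Module.finrank ℂ K ≤ Module.finrank ℂ (degLT n) := by
  have hle : Submodule.map ψ K ≤ Submodule.map (LinearMap.mulLeft ℂ B) (degLT n) := by
    rintro _ ⟨x, hx, rfl⟩
    obtain ⟨w, hw, h⟩ := h x hx
    exact ⟨w, hw, h.symm⟩
  have hinj' : Function.Injective (ψ.domRestrict K) := by
    refine (injective_iff_map_eq_zero _).2 ?_
    rintro ⟨x, hx⟩ h
    exact Subtype.ext (hinj x hx h)
  calc Module.finrank ℂ K
      = Module.finrank ℂ (LinearMap.range (ψ.domRestrict K)) :=
        (LinearMap.finrank_range_of_inj hinj').symm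
    _ = Module.finrank ℂ (Submodule.map ψ K) := by rw [LinearMap.range_domRestrict]
    _ ≤ Module.finrank ℂ (Submodule.map (LinearMap.mulLeft ℂ B) (degLT n)) :=
        Submodule.finrank_mono hle
    _ ≤ _ := Submodule.finrank_map_le _ _

/-- Colength bound for the zeros of a polynomial 1-form `A dx + B dy` that extends to a foliation
of degree `a - 1` of the projective plane. -/
lemma foliation_colength {A B : Poly} {a : ℕ} (hAB : IsRelPrime A B) (hA : A.totalDegree ≤ a)
    (hB : B.totalDegree ≤ a) (hE : (X 0 * A + X 1 * B).totalDegree ≤ a) :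
    FiniteDimensional ℂ (Poly ⧸ Ideal.span {A, B}) ∧
      Module.finrank ℂ (Poly ⧸ Ideal.span {A, B}) + a ≤ a ^ 2 + 1 := by
  have ha : a ≤ a ^ 2 := Nat.le_self_pow two_ne_zero a
  rcases eq_or_ne B 0 with rfl | hB0
  · have hu : IsUnit A := hAB dvd_rfl (dvd_zero A)
    have hA0 := hu.ne_zero
    obtain ⟨h1, h2⟩ := bezout_colength (B := A) (A := 0) hA0 hAB.symm
    rw [Set.pair_comm] at h1 h2
    simp at h2
    exact ⟨h1, by omega⟩
  by_cases hlt : A.totalDegree < a ∧ B.totalDegree < a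
  · obtain ⟨h1, h2⟩ := bezout_colength (A := A) hB0 hAB
    refine ⟨h1, ?_⟩
    obtain ⟨b, rfl⟩ : ∃ b, a = b + 1 := ⟨a - 1, by omega⟩
    have : A.totalDegree * B.totalDegree ≤ b * b := Nat.mul_le_mul (by omega) (by omega)
    nlinarith
  suffices h : FiniteDimensional ℂ (Poly ⧸ Ideal.span {A, B}) ∧
      Module.finrank ℂ (Poly ⧸ Ideal.span {A, B}) ≤ a ^ 2 + 1 - a from ⟨h.1, by omega⟩
  apply finrank_quot_le
  intro N
  refine ⟨2 * a + N + 1, by omega, ?_⟩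
  let φ : ((degLT (a + N + 1) × degLT (a + N + 1)) × homog (a + N)) →ₗ[ℂ] Poly :=
    (((LinearMap.mulLeft ℂ A) ∘ₗ (degLT (a + N + 1)).subtype).coprod
      ((LinearMap.mulLeft ℂ B) ∘ₗ (degLT (a + N + 1)).subtype)).coprod
      ((LinearMap.mulLeft ℂ (X 0 * A + X 1 * B)) ∘ₗ (homog (a + N)).subtype)
  have hφ : ∀ u v w, φ ((u, v), w) = A * u.1 + B * v.1 + (X 0 * A + X 1 * B) * w.1 :=
    fun u v w => rfl
  refine ⟨LinearMap.range φ, ?_, ?_, ?_⟩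
  · rintro _ ⟨⟨⟨u, v⟩, w⟩, rfl⟩
    rw [hφ, mem_degLT_succ]
    have hu := mem_degLT_succ.1 u.2
    have hv := mem_degLT_succ.1 v.2
    have hw := (mem_homog_iff.1 w.2).totalDegree_le
    refine (totalDegree_add _ _).trans (max_le ((totalDegree_add _ _).trans (max_le ?_ ?_)) ?_)
    · refine (totalDegree_mul_le hA hu).trans ?_; omega
    · refine (totalDegree_mul_le hB hv).trans ?_; omega
    · refine (totalDegree_mul_le hE hw).trans ?_; omega
  · rintro _ ⟨⟨⟨u, v⟩, w⟩, rfl⟩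
    rw [hφ]
    refine Ideal.mem_span_pair.2 ⟨u.1 + X 0 * w.1, v.1 + X 1 * w.1, by ring⟩
  · have h1 := LinearMap.finrank_range_add_finrank_ker φ
    let ψ : ((degLT (a + N + 1) × degLT (a + N + 1)) × homog (a + N)) →ₗ[ℂ] Poly :=
      ((degLT (a + N + 1)).subtype ∘ₗ LinearMap.fst ℂ _ _).coprod
      ((LinearMap.mulLeft ℂ (X 0)) ∘ₗ (homog (a + N)).subtype)
    have hψ : ∀ u v w, ψ ((u, v), w) = u.1 + X 0 * w.1 := fun u v w => rfl
    have hdeg : ∀ (i : Fin 2) (u : degLT (a + N + 1)) (w : homog (a + N)),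
        (u.1 + X i * w.1).totalDegree ≤ a + N + 1 := by
      intro i u w
      have hu := mem_degLT_succ.1 u.2
      have hw := (mem_homog_iff.1 w.2).totalDegree_le
      refine (totalDegree_add _ _).trans (max_le (by omega) ?_)
      exact (totalDegree_mul_le (totalDegree_X i).le hw).trans (by omega)
    have h2 : Module.finrank ℂ (LinearMap.ker φ) ≤ Module.finrank ℂ (degLT (N + 1 + 1)) := by
      apply finrank_le_of_injOn _ ψ B
      · rintro ⟨⟨u, v⟩, w⟩ hx h
        rw [LinearMap.mem_ker, hφ] at hx
        rw [hψ] at h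
        have hv : v.1 + X 1 * w.1 = 0 := by
          have : B * (v.1 + X 1 * w.1) = 0 := by linear_combination hx - A * h
          exact (mul_eq_zero.1 this).resolve_left hB0
        have hw : w.1 = 0 := by
          by_contra hw0
          have e := (mem_homog_iff.1 w.2).totalDegree hw0
          have hu := mem_degLT_succ.1 u.2
          have hu' : u.1 = -(X 0 * w.1) := by linear_combination h
          rw [hu', totalDegree_neg, totalDegree_mul_of_isDomain (X_ne_zero 0) hw0,
            totalDegree_X, e] at hu
          omega
        rw [hw] at h hv
        simp only [mul_zero, add_zero] at h hv
        simp only [Prod.mk_eq_zero]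
        exact ⟨⟨Subtype.ext h, Subtype.ext hv⟩, Subtype.ext hw⟩
      · rintro ⟨⟨u, v⟩, w⟩ hx
        rw [LinearMap.mem_ker, hφ] at hx
        rw [hψ]
        have hdvd : B ∣ A * (u.1 + X 0 * w.1) := ⟨-(v.1 + X 1 * w.1), by linear_combination hx⟩
        obtain ⟨s, hs⟩ := hAB.symm.dvd_of_dvd_mul_left hdvd
        refine ⟨s, ?_, hs⟩
        have hs' : v.1 + X 1 * w.1 = -(A * s) := by
          have : B * (v.1 + X 1 * w.1 + A * s) = 0 := by linear_combination hx - A * hs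
          linear_combination (mul_eq_zero.1 this).resolve_left hB0
        rcases eq_or_ne s 0 with rfl | hs0
        · exact Submodule.zero_mem _
        rw [mem_degLT_succ]
        have d1 := hdeg 0 u w
        have d2 := hdeg 1 v w
        rw [hs, totalDegree_mul_of_isDomain hB0 hs0] at d1
        rw [hs', totalDegree_neg] at d2
        rcases eq_or_ne A 0 with rfl | hA0
        · have : IsUnit B := hAB (dvd_zero B) dvd_rfl
          have := (isUnit_iff_tdeg hB0).1 this
          simp at hlt; omega
        rw [totalDegree_mul_of_isDomain hA0 hs0] at d2
        omega
    have h3 : Module.finrank ℂ ((degLT (a + N + 1) × degLT (a + N + 1)) × homog (a + N))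
        = Module.finrank ℂ (degLT (a + N + 1)) + Module.finrank ℂ (degLT (a + N + 1))
          + Module.finrank ℂ (homog (a + N)) := by
      rw [Module.finrank_prod, Module.finrank_prod]
    have e1 := finrank_degLT_succ (2 * a + N)
    have e2 := finrank_degLT_succ (a + N)
    have e3 := finrank_degLT_succ (N + 1)
    have e4 := finrank_homog (a + N)
    obtain ⟨c, hc⟩ : ∃ c, a ^ 2 + 1 - a = c ∧ c + a = a ^ 2 + 1 := ⟨_, rfl, by omega⟩
    rw [hc.1]
    nlinarith [hc.2]

/-! ### Linear systems with assigned base points -/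

/-- Polynomials of degree at most `b` vanishing to order at least `o p` at each `p ∈ S`. -/
noncomputable def linSys (S : Finset (Fin 2 → ℂ)) (b : ℕ) (o : (Fin 2 → ℂ) → ℕ) :
    Submodule ℂ Poly where
  carrier := {f | f.totalDegree ≤ b ∧ ∀ p ∈ S, f ∈ vanish p (o p)}
  zero_mem' := by simp
  add_mem' := by
    rintro f g ⟨hf, hf'⟩ ⟨hg, hg'⟩
    exact ⟨(totalDegree_add f g).trans (max_le hf hg),
      fun p hp => Ideal.add_mem _ (hf' p hp) (hg' p hp)⟩
  smul_mem' := by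
    rintro c f ⟨hf, hf'⟩
    refine ⟨(totalDegree_smul_le c f).trans hf, fun p hp => ?_⟩
    rw [smul_eq_C_mul]
    exact Ideal.mul_mem_left _ _ (hf' p hp)

lemma mem_linSys {S : Finset (Fin 2 → ℂ)} {b : ℕ} {o : (Fin 2 → ℂ) → ℕ} {f : Poly} (hf : f ≠ 0) :
    f ∈ linSys S b o ↔ f.totalDegree ≤ b ∧ ∀ p ∈ S, o p ≤ ord p f := by
  change (_ ∧ ∀ p ∈ S, f ∈ vanish p (o p)) ↔ _
  refine and_congr_right fun _ => forall₂_congr fun p _ => mem_vanish_iff hf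

lemma exists_irreducible_zero {f : Poly} (hf : f ≠ 0) {q : Fin 2 → ℂ} (hq : eval q f = 0) :
    ∃ g, Irreducible g ∧ g ∣ f ∧ eval q g = 0 := by
  induction f using UniqueFactorizationMonoid.induction_on_prime with
  | h₁ => exact absurd rfl hf
  | h₂ x hx =>
    exact absurd hq (hx.map (eval q)).ne_zero
  | h₃ a p ha hp ih =>
    rw [map_mul, mul_eq_zero] at hq
    rcases hq with h | h
    · exact ⟨p, hp.irreducible, dvd_mul_right _ _, h⟩
    · obtain ⟨g, h1, h2, h3⟩ := ih ha h
      exact ⟨g, h1, h2.mul_left _, h3⟩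

lemma exists_irreducible_dvd {f : Poly} (hf : f ≠ 0) (hd : 0 < f.totalDegree) :
    ∃ g, Irreducible g ∧ g ∣ f :=
  WfDvdMonoid.exists_irreducible_factor (by rw [isUnit_iff_tdeg hf]; omega) hf

/-- An irreducible polynomial has zeros outside any finite set. -/
lemma exists_zero_notMem {f : Poly} (hf : Irreducible f) (S : Finset (Fin 2 → ℂ)) :
    ∃ q, q ∉ S ∧ eval q f = 0 := by
  by_contra! hc
  have key : ∀ i : Fin 2, ∃ p : Fin 2 → ℂ, f ∣ X i - C (p i) := by
    intro i
    have h1 : (∏ p ∈ S, (X i - C (p i)) : Poly) ∈ vanishingIdeal ℂ (zeroLocus ℂ (Ideal.span {f})) := by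
      rw [mem_vanishingIdeal_iff]
      intro q hq
      rw [mem_zeroLocus_iff] at hq
      have hqf := hq f (Ideal.subset_span rfl)
      have hqS : q ∈ S := by
        by_contra h
        exact hc q h hqf
      rw [map_prod]
      exact Finset.prod_eq_zero hqS (by simp)
    rw [vanishingIdeal_zeroLocus_eq_radical] at h1
    obtain ⟨N, hN⟩ := h1
    rw [Ideal.mem_span_singleton] at hN
    have := hf.prime.dvd_of_dvd_pow hN
    obtain ⟨p, _, hp⟩ := (hf.prime.dvd_finsetProd_iff _).1 this
    exact ⟨p, hp⟩
  obtain ⟨p, u, hu⟩ := key 0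
  obtain ⟨p', v, hv⟩ := key 1
  have d0 : (X 0 - C (p 0) : Poly).totalDegree ≤ 1 :=
    (totalDegree_sub _ _).trans (by simp)
  have d1 : (X 1 - C (p' 1) : Poly).totalDegree ≤ 1 :=
    (totalDegree_sub _ _).trans (by simp)
  have hpos := tdeg_pos_of_irreducible hf
  have n0 : (X 0 - C (p 0) : Poly) ≠ 0 := by
    intro h
    have := congrArg (pderiv (0 : Fin 2)) h
    simp at this
  have n1 : (X 1 - C (p' 1) : Poly) ≠ 0 := by
    intro h
    have := congrArg (pderiv (1 : Fin 2)) h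
    simp at this
  obtain ⟨c, hc0, h0⟩ := eq_C_mul_of_dvd n0 ⟨u, hu⟩ (by omega)
  obtain ⟨c', hc1, h1⟩ := eq_C_mul_of_dvd n1 ⟨v, hv⟩ (by omega)
  have e0 := congrArg (pderiv (0 : Fin 2)) h0
  have e1 := congrArg (pderiv (0 : Fin 2)) h1
  simp only [map_sub, pderiv_X_self, pderiv_C, sub_zero, Derivation.leibniz, smul_eq_mul, mul_zero,
    add_zero] at e0 e1
  rw [pderiv_X_of_ne (by decide)] at e1
  rcases mul_eq_zero.1 e1.symm with h | h
  · exact hc1 (by simpa using h)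
  · rw [h] at e0; simp at e0

lemma isRelPrime_of_not_dvd {f g : Poly} (hf : Irreducible f) (h : ¬ f ∣ g) : IsRelPrime f g :=
  (hf.isRelPrime_iff_not_dvd).2 h

/-- The numerical properties of the base points of a pencil of degree `d` curves: `n p` is the
multiplicity at `p ∈ X`, and there is no further intersection. -/
structure Pencil (X : Finset (Fin 2 → ℂ)) (n : (Fin 2 → ℂ) → ℕ) (d : ℕ) : Prop where
  d_pos : 0 < d
  n_pos : ∀ p ∈ X, 0 < n p
  sq : ∑ p ∈ X, n p ^ 2 = d ^ 2
  le : ∀ f : Poly, f ≠ 0 → ∑ p ∈ X, n p * ord p f ≤ d * f.totalDegree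

/-- A nonzero `f` whose intersection number `d * deg f` with the members of the pencil is
accounted for by the base points, as for the components of the members. -/
def Vertical (X : Finset (Fin 2 → ℂ)) (n : (Fin 2 → ℂ) → ℕ) (d : ℕ) (f : Poly) : Prop :=
  f ≠ 0 ∧ ∑ p ∈ X, n p * ord p f = d * f.totalDegree

/-- The polynomials whose degree and multiplicities are at the ratio `b / d` to those of the
pencil. The order bound is the rounded-up quotient `b * n p / d`. -/
noncomputable def W (X : Finset (Fin 2 → ℂ)) (n : (Fin 2 → ℂ) → ℕ) (d b : ℕ) : Submodule ℂ Poly :=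
  linSys X b (fun p => (b * n p + (d - 1)) / d)

namespace Pencil

variable {X : Finset (Fin 2 → ℂ)} {n : (Fin 2 → ℂ) → ℕ} {d : ℕ}

lemma vertical_mul (P : Pencil X n d) {f g : Poly} :
    Vertical X n d (f * g) ↔ Vertical X n d f ∧ Vertical X n d g := by
  constructor
  · rintro ⟨h0, h⟩
    have hf := left_ne_zero_of_mul h0
    have hg := right_ne_zero_of_mul h0
    simp only [ord_mul hf hg, mul_add, Finset.sum_add_distrib,
      totalDegree_mul_of_isDomain hf hg] at h
    have h1 := P.le f hf
    have h2 := P.le g hg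
    exact ⟨⟨hf, by omega⟩, ⟨hg, by omega⟩⟩
  · rintro ⟨⟨hf, h1⟩, ⟨hg, h2⟩⟩
    refine ⟨mul_ne_zero hf hg, ?_⟩
    simp only [ord_mul hf hg, mul_add, Finset.sum_add_distrib,
      totalDegree_mul_of_isDomain hf hg]
    omega

lemma vertical_of_dvd (P : Pencil X n d) {f g : Poly} (hg : Vertical X n d g) (h : f ∣ g) :
    Vertical X n d f := by
  obtain ⟨u, rfl⟩ := h
  exact (P.vertical_mul.1 hg).1

lemma mem_W (P : Pencil X n d) {b : ℕ} {f : Poly} (hf : f ≠ 0) :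
    f ∈ W X n d b ↔ f.totalDegree ≤ b ∧ ∀ p ∈ X, b * n p ≤ d * ord p f := by
  have hd := P.d_pos
  rw [W, mem_linSys hf]
  refine and_congr_right fun _ => forall₂_congr fun p _ => ?_
  rw [← Nat.lt_succ_iff, Nat.div_lt_iff_lt_mul hd, Nat.succ_mul, mul_comm d]
  omega

lemma W_exact (P : Pencil X n d) {b : ℕ} {f : Poly} (hf : f ≠ 0) (h : f ∈ W X n d b) :
    f.totalDegree = b ∧ (∀ p ∈ X, d * ord p f = b * n p) ∧ Vertical X n d f := by
  obtain ⟨h1, h2⟩ := (P.mem_W hf).1 h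
  have hd := P.d_pos
  have hle := P.le f hf
  have e1 : ∑ p ∈ X, n p * (b * n p) = b * d ^ 2 := by
    rw [← P.sq, Finset.mul_sum]
    exact Finset.sum_congr rfl fun p _ => by ring
  have e2 : ∑ p ∈ X, n p * (d * ord p f) = d * ∑ p ∈ X, n p * ord p f := by
    rw [Finset.mul_sum]
    exact Finset.sum_congr rfl fun p _ => by ring
  have e3 : ∑ p ∈ X, n p * (b * n p) ≤ ∑ p ∈ X, n p * (d * ord p f) :=
    Finset.sum_le_sum fun p hp => Nat.mul_le_mul le_rfl (h2 p hp)
  have e4 : d * ∑ p ∈ X, n p * ord p f ≤ d * (d * f.totalDegree) := Nat.mul_le_mul le_rfl hle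
  have hb : b ≤ f.totalDegree := by
    have : d ^ 2 * b ≤ d ^ 2 * f.totalDegree := by nlinarith
    exact Nat.le_of_mul_le_mul_left this (by positivity)
  have hb' : f.totalDegree = b := le_antisymm h1 hb
  have e5 : ∑ p ∈ X, n p * (b * n p) = ∑ p ∈ X, n p * (d * ord p f) := by
    refine le_antisymm e3 ?_
    rw [hb'] at e4
    nlinarith
  refine ⟨hb', ?_, hf, ?_⟩
  · intro p hp
    have := (Finset.sum_eq_sum_iff_of_le
      (fun p hp => Nat.mul_le_mul le_rfl (h2 p hp))).1 e5 p hp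
    exact (Nat.eq_of_mul_eq_mul_left (P.n_pos p hp) this).symm
  · apply Nat.eq_of_mul_eq_mul_left hd
    rw [← e2, ← e5, e1, hb']; ring

lemma W_mul (P : Pencil X n d) {a b : ℕ} {f g : Poly} (hf : f ∈ W X n d a) (hg : g ∈ W X n d b) :
    f * g ∈ W X n d (a + b) := by
  rcases eq_or_ne f 0 with rfl | hf0
  · simp
  rcases eq_or_ne g 0 with rfl | hg0
  · simp
  rw [P.mem_W hf0] at hf
  rw [P.mem_W hg0] at hg
  rw [P.mem_W (mul_ne_zero hf0 hg0)]
  refine ⟨totalDegree_mul_le hf.1 hg.1, fun p hp => ?_⟩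
  rw [ord_mul hf0 hg0]
  have := hf.2 p hp
  have := hg.2 p hp
  nlinarith

lemma W_pow (P : Pencil X n d) {a : ℕ} {f : Poly} (hf : f ∈ W X n d a) (N : ℕ) :
    f ^ N ∈ W X n d (N * a) := by
  induction N with
  | zero =>
    rw [P.mem_W (by simp)]
    simp
  | succ N ih => rw [pow_succ, Nat.succ_mul]; exact P.W_mul ih hf

lemma W_of_mul (P : Pencil X n d) {a b : ℕ} {f g : Poly} (hf0 : f ≠ 0) (hf : f ∈ W X n d a)
    (h : f * g ∈ W X n d (a + b)) : g ∈ W X n d b := by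
  rcases eq_or_ne g 0 with rfl | hg0
  · simp
  obtain ⟨h1, h2, _⟩ := P.W_exact hf0 hf
  obtain ⟨h3, h4, _⟩ := P.W_exact (mul_ne_zero hf0 hg0) h
  rw [totalDegree_mul_of_isDomain hf0 hg0] at h3
  rw [P.mem_W hg0]
  refine ⟨by omega, fun p hp => ?_⟩
  have := h2 p hp
  have := h4 p hp
  rw [ord_mul hf0 hg0] at this
  nlinarith

lemma W_zero {f : Poly} (h : f ∈ W X n d 0) : ∃ c : ℂ, f = C c := by
  refine ⟨coeff 0 f, ?_⟩
  rw [← totalDegree_eq_zero_iff_eq_C]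
  exact Nat.le_zero.1 h.1

/-- Members of `W` meet vertical curves only at base points, or contain them. -/
lemma dvd_of_zero (P : Pencil X n d) {b : ℕ} {f g : Poly} (hf : Irreducible f)
    (hv : Vertical X n d f) (hg : g ∈ W X n d b) {q : Fin 2 → ℂ} (hq : q ∉ X)
    (hqf : eval q f = 0) (hqg : eval q g = 0) : f ∣ g := by
  classical
  rcases eq_or_ne g 0 with rfl | hg0
  · simp
  by_contra hnd
  have hB := bezout hg0 (isRelPrime_of_not_dvd hf hnd) (insert q X)
  rw [Finset.sum_insert hq] at hB
  have hf1 : ord q f ≠ 0 := fun h => (ord_eq_zero_iff hf.ne_zero).1 h hqf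
  have hg1 : ord q g ≠ 0 := fun h => (ord_eq_zero_iff hg0).1 h hqg
  have hpos : 0 < ord q f * ord q g := Nat.mul_pos (by omega) (by omega)
  obtain ⟨h1, h2, _⟩ := P.W_exact hg0 hg
  have e : d * ∑ p ∈ X, ord p f * ord p g = b * (d * f.totalDegree) := by
    rw [← hv.2, Finset.mul_sum, Finset.mul_sum]
    refine Finset.sum_congr rfl fun p hp => ?_
    have := h2 p hp
    linear_combination ord p f * this
  have e' : ∑ p ∈ X, ord p f * ord p g = f.totalDegree * b := by
    apply Nat.eq_of_mul_eq_mul_left P.d_pos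
    rw [e]; ring
  rw [h1] at hB
  omega

lemma no_common_zero (P : Pencil X n d) {b : ℕ} {f g : Poly} (hf0 : f ≠ 0) (hf : f ∈ W X n d b)
    (hg : g ∈ W X n d b) (hfg : IsRelPrime f g) {q : Fin 2 → ℂ} (hq : q ∉ X)
    (hqf : eval q f = 0) (hqg : eval q g = 0) : False := by
  obtain ⟨u, hu, huf, huq⟩ := exists_irreducible_zero hf0 hqf
  have hv := P.vertical_of_dvd (P.W_exact hf0 hf).2.2 huf
  exact hu.not_isUnit (hfg huf (P.dvd_of_zero hu hv hg hq huq hqg))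

lemma ord_le (P : Pencil X n d) {f : Poly} (hf : f ≠ 0) {p : Fin 2 → ℂ} (hp : p ∈ X) :
    ord p f ≤ d * f.totalDegree := by
  have h := P.le f hf
  have h1 : n p * ord p f ≤ ∑ p ∈ X, n p * ord p f :=
    Finset.single_le_sum (f := fun p => n p * ord p f) (fun _ _ => Nat.zero_le _) hp
  have := Nat.le_mul_of_pos_left (ord p f) (P.n_pos p hp)
  omega

/-- A vertical curve that moves with its multiplicities at the base points has a moving part
numerically proportional to the pencil. -/
lemma moving (P : Pencil X n d) {H H' : Poly} (hH : Vertical X n d H) (hH' : H' ≠ 0)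
    (hdeg : H'.totalDegree ≤ H.totalDegree) (hord : ∀ p ∈ X, ord p H ≤ ord p H') :
    (∃ c : ℂ, c ≠ 0 ∧ H' = C c * H) ∨
    ∃ M B B' : Poly, H = M * B ∧ H' = M * B' ∧ IsRelPrime B B' ∧ 1 ≤ B.totalDegree ∧
      B ∈ W X n d B.totalDegree ∧ B' ∈ W X n d B.totalDegree := by
  obtain ⟨B, B', M, hrel, hB, hB'⟩ := UniqueFactorizationMonoid.exists_reduced_factors' H H' hH'
  subst hB hB'
  have hv := (P.vertical_mul.1 hH).2
  have hM : M ≠ 0 := left_ne_zero_of_mul hH'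
  have hB0 : B ≠ 0 := hv.1
  have hB'0 : B' ≠ 0 := right_ne_zero_of_mul hH'
  rw [totalDegree_mul_of_isDomain hM hB0, totalDegree_mul_of_isDomain hM hB'0] at hdeg
  simp only [ord_mul hM hB0, ord_mul hM hB'0] at hord
  have hdeg' : B'.totalDegree ≤ B.totalDegree := by omega
  have hord' : ∀ p ∈ X, ord p B ≤ ord p B' := fun p hp => by have := hord p hp; omega
  rcases Nat.eq_zero_or_pos B.totalDegree with h0 | hpos
  · left
    obtain ⟨b, hb⟩ : ∃ b : ℂ, B = C b := ⟨_, totalDegree_eq_zero_iff_eq_C.1 h0⟩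
    obtain ⟨b', hb'⟩ : ∃ b : ℂ, B' = C b :=
      ⟨_, totalDegree_eq_zero_iff_eq_C.1 (Nat.le_zero.1 (h0 ▸ hdeg'))⟩
    have hb0 : b ≠ 0 := by rintro rfl; simp at hb; exact hB0 hb
    have hb'0 : b' ≠ 0 := by rintro rfl; simp at hb'; exact hB'0 hb'
    refine ⟨b' / b, div_ne_zero hb'0 hb0, ?_⟩
    rw [hb, hb', mul_left_comm, ← C_mul, div_mul_cancel₀ _ hb0]
  · right
    have hbz := bezout hB'0 hrel X
    have h1 : ∑ p ∈ X, ord p B * ord p B ≤ B.totalDegree * B.totalDegree :=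
      (Finset.sum_le_sum fun p hp => Nat.mul_le_mul le_rfl (hord' p hp)).trans
        (hbz.trans (Nat.mul_le_mul le_rfl hdeg'))
    -- Hodge index: a vertical class of nonnegative square is proportional to the pencil
    have hodge : ∑ p ∈ X, ((d : ℤ) * ord p B - B.totalDegree * n p) ^ 2
        = d ^ 2 * (∑ p ∈ X, (ord p B : ℤ) * ord p B - B.totalDegree * B.totalDegree) := by
      have a1 : (∑ p ∈ X, (n p : ℤ) * ord p B) = d * B.totalDegree := by exact_mod_cast hv.2
      have a2 : (∑ p ∈ X, (n p : ℤ) ^ 2) = d ^ 2 := by exact_mod_cast P.sq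
      have : ∀ p, ((d : ℤ) * ord p B - B.totalDegree * n p) ^ 2
        = d ^ 2 * ((ord p B : ℤ) * ord p B) - 2 * d * B.totalDegree * ((n p : ℤ) * ord p B)
          + B.totalDegree ^ 2 * (n p : ℤ) ^ 2 := fun p => by ring
      simp only [this, Finset.sum_add_distrib, Finset.sum_sub_distrib, ← Finset.mul_sum, a1, a2]
      ring
    have h2 : (∑ p ∈ X, (ord p B : ℤ) * ord p B) ≤ B.totalDegree * B.totalDegree := by
      exact_mod_cast h1
    have h3 : ∑ p ∈ X, ((d : ℤ) * ord p B - B.totalDegree * n p) ^ 2 = 0 := by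
      refine le_antisymm ?_ (Finset.sum_nonneg fun p _ => sq_nonneg _)
      rw [hodge]
      nlinarith [sq_nonneg (d : ℤ)]
    have h4 : ∀ p ∈ X, d * ord p B = B.totalDegree * n p := by
      intro p hp
      have := (Finset.sum_eq_zero_iff_of_nonneg (fun p _ => sq_nonneg _)).1 h3 p hp
      have h5 : ((d : ℤ) * ord p B - B.totalDegree * n p) = 0 := by simpa using this
      have h6 : ((d : ℤ) * ord p B) = B.totalDegree * n p := by linarith
      exact_mod_cast h6
    refine ⟨M, B, B', rfl, rfl, hrel, hpos, ?_, ?_⟩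
    · rw [P.mem_W hB0]; exact ⟨le_rfl, fun p hp => (h4 p hp).ge⟩
    · rw [P.mem_W hB'0]
      exact ⟨hdeg', fun p hp => (h4 p hp).ge.trans (Nat.mul_le_mul le_rfl (hord' p hp))⟩

end Pencil

section

open scoped Classical

/-! ### Multinets in the affine plane -/

/-- An affine multinet: the lines are given by polynomials of degree one indexed by `ι`, all
intersection points lie in the affine plane, `X` is the base locus and `Xb` the set of the remaining
intersection points. -/
structure Net (ι : Type*) [Fintype ι] (k d : ℕ) where
  line : ι → Poly
  cls : ι → Fin k
  m : ι → ℕ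
  X : Finset (Fin 2 → ℂ)
  Xb : Finset (Fin 2 → ℂ)
  n : (Fin 2 → ℂ) → ℕ
  hk : 3 ≤ k
  surj : ∀ c, ∃ i, cls i = c
  tdeg : ∀ i, (line i).totalDegree = 1
  nondvd : ∀ i j, line i ∣ line j → i = j
  m_pos : ∀ i, 0 < m i
  sum_m : ∀ c, ∑ i with cls i = c, m i = d
  sum_n : ∀ p ∈ X, ∀ c, ∑ i with cls i = c ∧ eval p (line i) = 0, m i = n p
  n_pos : ∀ p ∈ X, 0 < n p
  disj : Disjoint X Xb
  meet : ∀ i j, i ≠ j → ∃ p, (p ∈ X ∨ p ∈ Xb) ∧ eval p (line i) = 0 ∧ eval p (line j) = 0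
  cross : ∀ i j, cls i ≠ cls j → ∃ p ∈ X, eval p (line i) = 0 ∧ eval p (line j) = 0
  conn : ∀ i j, cls i = cls j → Relation.ReflTransGen
    (fun a b => cls a = cls b ∧ ∃ q, q ∉ X ∧ eval q (line a) = 0 ∧ eval q (line b) = 0) i j
  gcd_m : ∀ e, (∀ i, e ∣ m i) → e = 1
  card_Xb : ∀ p ∈ Xb, 2 ≤ Finset.card {i | eval p (line i) = 0}

lemma irreducible_of_tdeg_one {f : Poly} (hf : f.totalDegree = 1) : Irreducible f := by
  have hf0 : f ≠ 0 := by rintro rfl; simp at hf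
  refine ⟨by rw [isUnit_iff_tdeg hf0]; omega, ?_⟩
  rintro a b rfl
  have ha := left_ne_zero_of_mul hf0
  have hb := right_ne_zero_of_mul hf0
  rw [totalDegree_mul_of_isDomain ha hb] at hf
  rw [isUnit_iff_tdeg ha, isUnit_iff_tdeg hb]
  omega

lemma ord_of_tdeg_one {f : Poly} (hf : f.totalDegree = 1) {p : Fin 2 → ℂ} (h : eval p f = 0) :
    ord p f = 1 := by
  have hf0 : f ≠ 0 := by rintro rfl; simp at hf
  have h1 : ord p f ≠ 0 := fun h0 => (ord_eq_zero_iff hf0).1 h0 h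
  by_contra h2
  have h3 : f ∈ vanish p (1 + 1) := (mem_vanish_iff hf0).2 (by omega)
  have h4 : ∀ i, pderiv i f = 0 := by
    intro i
    by_contra hne
    have h5 := (mem_vanish_iff hne).1 (pderiv_mem_vanish i h3)
    have h6 := totalDegree_pderiv_le i f
    rw [hf] at h6
    obtain ⟨c, hc⟩ : ∃ c : ℂ, pderiv i f = C c :=
      ⟨_, totalDegree_eq_zero_iff_eq_C.1 (Nat.le_zero.1 h6)⟩
    have hc0 : c ≠ 0 := by rintro rfl; simp at hc; exact hne hc
    rw [hc, ord_C p hc0] at h5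
    omega
  have := isUnit_of_dvd_pderiv hf0 (fun i => by rw [h4 i]; exact dvd_zero f)
  rw [isUnit_iff_tdeg hf0] at this
  omega

namespace Net

variable {ι : Type*} [Fintype ι] {k d : ℕ} (N : Net ι k d)

lemma irr (i : ι) : Irreducible (N.line i) := irreducible_of_tdeg_one (N.tdeg i)

lemma line_ne_zero (i : ι) : N.line i ≠ 0 := (N.irr i).ne_zero

lemma ord_line (p : Fin 2 → ℂ) (i : ι) :
    ord p (N.line i) = if eval p (N.line i) = 0 then 1 else 0 := by
  split_ifs with h
  · exact ord_of_tdeg_one (N.tdeg i) h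
  · exact (ord_eq_zero_iff (N.line_ne_zero i)).2 h

lemma unique {i j : ι} (hij : i ≠ j) {p q : Fin 2 → ℂ} (hpi : eval p (N.line i) = 0)
    (hpj : eval p (N.line j) = 0) (hqi : eval q (N.line i) = 0) (hqj : eval q (N.line j) = 0) :
    p = q := by
  by_contra hpq
  have h := bezout (N.line_ne_zero j)
    (isRelPrime_of_not_dvd (N.irr i) (fun h => hij (N.nondvd i j h))) {p, q}
  rw [Finset.sum_pair hpq] at h
  simp only [N.ord_line, hpi, hpj, hqi, hqj, N.tdeg] at h
  simp at h

lemma mem_X_of_cross {i j : ι} (hij : N.cls i ≠ N.cls j) {p : Fin 2 → ℂ}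
    (hi : eval p (N.line i) = 0) (hj : eval p (N.line j) = 0) : p ∈ N.X := by
  obtain ⟨q, hq, h1, h2⟩ := N.cross i j hij
  rwa [N.unique (fun h => hij (by rw [h])) hi hj h1 h2]

/-- The completely reducible member of the pencil belonging to the class `c`. -/
noncomputable def F (c : Fin k) : Poly := ∏ i with N.cls i = c, N.line i ^ N.m i

lemma F_ne_zero (c : Fin k) : N.F c ≠ 0 :=
  Finset.prod_ne_zero_iff.2 fun i _ => pow_ne_zero _ (N.line_ne_zero i)

lemma tdeg_F (c : Fin k) : (N.F c).totalDegree = d := by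
  rw [F, tdeg_prod _ _ fun i _ => pow_ne_zero _ (N.line_ne_zero i)]
  refine Eq.trans ?_ (N.sum_m c)
  refine Finset.sum_congr rfl fun i _ => ?_
  rw [tdeg_pow (N.line_ne_zero i), N.tdeg, mul_one]

lemma ord_F' (p : Fin 2 → ℂ) (c : Fin k) :
    ord p (N.F c) = ∑ i with N.cls i = c ∧ eval p (N.line i) = 0, N.m i := by
  rw [F, ord_prod _ _ fun i _ => pow_ne_zero _ (N.line_ne_zero i), ← Finset.filter_filter,
    Finset.sum_filter (fun i => eval p (N.line i) = 0)]
  refine Finset.sum_congr rfl fun i _ => ?_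
  rw [ord_pow (N.line_ne_zero i), N.ord_line]
  split_ifs <;> simp

lemma ord_F {p : Fin 2 → ℂ} (hp : p ∈ N.X) (c : Fin k) : ord p (N.F c) = N.n p := by
  rw [ord_F', N.sum_n p hp c]

lemma exists_line_of_dvd_F {g : Poly} (hg : Irreducible g) {c : Fin k} {e : ℕ}
    (h : g ∣ N.F c ^ e) : ∃ i, N.cls i = c ∧ Associated g (N.line i) := by
  have h := hg.prime.dvd_of_dvd_pow h
  obtain ⟨i, hi, h1⟩ := (hg.prime.dvd_finsetProd_iff _).1 h
  exact ⟨i, by simpa using hi, hg.associated_of_dvd (N.irr i) (hg.prime.dvd_of_dvd_pow h1)⟩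

lemma line_dvd_F (i : ι) : N.line i ∣ N.F (N.cls i) :=
  (dvd_pow_self _ (N.m_pos i).ne').trans
    (Finset.dvd_prod_of_mem (fun i => N.line i ^ N.m i) (by simp))

lemma cls_eq_of_dvd_F {i : ι} {c : Fin k} (h : N.line i ∣ N.F c) : N.cls i = c := by
  obtain ⟨j, hj, h1⟩ := N.exists_line_of_dvd_F (N.irr i) (e := 1) (by simpa using h)
  rw [N.nondvd i j h1.dvd, hj]

lemma not_dvd_both {g : Poly} (hg : Irreducible g) {c c' : Fin k} (hc : c ≠ c') (h : g ∣ N.F c)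
    (h' : g ∣ N.F c') : False := by
  obtain ⟨i, hi, h1⟩ := N.exists_line_of_dvd_F hg (e := 1) (by simpa using h)
  exact hc (by rw [← hi, N.cls_eq_of_dvd_F (h1.symm.dvd.trans h')])

lemma F_relPrime {c c' : Fin k} (hc : c ≠ c') : IsRelPrime (N.F c) (N.F c') := by
  apply WfDvdMonoid.isRelPrime_of_no_irreducible_factors
  · exact fun h => N.F_ne_zero c h.1
  · intro z hz h h'
    exact N.not_dvd_both hz hc h h'

lemma exists_ne_cls (N : Net ι k d) (c : Fin k) : ∃ c', c' ≠ c := by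
  have := N.hk
  have : Nontrivial (Fin k) := Fin.nontrivial_iff_two_le.2 (by omega)
  exact exists_ne c

/-- Bézout's theorem for the line `i` and another class. -/
lemma sum_line (i : ι) : ∑ p ∈ N.X with eval p (N.line i) = 0, N.n p = d := by
  obtain ⟨c, hc⟩ := N.exists_ne_cls (N.cls i)
  have e1 : ∑ p ∈ N.X with eval p (N.line i) = 0, N.n p
      = ∑ p ∈ N.X with eval p (N.line i) = 0,
          ∑ j with N.cls j = c, if eval p (N.line j) = 0 then N.m j else 0 := by
    refine Finset.sum_congr rfl fun p hp => ?_
    rw [← N.sum_n p (Finset.mem_filter.1 hp).1 c, ← Finset.filter_filter, Finset.sum_filter]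
  rw [e1, Finset.sum_comm]
  refine Eq.trans ?_ (N.sum_m c)
  refine Finset.sum_congr rfl fun j hj => ?_
  have hj : N.cls j = c := by simpa using hj
  have hij : N.cls i ≠ N.cls j := by rw [hj]; exact hc.symm
  obtain ⟨q, hq, h1, h2⟩ := N.cross i j hij
  rw [Finset.sum_eq_single q]
  · rw [if_pos h2]
  · intro p hp hpq
    rw [if_neg]
    intro h
    exact hpq (N.unique (fun h => hij (by rw [h])) (Finset.mem_filter.1 hp).2 h h1 h2)
  · intro h; exact absurd (Finset.mem_filter.2 ⟨hq, h1⟩) h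

/-- Bézout's theorem for two classes. -/
lemma sum_sq : ∑ p ∈ N.X, N.n p ^ 2 = d ^ 2 := by
  have c : Fin k := ⟨0, by have := N.hk; omega⟩
  have e1 : ∑ p ∈ N.X, N.n p ^ 2
      = ∑ p ∈ N.X, ∑ j with N.cls j = c, if eval p (N.line j) = 0 then N.m j * N.n p else 0 := by
    refine Finset.sum_congr rfl fun p hp => ?_
    rw [sq]
    nth_rewrite 1 [← N.sum_n p hp c]
    rw [← Finset.filter_filter, Finset.sum_filter, Finset.sum_mul]
    refine Finset.sum_congr rfl fun j _ => ?_
    split_ifs <;> simp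
  have e2 : d ^ 2 = ∑ j with N.cls j = c, N.m j * d := by
    rw [← Finset.sum_mul, N.sum_m c, sq]
  rw [e1, Finset.sum_comm, e2]
  refine Finset.sum_congr rfl fun j _ => ?_
  rw [← Finset.sum_filter, ← Finset.mul_sum, N.sum_line]

lemma d_pos (N : Net ι k d) : 0 < d := by
  have c : Fin k := ⟨0, by have := N.hk; omega⟩
  obtain ⟨i, hi⟩ := N.surj c
  refine lt_of_lt_of_eq ?_ (N.sum_m c)
  exact (N.m_pos i).trans_le
    (Finset.single_le_sum (f := N.m) (fun _ _ => Nat.zero_le _) (by simpa using hi))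

/-- Bézout's inequality for `f` and the pencil: each irreducible factor of `f` is prime to the
polynomial of some class. -/
lemma sum_n_mul_ord_le (f : Poly) (hf : f ≠ 0) : ∑ p ∈ N.X, N.n p * ord p f ≤ d * f.totalDegree := by
  induction f using UniqueFactorizationMonoid.induction_on_prime with
  | h₁ => exact absurd rfl hf
  | h₂ x hx =>
    have : ∀ p, ord p x = 0 := fun p => (ord_eq_zero_iff hf).2 (hx.map (eval p)).ne_zero
    simp [this]
  | h₃ a f ha hp ih =>
    have c : Fin k := ⟨0, by have := N.hk; omega⟩
    obtain ⟨c', hc⟩ := N.exists_ne_cls c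
    have hf0 := hp.ne_zero
    have h1 : ∃ c, ¬ f ∣ N.F c := by
      by_contra! h
      exact N.not_dvd_both hp.irreducible hc (h _) (h _)
    obtain ⟨c, hfc⟩ := h1
    have h2 := bezout (N.F_ne_zero c) (isRelPrime_of_not_dvd hp.irreducible hfc) N.X
    rw [N.tdeg_F] at h2
    have h3 : ∑ p ∈ N.X, ord p f * ord p (N.F c) = ∑ p ∈ N.X, N.n p * ord p f :=
      Finset.sum_congr rfl fun p hp => by rw [N.ord_F hp, mul_comm]
    have h4 := ih ha
    rw [totalDegree_mul_of_isDomain hf0 ha]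
    simp only [ord_mul hf0 ha, mul_add, Finset.sum_add_distrib]
    rw [h3] at h2
    linarith

lemma pencil : Pencil N.X N.n d where
  d_pos := N.d_pos
  n_pos := N.n_pos
  sq := N.sum_sq
  le := N.sum_n_mul_ord_le

lemma F_mem_W (c : Fin k) : N.F c ∈ W N.X N.n d d := by
  rw [N.pencil.mem_W (N.F_ne_zero c)]
  exact ⟨(N.tdeg_F c).le, fun p hp => by rw [N.ord_F hp]⟩

lemma vertical_F (c : Fin k) : Vertical N.X N.n d (N.F c) :=
  (N.pencil.W_exact (N.F_ne_zero c) (N.F_mem_W c)).2.2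

lemma vertical_line (i : ι) : Vertical N.X N.n d (N.line i) :=
  N.pencil.vertical_of_dvd (N.vertical_F _) (N.line_dvd_F i)

end Net

end

/-! ### Indivisibility of the pencil -/

namespace Pencil

variable {X : Finset (Fin 2 → ℂ)} {n : (Fin 2 → ℂ) → ℕ} {d : ℕ}

lemma not_isUnit_of_mem_W (P : Pencil X n d) {b : ℕ} (hb : 1 ≤ b) {B : Poly}
    (hB : B ∈ W X n d b) : ¬ IsUnit B := by
  intro h
  have h0 := h.ne_zero
  have := (isUnit_iff_tdeg h0).1 h
  have := (P.W_exact h0 hB).1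
  omega

lemma comb_mem {b : ℕ} {B B' : Poly} (hB : B ∈ W X n d b) (hB' : B' ∈ W X n d b) (s t : ℂ) :
    C s * B + C t * B' ∈ W X n d b := by
  rw [← smul_eq_C_mul, ← smul_eq_C_mul]
  exact Submodule.add_mem _ (Submodule.smul_mem _ _ hB) (Submodule.smul_mem _ _ hB')

/-- Members of a pencil with coprime generators are nonzero. -/
lemma comb_ne_zero (P : Pencil X n d) {b : ℕ} (hb : 1 ≤ b) {B B' : Poly}
    (hB : B ∈ W X n d b) (hB' : B' ∈ W X n d b) (hrel : IsRelPrime B B') {s t : ℂ}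
    (hst : s ≠ 0 ∨ t ≠ 0) : C s * B + C t * B' ≠ 0 := by
  have key : ∀ {B B' : Poly}, B ∈ W X n d b → B' ∈ W X n d b → IsRelPrime B B' → ∀ {s t : ℂ},
      s ≠ 0 → C s * B + C t * B' ≠ 0 := by
    intro B B' hB hB' hrel s t hs h
    refine P.not_isUnit_of_mem_W hb hB' (hrel ⟨-C (t / s), ?_⟩ dvd_rfl)
    have hs' : (C s : Poly) ≠ 0 := by simpa using hs
    apply mul_left_cancel₀ hs'
    have e : (C s * C (t / s) : Poly) = C t := by rw [← C_mul, mul_div_cancel₀ _ hs]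
    linear_combination h + B' * e
  rcases hst with h | h
  · exact key hB hB' hrel h
  · rw [add_comm]; exact key hB' hB hrel.symm h

/-- Two different members of a pencil with coprime generators are coprime. -/
lemma comb_relPrime {B B' : Poly} (hrel : IsRelPrime B B') {s t : ℂ} (hst : s ≠ t) :
    IsRelPrime (B + C s * B') (B + C t * B') := by
  intro g h1 h2
  have hu : IsUnit (C (s - t) : Poly) := (IsUnit.mk0 _ (sub_ne_zero.2 hst)).map C
  have h3 : g ∣ B' := by
    have : g ∣ C (s - t) * B' := by
      have e : C (s - t) * B' = (B + C s * B') - (B + C t * B') := by rw [C_sub]; ring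
      rw [e]; exact dvd_sub h1 h2
    exact (hu.dvd_mul_left).1 this
  have h4 : g ∣ B := by
    have e : B = (B + C s * B') - C s * B' := by ring
    rw [e]; exact dvd_sub h1 (h3.mul_left _)
  exact hrel h4 h3

/-- If no smaller multiple of the numerical class of the pencil moves, all but finitely many members
are irreducible. -/
lemma finite_reducible (P : Pencil X n d) {b : ℕ} (hb : 1 ≤ b) {B B' : Poly}
    (hB : B ∈ W X n d b) (hB' : B' ∈ W X n d b) (hrel : IsRelPrime B B')
    (hmin : ∀ b', 1 ≤ b' → b' < b → ∀ A ∈ W X n d b', ∀ A' ∈ W X n d b', ¬ IsRelPrime A A') :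
    {c : ℂ | ¬ Irreducible (B + C c * B')}.Finite := by
  by_contra hinf
  have hinf' : Infinite {c : ℂ | ¬ Irreducible (B + C c * B')} := Set.infinite_coe_iff.2 hinf
  have hmem : ∀ c : ℂ, B + C c * B' ∈ W X n d b := fun c => by
    simpa using comb_mem hB hB' 1 c
  have hne : ∀ c : ℂ, B + C c * B' ≠ 0 := fun c => by
    simpa using P.comb_ne_zero hb hB hB' hrel (s := 1) (t := c) (Or.inl one_ne_zero)
  have h1 : ∀ c : {c : ℂ | ¬ Irreducible (B + C c * B')}, ∃ f : Poly, Irreducible f ∧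
      f ∣ B + C c.1 * B' ∧ f.totalDegree < b := by
    rintro ⟨c, hc⟩
    have hd := (P.W_exact (hne c) (hmem c)).1
    obtain ⟨f, hf, hfd⟩ := exists_irreducible_dvd (hne c) (by omega)
    refine ⟨f, hf, hfd, ?_⟩
    by_contra hlt
    obtain ⟨a, ha, he⟩ := eq_C_mul_of_dvd (hne c) hfd (by omega)
    apply hc
    have hu : IsUnit (C a : Poly) := (IsUnit.mk0 _ ha).map C
    rw [he]
    exact (irreducible_isUnit_mul hu).2 hf
  choose f hf hfd hflt using h1
  have hv : ∀ c, Vertical X n d (f c) := fun c =>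
    P.vertical_of_dvd (P.W_exact (hne c) (hmem c)).2.2 (hfd c)
  let g : {c : ℂ | ¬ Irreducible (B + C c * B')} → Fin b × (X → Fin (d * b + 1)) := fun c =>
    (⟨(f c).totalDegree, hflt c⟩, fun p => ⟨ord p.1 (f c), by
      have := P.ord_le (hf c).ne_zero p.2
      have := Nat.mul_le_mul (le_refl d) (hflt c).le
      omega⟩)
  obtain ⟨c, c', hcc, hg⟩ := Finite.exists_ne_map_eq_of_infinite g
  have hdeg : (f c).totalDegree = (f c').totalDegree := by
    have := congrArg (fun z => z.1.1) hg
    exact this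
  have hord : ∀ p ∈ X, ord p (f c) = ord p (f c') := by
    intro p hp
    have := congrArg (fun z => (z.2 ⟨p, hp⟩).1) hg
    exact this
  have hcop : IsRelPrime (f c) (f c') :=
    (comb_relPrime hrel (fun h => hcc (Subtype.ext h))).of_dvd_left (hfd c) |>.of_dvd_right (hfd c')
  rcases P.moving (hv c) (hf c').ne_zero hdeg.ge (fun p hp => (hord p hp).le) with
    ⟨a, ha, he⟩ | ⟨M, A, A', hA, -, hAA, h1, hAW, hAW'⟩
  · exact (hf c).not_isUnit (hcop dvd_rfl ⟨C a, by rw [he, mul_comm]⟩)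
  · refine hmin _ h1 ?_ A hAW A' hAW' hAA
    refine lt_of_le_of_lt (tdeg_le_of_dvd (hf c).ne_zero ⟨M, ?_⟩) (hflt c)
    rw [hA, mul_comm]

end Pencil

namespace Net

variable {ι : Type*} [Fintype ι] {k d : ℕ} (N : Net ι k d)

/-- A member of any pencil in the class containing one line of a class contains them all: two
lines meeting outside `X` lie in the same members. -/
lemma line_dvd_of_conn {b : ℕ} {K : Poly} (hK : K ∈ W N.X N.n d b) {i j : ι}
    (hij : N.cls i = N.cls j) (hi : N.line i ∣ K) : N.line j ∣ K := by
  induction N.conn i j hij with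
  | refl => exact hi
  | tail _ hab ih =>
    obtain ⟨hc, q, hq, h1, h2⟩ := hab
    obtain ⟨u, hu⟩ := ih (by rw [hij, hc])
    refine N.pencil.dvd_of_zero (N.irr _) (N.vertical_line _) hK hq h2 ?_
    rw [hu, map_mul, h1, zero_mul]

/-- At a generic point of a line only that line contributes to the order of its class. -/
lemma exists_generic (i : ι) : ∃ q, q ∉ N.X ∧ eval q (N.line i) = 0 ∧
    ord q (N.F (N.cls i)) = N.m i ∧ ∀ j, j ≠ i → eval q (N.line j) ≠ 0 := by
  classical
  obtain ⟨q, hq, h⟩ := exists_zero_notMem (N.irr i) (N.X ∪ N.Xb)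
  have hgen : ∀ j, j ≠ i → eval q (N.line j) ≠ 0 := by
    intro j hj h'
    obtain ⟨p, hp, h1, h2⟩ := N.meet i j hj.symm
    have := N.unique hj.symm h1 h2 h h'
    rw [this] at hp
    exact hq (Finset.mem_union.2 hp)
  refine ⟨q, fun h' => hq (Finset.mem_union_left _ h'), h, ?_, hgen⟩
  rw [N.ord_F', Finset.sum_eq_single i]
  · intro j hj hji
    exact absurd (Finset.mem_filter.1 hj).2.2 (hgen j hji)
  · intro h'; simp [h] at h'

/-- Let `b` be the smallest degree of a pencil `⟨B, B'⟩` in the numerical class of the net. The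
class `F` of the line `i` satisfies `F ^ b = c K ^ d`, where `K` is the member of the small pencil
through a generic point of that line; comparing orders at this point gives `d ∣ b * m i`. -/
lemma dvd_of_minimal {b : ℕ} (hb : 1 ≤ b) {B B' : Poly}
    (hB : B ∈ W N.X N.n d b) (hB' : B' ∈ W N.X N.n d b) (hrel : IsRelPrime B B')
    (hmin : ∀ b', 1 ≤ b' → b' < b → ∀ A ∈ W N.X N.n d b', ∀ A' ∈ W N.X N.n d b',
      ¬ IsRelPrime A A') (i : ι) : d ∣ b * N.m i := by
  have P := N.pencil
  obtain ⟨q, hq, hqi, hqF, -⟩ := N.exists_generic i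
  have hB0 : B ≠ 0 := by
    simpa using P.comb_ne_zero hb hB hB' hrel (s := 1) (t := 0) (Or.inl one_ne_zero)
  -- the member of the pencil through `q` contains the whole class of `i`
  obtain ⟨K, hKW, hK0, hKq⟩ : ∃ K ∈ W N.X N.n d b, K ≠ 0 ∧ eval q K = 0 := by
    refine ⟨C (eval q B') * B + C (-eval q B) * B', Pencil.comb_mem hB hB' _ _, ?_, ?_⟩
    · apply P.comb_ne_zero hb hB hB' hrel
      by_contra! h
      exact P.no_common_zero hB0 hB hB' hrel hq (by simpa using h.2) h.1
    · simp; ring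
  have hiK : N.line i ∣ K := P.dvd_of_zero (N.irr i) (N.vertical_line i) hKW hq hqi hKq
  have hjK : ∀ j, N.cls j = N.cls i → N.line j ∣ K := fun j hj =>
    N.line_dvd_of_conn hKW hj.symm hiK
  have hKdeg := (P.W_exact hK0 hKW).1
  -- an irreducible member different from `K`
  obtain ⟨G, hG, hGW, hGK⟩ : ∃ G, Irreducible G ∧ G ∈ W N.X N.n d b ∧ ¬ G ∣ K := by
    have hfin := P.finite_reducible hb hB hB' hrel hmin
    obtain ⟨s, hs⟩ := hfin.exists_notMem
    obtain ⟨t, ht⟩ := (hfin.union (Set.finite_singleton s)).exists_notMem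
    simp only [Set.mem_ofPred_eq, not_not] at hs
    simp only [Set.mem_union, Set.mem_ofPred_eq, not_or, not_not, Set.mem_singleton_iff] at ht
    have hmem : ∀ c : ℂ, B + C c * B' ∈ W N.X N.n d b := fun c => by
      simpa using Pencil.comb_mem hB hB' 1 c
    have hcop := Pencil.comb_relPrime hrel (fun h : s = t => ht.2 h.symm)
    by_contra! hc
    have h1 := hc _ hs (hmem s)
    have h2 := hc _ ht.1 (hmem t)
    have hd := (P.W_exact hs.ne_zero (hmem s)).1
    obtain ⟨a, ha, he⟩ := eq_C_mul_of_dvd hK0 h1 (by omega)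
    have hu : IsUnit (C a : Poly) := (IsUnit.mk0 _ ha).map C
    rw [he, hu.dvd_mul_left] at h2
    exact ht.1.not_isUnit (hcop h2 dvd_rfl)
  have hjG : ∀ j, N.cls j = N.cls i → ¬ N.line j ∣ G := fun j hj h =>
    hGK (((N.irr j).associated_of_dvd hG h).symm.dvd.trans (hjK j hj))
  obtain ⟨z, hz, hzG⟩ := exists_zero_notMem hG N.X
  have hGv := (P.W_exact hG.ne_zero hGW).2.2
  have hzK : eval z K ≠ 0 := fun h => hGK (P.dvd_of_zero hG hGv hKW hz hzG h)
  -- subtracting a multiple of `K ^ (e + 1)` makes `g` vanish at `z`, hence divisible by `G`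
  have claim : ∀ (e : ℕ) (g : Poly), g ∈ W N.X N.n d (e * b) → ∀ j, N.cls j = N.cls i →
      N.line j ∣ g → K ∣ g := by
    intro e
    induction e with
    | zero =>
      intro g hg j hj hjg
      rw [zero_mul] at hg
      obtain ⟨c, rfl⟩ := Pencil.W_zero hg
      rcases eq_or_ne c 0 with rfl | hc
      · simp
      · exact absurd (isUnit_of_dvd_unit hjg ((IsUnit.mk0 _ hc).map C)) (N.irr j).not_isUnit
    | succ e ih =>
      intro g hg j hj hjg
      let c := eval z g / eval z K ^ (e + 1)
      have hmem : g - C c * K ^ (e + 1) ∈ W N.X N.n d ((e + 1) * b) := by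
        rw [← smul_eq_C_mul]
        exact Submodule.sub_mem _ hg (Submodule.smul_mem _ _ (P.W_pow hKW _))
      have hGd : G ∣ g - C c * K ^ (e + 1) := by
        refine P.dvd_of_zero hG hGv hmem hz hzG ?_
        simp only [map_sub, map_mul, map_pow, eval_C, c]
        rw [div_mul_cancel₀ _ (pow_ne_zero _ hzK), sub_self]
      obtain ⟨g1, hg1⟩ := hGd
      have hg1W : g1 ∈ W N.X N.n d (e * b) := by
        apply P.W_of_mul hG.ne_zero hGW
        rw [← hg1]
        rwa [Nat.succ_mul, add_comm] at hmem
      have hjK' : N.line j ∣ C c * K ^ (e + 1) :=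
        ((hjK j hj).trans (dvd_pow_self _ (by omega))).mul_left _
      have hjg1 : N.line j ∣ g1 := by
        have : N.line j ∣ G * g1 := by rw [← hg1]; exact dvd_sub hjg hjK'
        exact ((N.irr j).prime.dvd_or_dvd this).resolve_left (hjG j hj)
      have e1 : g = G * g1 + C c * K ^ (e + 1) := by rw [← hg1]; ring
      rw [e1]
      exact dvd_add ((ih g1 hg1W j hj hjg1).mul_left _)
        ((dvd_pow_self _ (by omega)).mul_left _)
  have claim2 : ∀ (e : ℕ) (g : Poly), g ∈ W N.X N.n d (e * b) → g ∣ N.F (N.cls i) ^ b →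
      ∃ c : ℂ, c ≠ 0 ∧ g = C c * K ^ e := by
    intro e
    induction e with
    | zero =>
      intro g hg hgF
      rw [zero_mul] at hg
      obtain ⟨c, rfl⟩ := Pencil.W_zero hg
      refine ⟨c, ?_, by simp⟩
      rintro rfl
      simp only [C_0, zero_dvd_iff] at hgF
      exact pow_ne_zero _ (N.F_ne_zero _) hgF
    | succ e ih =>
      intro g hg hgF
      have hg0 : g ≠ 0 := by
        rintro rfl
        rw [zero_dvd_iff] at hgF
        exact pow_ne_zero _ (N.F_ne_zero _) hgF
      have hgd := (P.W_exact hg0 hg).1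
      obtain ⟨f, hf, hfg⟩ := exists_irreducible_dvd hg0 (by rw [hgd]; positivity)
      obtain ⟨j, hj, hja⟩ := N.exists_line_of_dvd_F hf (hfg.trans hgF)
      obtain ⟨g', rfl⟩ := claim _ g hg j hj (hja.symm.dvd.trans hfg)
      obtain ⟨c, hc, he⟩ := ih g' (P.W_of_mul hK0 hKW (by rwa [Nat.succ_mul, add_comm] at hg))
        ((dvd_mul_left _ _).trans hgF)
      exact ⟨c, hc, by rw [he]; ring⟩
  obtain ⟨c, hc, he⟩ := claim2 d (N.F (N.cls i) ^ b) (by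
    rw [mul_comm]; exact P.W_pow (N.F_mem_W _) b) dvd_rfl
  have h := congrArg (ord q) he
  rw [ord_pow (N.F_ne_zero _), ord_mul (by simpa using hc) (pow_ne_zero _ hK0), ord_C q hc,
    ord_pow hK0, hqF, zero_add] at h
  exact ⟨_, h⟩

/-- Minimality: no proper fraction of the numerical class of the pencil moves. This is where the
multiplicities being coprime enters. -/
lemma le_of_coprime {b : ℕ} (hb : 1 ≤ b) {B B' : Poly}
    (hB : B ∈ W N.X N.n d b) (hB' : B' ∈ W N.X N.n d b) (hrel : IsRelPrime B B') : d ≤ b := by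
  classical
  have hex : ∃ b, 1 ≤ b ∧ ∃ B ∈ W N.X N.n d b, ∃ B' ∈ W N.X N.n d b, IsRelPrime B B' :=
    ⟨b, hb, B, hB, B', hB', hrel⟩
  have hle : Nat.find hex ≤ b := Nat.find_le ⟨hb, B, hB, B', hB', hrel⟩
  obtain ⟨h1, A, hA, A', hA', hAA⟩ := Nat.find_spec hex
  have hdvd : ∀ i, d ∣ Nat.find hex * N.m i := N.dvd_of_minimal h1 hA hA' hAA (by
    intro b' hb' hlt C hC C' hC' hCC
    exact Nat.find_min hex hlt ⟨hb', C, hC, C', hC', hCC⟩)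
  generalize Nat.find hex = e at *
  have hg : 0 < Nat.gcd d e := Nat.gcd_pos_of_pos_left _ N.d_pos
  have h2 : d / Nat.gcd d e = 1 := by
    apply N.gcd_m
    intro i
    have hcop : Nat.Coprime (d / Nat.gcd d e) (e / Nat.gcd d e) := Nat.coprime_div_gcd_div_gcd hg
    apply hcop.dvd_of_dvd_mul_left
    obtain ⟨u, hu⟩ := hdvd i
    refine ⟨u, ?_⟩
    apply Nat.eq_of_mul_eq_mul_left hg
    rw [← mul_assoc, ← mul_assoc, Nat.mul_div_cancel' (Nat.gcd_dvd_left d e),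
      Nat.mul_div_cancel' (Nat.gcd_dvd_right d e), hu]
  have h3 : d = Nat.gcd d e := by
    have := Nat.div_mul_cancel (Nat.gcd_dvd_left d e)
    rw [h2, one_mul] at this
    exact this.symm
  have h4 : d ∣ e := h3 ▸ Nat.gcd_dvd_right d e
  exact (Nat.le_of_dvd h1 h4).trans hle

/-- A vertical curve of degree less than `d` does not move. -/
lemma rigid {H H' : Poly} (hH : Vertical N.X N.n d H) (hlt : H.totalDegree < d) (hH' : H' ≠ 0)
    (hdeg : H'.totalDegree ≤ H.totalDegree) (hord : ∀ p ∈ N.X, ord p H ≤ ord p H') :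
    ∃ c : ℂ, c ≠ 0 ∧ H' = C c * H := by
  rcases N.pencil.moving hH hH' hdeg hord with h | ⟨M, A, A', hA, -, hAA, h1, hAW, hAW'⟩
  · exact h
  · have := N.le_of_coprime h1 hAW hAW' hAA
    have := tdeg_le_of_dvd hH.1 ⟨M, by rw [hA, mul_comm]⟩
    omega

/-- Members of the pencil with a common component are proportional. -/
lemma proportional {K K' f : Poly} (hK : K ∈ W N.X N.n d d) (hK0 : K ≠ 0)
    (hK' : K' ∈ W N.X N.n d d) (hK'0 : K' ≠ 0) (hf : Irreducible f) (h1 : f ∣ K) (h2 : f ∣ K') :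
    ∃ c : ℂ, c ≠ 0 ∧ K' = C c * K := by
  have P := N.pencil
  obtain ⟨e1, e2, e3⟩ := P.W_exact hK0 hK
  obtain ⟨e4, e5, e6⟩ := P.W_exact hK'0 hK'
  rcases P.moving e3 hK'0 (by omega) (fun p hp => by
      apply le_of_eq
      apply Nat.eq_of_mul_eq_mul_left P.d_pos
      rw [e2 p hp, e5 p hp]) with h | ⟨M, A, A', hA, hA', hAA, hd, hAW, hAW'⟩
  · exact h
  · exfalso
    have hle := N.le_of_coprime hd hAW hAW' hAA
    rw [hA] at hK0 e1
    have hM := left_ne_zero_of_mul hK0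
    have hA0 := right_ne_zero_of_mul hK0
    rw [totalDegree_mul_of_isDomain hM hA0] at e1
    have hMu : IsUnit M := (isUnit_iff_tdeg hM).2 (by omega)
    rw [hA, hMu.dvd_mul_left] at h1
    rw [hA', hMu.dvd_mul_left] at h2
    exact hf.not_isUnit (hAA h1 h2)

/-- Every element of `W d` is a combination of any two of the completely reducible members. -/
lemma mem_span {c c' : Fin k} (hc : c ≠ c') {K : Poly} (hK : K ∈ W N.X N.n d d) :
    ∃ s t : ℂ, K = C s * N.F c + C t * N.F c' := by
  have P := N.pencil
  obtain ⟨i, hi⟩ := N.surj c'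
  obtain ⟨q, hq, hqi⟩ := exists_zero_notMem (N.irr i) N.X
  have hi' : N.line i ∣ N.F c' := hi ▸ N.line_dvd_F i
  have hFq : eval q (N.F c) ≠ 0 := by
    intro h
    have := P.dvd_of_zero (N.irr i) (N.vertical_line i) (N.F_mem_W c) hq hqi h
    exact hc ((N.cls_eq_of_dvd_F this).symm.trans hi)
  let s := eval q K / eval q (N.F c)
  have hmem : K - C s * N.F c ∈ W N.X N.n d d := by
    rw [← smul_eq_C_mul]
    exact Submodule.sub_mem _ hK (Submodule.smul_mem _ _ (N.F_mem_W c))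
  have hd : N.line i ∣ K - C s * N.F c := by
    refine P.dvd_of_zero (N.irr i) (N.vertical_line i) hmem hq hqi ?_
    simp only [map_sub, map_mul, eval_C, s]
    rw [div_mul_cancel₀ _ hFq, sub_self]
  rcases eq_or_ne (K - C s * N.F c) 0 with h0 | h0
  · exact ⟨s, 0, by rw [C_0, zero_mul, add_zero]; linear_combination h0⟩
  · obtain ⟨t, -, ht⟩ := N.proportional (N.F_mem_W c') (N.F_ne_zero c') hmem h0 (N.irr i) hi' hd
    exact ⟨s, t, by rw [← ht]; ring⟩

end Net

/-! ### Multiple components of members of a pencil -/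

lemma exists_zero_of_not_dvd {f g : Poly} (hf : Irreducible f) (h : ¬ f ∣ g) :
    ∃ q, eval q f = 0 ∧ eval q g ≠ 0 := by
  by_contra! hc
  have h1 : g ∈ vanishingIdeal ℂ (zeroLocus ℂ (Ideal.span {f})) := by
    rw [mem_vanishingIdeal_iff]
    intro q hq
    rw [mem_zeroLocus_iff] at hq
    exact hc q (hq f (Ideal.subset_span rfl))
  rw [vanishingIdeal_zeroLocus_eq_radical] at h1
  obtain ⟨N, hN⟩ := h1
  rw [Ideal.mem_span_singleton] at hN
  exact h (hf.prime.dvd_of_dvd_pow hN)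

lemma mem_vanish_one {p : Fin 2 → ℂ} {f : Poly} : f ∈ vanish p 1 ↔ eval p f = 0 := by
  by_cases hf : f = 0
  · simp [hf]
  rw [mem_vanish_iff hf, Nat.one_le_iff_ne_zero, Ne, ord_eq_zero_iff hf, not_not]

/-- The coefficients of the `1`-form `F dG - G dF`. -/
noncomputable def wr (i : Fin 2) (F G : Poly) : Poly := F * pderiv i G - G * pderiv i F

/-- If `F dG - G dF` vanishes along an irreducible curve `D`, then `G / F` is constant along `D`.
At a smooth point `q` of `D` put `K = G - c F` with `K q = 0` and let `l` be a local parameter of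
`D`; if `D` and `K` were coprime, there would be a smallest `r` with
`l ^ r ∈ (D, K) + vanish q (r + 1)`, and differentiating along `D` lowers `r`. -/
lemma exists_dvd_of_dvd_wr {D F G : Poly} (hD : Irreducible D) (h : ∀ i, D ∣ wr i F G) :
    ∃ s t : ℂ, (s ≠ 0 ∨ t ≠ 0) ∧ D ∣ C s * F + C t * G := by
  by_cases hDF : D ∣ F
  · exact ⟨1, 0, by simp, by simpa using hDF⟩
  obtain ⟨i, hi⟩ : ∃ i, ¬ D ∣ pderiv i D := by
    by_contra! hc
    exact hD.not_isUnit (isUnit_of_dvd_pderiv hD.ne_zero hc)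
  obtain ⟨q, hq, hFq⟩ := exists_zero_of_not_dvd hD (g := F * pderiv i D)
    (fun h' => (hD.prime.dvd_or_dvd h').elim hDF hi)
  rw [map_mul] at hFq
  have hF : eval q F ≠ 0 := left_ne_zero_of_mul hFq
  have hDi : eval q (pderiv i D) ≠ 0 := right_ne_zero_of_mul hFq
  obtain ⟨j, hij⟩ : ∃ j : Fin 2, i ≠ j := by
    fin_cases i
    · exact ⟨1, by decide⟩
    · exact ⟨0, by decide⟩
  set c := eval q G / eval q F with hc
  set K := C (-c) * F + C 1 * G with hK
  refine ⟨-c, 1, by simp, ?_⟩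
  by_contra hDK
  have hKq : eval q K = 0 := by
    simp only [hK, map_add, map_mul, eval_C, hc]
    field_simp; ring
  have hwK : ∀ l, D ∣ F * pderiv l K - K * pderiv l F := by
    intro l
    have : F * pderiv l K - K * pderiv l F = wr l F G := by
      simp [hK, wr]; ring
    rw [this]; exact h l
  have hK0 : K ≠ 0 := by
    intro h0
    apply hDK
    rw [← hK, h0]
    exact dvd_zero _
  obtain ⟨hfin, -⟩ := bezout_colength hK0 (isRelPrime_of_not_dvd hD hDK)
  set J := Ideal.span {D, K} with hJ
  have hDJ : D ∈ J := Ideal.subset_span (by simp)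
  have hKJ : K ∈ J := Ideal.subset_span (by simp)
  set l : Poly := X j - C (q j) with hl
  have hlv : l ∈ vanish q 1 := mem_vanish_one.2 (by simp [hl])
  have hlp : ∀ r, l ^ r ∈ vanish q r := fun r => by simpa using pow_mem_vanish hlv r
  have hex : ∃ r, l ^ r ∈ J ⊔ vanish q (r + 1) := by
    let f : ℕ →o (Submodule ℂ (Poly ⧸ J))ᵒᵈ :=
      ⟨fun n => OrderDual.toDual (((vanish q n).restrictScalars ℂ).map
        (Ideal.Quotient.mkₐ ℂ J).toLinearMap), fun a b hab => by
        refine OrderDual.toDual_le_toDual.2 (Submodule.map_mono ?_)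
        exact fun x hx => vanish_anti hab hx⟩
    obtain ⟨r, hr⟩ := IsArtinian.monotone_stabilizes f
    refine ⟨r, ?_⟩
    have h1 := hr (r + 1) (by omega)
    have h2 : (Ideal.Quotient.mkₐ ℂ J).toLinearMap (l ^ r) ∈
        ((vanish q r).restrictScalars ℂ).map (Ideal.Quotient.mkₐ ℂ J).toLinearMap :=
      Submodule.mem_map_of_mem (hlp r)
    have h3 : (Ideal.Quotient.mkₐ ℂ J).toLinearMap (l ^ r) ∈
        ((vanish q (r + 1)).restrictScalars ℂ).map (Ideal.Quotient.mkₐ ℂ J).toLinearMap := by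
      have h4 := congrArg OrderDual.ofDual h1
      change Submodule.map _ _ = Submodule.map _ _ at h4
      rw [← h4]; exact h2
    obtain ⟨v, hv, hv'⟩ := Submodule.mem_map.1 h3
    have h5 : l ^ r - v ∈ J := by
      rw [← Ideal.Quotient.eq]
      exact hv'.symm
    rw [show l ^ r = (l ^ r - v) + v by ring]
    exact Submodule.add_mem_sup h5 hv
  classical
  obtain ⟨r, hr, hmin⟩ : ∃ r, l ^ r ∈ J ⊔ vanish q (r + 1) ∧
      ∀ r' < r, l ^ r' ∉ J ⊔ vanish q (r' + 1) :=
    ⟨Nat.find hex, Nat.find_spec hex, fun r' hr' => Nat.find_min hex hr'⟩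
  rcases r with _ | r
  · have hle : J ⊔ vanish q 1 ≤ vanish q 1 := by
      refine sup_le (Ideal.span_le.2 ?_) le_rfl
      rintro x (rfl | rfl)
      · exact mem_vanish_one.2 hq
      · exact mem_vanish_one.2 hKq
    have := mem_vanish_one.1 (hle hr)
    simp at this
  · refine hmin r (by omega) ?_
    obtain ⟨x, hx, v, hv, hxv⟩ := Submodule.mem_sup.1 hr
    obtain ⟨a, b, hab⟩ := Ideal.mem_span_pair.1 hx
    have hv' : ∀ i, pderiv i v ∈ vanish q (r + 1) := fun i => pderiv_mem_vanish i hv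
    have hdl : pderiv j l = 1 := by simp [hl]
    have hdl' : pderiv i l = 0 := by simp [hl, pderiv_X_of_ne hij.symm]
    obtain ⟨u0, hu0⟩ := hwK i
    obtain ⟨u1, hu1⟩ := hwK j
    set I := J ⊔ vanish q (r + 1) with hI
    have hDI : D ∈ I := Ideal.mem_sup_left hDJ
    have hKI : K ∈ I := Ideal.mem_sup_left hKJ
    -- differentiate `l ^ (r+1) = a D + b K + v` along `D`, and multiply by `F`
    have key : F * pderiv i D * (C ((r : ℂ) + 1) * l ^ r) ∈ I := by
      have e := congrArg (fun f => F * (pderiv i D * pderiv j f - pderiv j D * pderiv i f)) hxv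
      rw [← hab] at e
      simp only [map_add, Derivation.leibniz, smul_eq_mul, Derivation.leibniz_pow, hdl, hdl',
        Nat.add_sub_cancel, nsmul_eq_mul, Nat.cast_add, Nat.cast_one, mul_one, mul_zero,
        sub_zero] at e
      rw [show C ((r : ℂ) + 1) = ((r : Poly) + 1) by simp]
      rw [show F * pderiv i D * (((r : Poly) + 1) * l ^ r)
        = D * (F * (pderiv i D * pderiv j a - pderiv j D * pderiv i a)
            + b * (pderiv i D * u1 - pderiv j D * u0))
          + K * (b * (pderiv i D * pderiv j F - pderiv j D * pderiv i F)
            + F * (pderiv i D * pderiv j b - pderiv j D * pderiv i b))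
          + F * (pderiv i D * pderiv j v - pderiv j D * pderiv i v) by
        linear_combination -e + b * pderiv i D * hu1 - b * pderiv j D * hu0]
      refine I.add_mem (I.add_mem (I.mul_mem_right _ hDI) (I.mul_mem_right _ hKI)) ?_
      refine I.mul_mem_left _ (I.sub_mem (I.mul_mem_left _ ?_) (I.mul_mem_left _ ?_))
      · exact Ideal.mem_sup_right (hv' j)
      · exact Ideal.mem_sup_right (hv' i)
    set U := F * pderiv i D with hU
    have hUq : eval q U ≠ 0 := by rw [hU, map_mul]; exact hFq
    have h6 : (U - C (eval q U)) * l ^ r ∈ I := by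
      refine Ideal.mem_sup_right ?_
      rw [add_comm]
      exact mul_mem_vanish (mem_vanish_one.2 (by simp)) (hlp r)
    have hr0 : ((r : ℂ) + 1) ≠ 0 := by exact_mod_cast Nat.succ_ne_zero r
    have h7 := I.sub_mem (I.mul_mem_left (C ((r : ℂ) + 1)⁻¹) key) h6
    have h8 := I.mul_mem_left (C (eval q U)⁻¹) h7
    have h9 : C (eval q U)⁻¹ * (C ((r : ℂ) + 1)⁻¹ * (U * (C ((r : ℂ) + 1) * l ^ r)) -
        (U - C (eval q U)) * l ^ r) = l ^ r := by
      have e1 : (C ((r : ℂ) + 1)⁻¹ * C ((r : ℂ) + 1) : Poly) = 1 := by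
        rw [← C_mul, inv_mul_cancel₀ hr0, C_1]
      have e2 : (C (eval q U)⁻¹ * C (eval q U) : Poly) = 1 := by
        rw [← C_mul, inv_mul_cancel₀ hUq, C_1]
      linear_combination (C (eval q U)⁻¹ * U * l ^ r) * e1 + l ^ r * e2
    rwa [h9] at h8

/-! ### Rigidity and the expected dimension -/

section

open scoped Classical

/-- The expected dimension bounds the dimension of a linear system from below. -/
lemma finrank_linSys (S : Finset (Fin 2 → ℂ)) (b : ℕ) (o : (Fin 2 → ℂ) → ℕ) :
    FiniteDimensional ℂ (linSys S b o) ∧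
    (b + 1) * (b + 2) ≤ 2 * Module.finrank ℂ (linSys S b o) + ∑ p ∈ S, o p * (o p + 1) := by
  have hb := finrank_degLT (b + 1)
  have : FiniteDimensional ℂ (degLT (b + 1)) := by
    apply FiniteDimensional.of_finrank_pos
    rcases Nat.eq_zero_or_pos (Module.finrank ℂ (degLT (b + 1))) with h | h
    · rw [h] at hb; simp at hb
    · exact h
  let φ : degLT (b + 1) →ₗ[ℂ] ((p : S) → Poly ⧸ vanish p.1 (o p.1)) :=
    LinearMap.pi fun p => (Ideal.Quotient.mkₐ ℂ (vanish p.1 (o p.1))).toLinearMap.comp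
      (degLT (b + 1)).subtype
  have hle : linSys S b o ≤ degLT (b + 1) := fun f hf => mem_degLT_succ.2 hf.1
  have hfin : FiniteDimensional ℂ (linSys S b o) := Submodule.finiteDimensional_of_le hle
  refine ⟨hfin, ?_⟩
  have h1 := LinearMap.finrank_range_add_finrank_ker φ
  have h2 : Module.finrank ℂ (LinearMap.ker φ) ≤ Module.finrank ℂ (linSys S b o) := by
    have hk : ∀ f : LinearMap.ker φ, (f.1.1 : Poly) ∈ linSys S b o := by
      rintro ⟨⟨f, hf⟩, hker⟩
      refine ⟨mem_degLT_succ.1 hf, fun p hp => ?_⟩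
      have := congrFun (LinearMap.mem_ker.1 hker) ⟨p, hp⟩
      exact Ideal.Quotient.eq_zero_iff_mem.1 this
    let ψ : LinearMap.ker φ →ₗ[ℂ] linSys S b o :=
      (((degLT (b + 1)).subtype).comp (LinearMap.ker φ).subtype).codRestrict _ hk
    refine LinearMap.finrank_le_finrank_of_injective (f := ψ) fun x y hxy => ?_
    have := congrArg Subtype.val hxy
    exact Subtype.ext (Subtype.ext this)
  have h3 := Submodule.finrank_le (LinearMap.range φ)
  rw [Module.finrank_pi_fintype] at h3
  have h4 : 2 * ∑ p : S, Module.finrank ℂ (Poly ⧸ vanish p.1 (o p.1))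
      = ∑ p ∈ S, o p * (o p + 1) := by
    rw [Finset.mul_sum, ← Finset.sum_coe_sort S (fun p => o p * (o p + 1))]
    exact Finset.sum_congr rfl fun p _ => finrank_quot_vanish _ _
  have h5 : (b + 1) * (b + 1 + 1) = (b + 1) * (b + 2) := rfl
  omega

namespace Net

variable {ι : Type*} [Fintype ι] {k d : ℕ} (N : Net ι k d)

/-- Members of `W d` have order exactly `n p` at the base points. -/
lemma ord_of_mem_W {K : Poly} (hK : K ∈ W N.X N.n d d) (hK0 : K ≠ 0) {p : Fin 2 → ℂ}
    (hp : p ∈ N.X) : ord p K = N.n p :=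
  Nat.eq_of_mul_eq_mul_left N.d_pos ((N.pencil.W_exact hK0 hK).2.1 p hp)

/-- Every `s`-fold component of `H` is a component of multiplicity more than `s` in some member of
the pencil. -/
def Mult (H : Poly) : Prop := ∀ f, Irreducible f → ∀ s, 1 ≤ s → f ^ s ∣ H →
  ∃ K ∈ W N.X N.n d d, K ≠ 0 ∧ f ^ (s + 1) ∣ K

variable {N}

lemma Mult.of_dvd {H H' : Poly} (h : N.Mult H) (hd : H' ∣ H) : N.Mult H' :=
  fun f hf s hs hfs => h f hf s hs (hfs.trans hd)

lemma Mult.pow_dvd {H : Poly} (h : N.Mult H) {K : Poly} (hK : K ∈ W N.X N.n d d) (hK0 : K ≠ 0)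
    {f : Poly} (hf : Irreducible f) (hfK : f ∣ K) {s : ℕ} (hs : 1 ≤ s) (hfs : f ^ s ∣ H) :
    f ^ (s + 1) ∣ K := by
  obtain ⟨K', hK', hK'0, hd⟩ := h f hf s hs hfs
  obtain ⟨c, -, hc⟩ := N.proportional hK' hK'0 hK hK0 hf
    ((dvd_pow_self _ (by omega)).trans hd) hfK
  rw [hc]
  exact hd.mul_left _

lemma Mult.vertical {H : Poly} (h : N.Mult H) (hH : H ≠ 0) : Vertical N.X N.n d H := by
  induction H using UniqueFactorizationMonoid.induction_on_prime with
  | h₁ => exact absurd rfl hH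
  | h₂ x hx =>
    refine ⟨hH, ?_⟩
    have : ∀ p, ord p x = 0 := fun p => (ord_eq_zero_iff hH).2 (hx.map (eval p)).ne_zero
    simp [this, (isUnit_iff_tdeg hH).1 hx]
  | h₃ a p ha hp ih =>
    refine N.pencil.vertical_mul.2 ⟨?_, ih (h.of_dvd (dvd_mul_left _ _)) ha⟩
    obtain ⟨K, hK, hK0, hd⟩ := h p hp.irreducible 1 le_rfl (by simp)
    exact N.pencil.vertical_of_dvd (N.pencil.W_exact hK0 hK).2.2
      ((dvd_pow_self _ (by omega)).trans hd)

/-- For a rigid vertical curve the expected dimension of its linear system is at most one. -/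
lemma kappa_of_lt {H : Poly} (hH : Vertical N.X N.n d H) (hlt : H.totalDegree < d) :
    H.totalDegree ^ 2 + 3 * H.totalDegree ≤ ∑ p ∈ N.X, (ord p H ^ 2 + ord p H) := by
  obtain ⟨h1, h2⟩ := finrank_linSys N.X H.totalDegree (fun p => ord p H)
  have h3 : Module.finrank ℂ (linSys N.X H.totalDegree (fun p => ord p H)) ≤ 1 := by
    refine finrank_le_one ⟨H, (mem_linSys hH.1).2 ⟨le_rfl, fun p _ => le_rfl⟩⟩ ?_
    rintro ⟨f, hf⟩
    rcases eq_or_ne f 0 with rfl | hf0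
    · exact ⟨0, by rw [zero_smul]; rfl⟩
    · obtain ⟨hd, ho⟩ := (mem_linSys hf0).1 hf
      obtain ⟨c, -, hc⟩ := N.rigid hH hlt hf0 hd ho
      exact ⟨c, Subtype.ext (by simp [hc, smul_eq_C_mul])⟩
  have h4 : ∑ p ∈ N.X, ord p H * (ord p H + 1) = ∑ p ∈ N.X, (ord p H ^ 2 + ord p H) :=
    Finset.sum_congr rfl fun p _ => by ring
  nlinarith

/-- The inequality `kappa_of_lt` without bound on the degree, obtained by splitting `H` according to
the members of the pencil: parts in different members meet only in base points. -/
lemma kappa {H : Poly} (hH : H ≠ 0) (hM : N.Mult H) :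
    H.totalDegree ^ 2 + 3 * H.totalDegree ≤ ∑ p ∈ N.X, (ord p H ^ 2 + ord p H) := by
  induction hdeg : H.totalDegree using Nat.strong_induction_on generalizing H with
  | _ D ih =>
  rcases Nat.eq_zero_or_pos D with h0 | hpos
  · subst h0; simp
  obtain ⟨f, hf, hfH⟩ := exists_irreducible_dvd hH (by omega)
  obtain ⟨K, hK, hK0, hfK⟩ := hM f hf 1 le_rfl (by simpa using hfH)
  replace hfK : f ∣ K := (dvd_pow_self _ (by omega)).trans hfK
  obtain ⟨H2, R, H1, hrel, hH2, hR⟩ := UniqueFactorizationMonoid.exists_reduced_factors' H K hK0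
  have h10 : H1 ≠ 0 := by rintro rfl; simp at hH2; exact hH hH2.symm
  have h20 : H2 ≠ 0 := by rintro rfl; simp at hH2; exact hH hH2.symm
  have hR0 : R ≠ 0 := by rintro rfl; simp at hR; exact hK0 hR.symm
  have key : ∀ g, Irreducible g → g ∣ K → ∀ a H1', ¬ g ∣ H1' → H1 = g ^ a * H1' → ∀ s, 1 ≤ s →
      a ≤ s → g ^ s ∣ H → g ∣ R := by
    intro g hg hgK a H1' hna hH1 s hs1 has hs
    have h := hM.pow_dvd hK hK0 hg hgK hs1 hs
    have h' : g ^ (a + 1) ∣ K := (pow_dvd_pow g (by omega)).trans h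
    rw [← hR, hH1, mul_assoc, pow_succ, mul_dvd_mul_iff_left (pow_ne_zero _ hg.ne_zero)] at h'
    exact (hg.prime.dvd_or_dvd h').resolve_left hna
  have hno : ∀ g, Irreducible g → g ∣ H2 → g ∣ K → False := by
    intro g hg hg2 hgK
    obtain ⟨a, H1', hna, hH1⟩ := WfDvdMonoid.max_power_factor h10 hg
    have hs : g ^ (a + 1) ∣ H := by
      rw [← hH2, pow_succ]
      exact mul_dvd_mul ⟨_, hH1⟩ hg2
    exact hg.not_isUnit (hrel hg2 (key g hg hgK a H1' hna hH1 (a + 1) (by omega) (by omega) hs))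
  have hfH1 : f ∣ H1 := by
    rw [← hH2] at hfH
    exact (hf.prime.dvd_or_dvd hfH).resolve_right fun h => hno f hf h hfK
  have hfR : f ∣ R := by
    obtain ⟨a, H1', hna, hH1⟩ := WfDvdMonoid.max_power_factor h10 hf
    have ha : 1 ≤ a := by
      rcases Nat.eq_zero_or_pos a with h | h
      · subst h; rw [pow_zero, one_mul] at hH1; exact absurd (hH1 ▸ hfH1) hna
      · exact h
    exact key f hf hfK a H1' hna hH1 a ha le_rfl (by
      rw [← hH2]; exact Dvd.dvd.mul_right ⟨_, hH1⟩ _)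
  have hfpos := tdeg_pos_of_irreducible hf
  have d1 := (tdeg_le_of_dvd h10 hfH1)
  have d2 := (tdeg_le_of_dvd hR0 hfR)
  have dH : H1.totalDegree + H2.totalDegree = D := by
    rw [← hdeg, ← hH2, totalDegree_mul_of_isDomain h10 h20]
  have dK : H1.totalDegree + R.totalDegree = d := by
    rw [← totalDegree_mul_of_isDomain h10 hR0, hR]
    exact (N.pencil.W_exact hK0 hK).1
  have hM2 : N.Mult H2 := hM.of_dvd ⟨H1, by rw [← hH2, mul_comm]⟩
  have hM1 : N.Mult H1 := hM.of_dvd ⟨H2, hH2.symm⟩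
  have i2 := ih H2.totalDegree (by omega) h20 hM2 rfl
  have i1 := kappa_of_lt (hM1.vertical h10) (by omega)
  have hrelK : IsRelPrime H2 K := by
    apply WfDvdMonoid.isRelPrime_of_no_irreducible_factors
    · exact fun h => h20 h.1
    · exact fun z hz h h2 => hno z hz h h2
  -- equality in Bézout's theorem for `H2` and the factor `H1` of `K`
  have b1 := bezout h10 (hrelK.of_dvd_right ⟨R, hR.symm⟩) N.X
  have b2 := bezout hR0 hrel N.X
  have b3 := (hM2.vertical h20).2
  have b4 : ∑ p ∈ N.X, N.n p * ord p H2
      = ∑ p ∈ N.X, ord p H2 * ord p H1 + ∑ p ∈ N.X, ord p H2 * ord p R := by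
    rw [← Finset.sum_add_distrib]
    refine Finset.sum_congr rfl fun p hp => ?_
    rw [← N.ord_of_mem_W hK hK0 hp, ← hR, ord_mul h10 hR0]; ring
  have b5 : d * H2.totalDegree = H2.totalDegree * H1.totalDegree + H2.totalDegree * R.totalDegree := by
    rw [← mul_add, dK, mul_comm]
  have b6 : H2.totalDegree * H1.totalDegree ≤ ∑ p ∈ N.X, ord p H2 * ord p H1 := by omega
  have e : ∑ p ∈ N.X, (ord p H ^ 2 + ord p H) = ∑ p ∈ N.X, (ord p H1 ^ 2 + ord p H1)
      + ∑ p ∈ N.X, (ord p H2 ^ 2 + ord p H2) + 2 * ∑ p ∈ N.X, ord p H2 * ord p H1 := by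
    rw [Finset.mul_sum, ← Finset.sum_add_distrib, ← Finset.sum_add_distrib]
    refine Finset.sum_congr rfl fun p hp => ?_
    rw [← hH2, ord_mul h10 h20]; ring
  rw [e, ← dH]
  nlinarith

end Net

end

/-! ### The fixed divisor of the `1`-form -/

lemma wr_comb (i : Fin 2) (F G : Poly) (s t s' t' : ℂ) :
    wr i (C s * F + C t * G) (C s' * F + C t' * G) = C (s * t' - t * s') * wr i F G := by
  simp [wr]; ring

lemma pow_dvd_pderiv {f F : Poly} {s : ℕ} (h : f ^ (s + 1) ∣ F) (i : Fin 2) : f ^ s ∣ pderiv i F := by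
  obtain ⟨u, rfl⟩ := h
  rw [Derivation.leibniz, Derivation.leibniz_pow]
  simp only [smul_eq_mul, Nat.add_sub_cancel, nsmul_eq_mul]
  refine dvd_add ((pow_dvd_pow f (by omega)).mul_right _) ?_
  exact ((Dvd.intro _ rfl).mul_left _).mul_left _

lemma pow_dvd_wr {f F : Poly} {s : ℕ} (h : f ^ (s + 1) ∣ F) (i : Fin 2) (G : Poly) :
    f ^ s ∣ wr i F G :=
  dvd_sub (((pow_dvd_pow f (by omega)).trans h).mul_right _) ((pow_dvd_pderiv h i).mul_left _)

lemma isUnit_C {c : ℂ} (hc : c ≠ 0) : IsUnit (C c : Poly) := (IsUnit.mk0 _ hc).map C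

/-- A common `s`-fold factor of the coefficients of `K' dK - K dK'` which divides `K` but not `K'` has
multiplicity at least `s + 1` in `K`. -/
lemma pow_succ_dvd_of_wr {f K K' : Poly} (hf : Irreducible f) (hK : K ≠ 0) (h1 : f ∣ K)
    (h2 : ¬ f ∣ K') {s : ℕ} (h : ∀ i, f ^ s ∣ wr i K' K) : f ^ (s + 1) ∣ K := by
  obtain ⟨r, R, hR, rfl⟩ := WfDvdMonoid.max_power_factor hK hf
  by_contra hlt
  have hrs : r ≤ s := by
    by_contra h'
    exact hlt ((pow_dvd_pow f (by omega)).mul_right _)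
  have hr : r ≠ 0 := by
    rintro rfl
    rw [pow_zero, one_mul] at h1
    exact hR h1
  obtain ⟨r, rfl⟩ := Nat.exists_eq_succ_of_ne_zero hr
  refine hf.not_isUnit (isUnit_of_dvd_pderiv hf.ne_zero fun i => ?_)
  have h3 := (pow_dvd_pow f hrs).trans (h i)
  have e : wr i K' (f ^ (r + 1) * R) = f ^ r * (((r : Poly) + 1) * (K' * (R * pderiv i f)))
      + f ^ (r + 1) * (K' * pderiv i R - R * pderiv i K') := by
    simp [wr, Derivation.leibniz, Derivation.leibniz_pow]; ring
  rw [e, Nat.succ_eq_add_one] at h3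
  have h4 := (dvd_add_left (Dvd.intro _ rfl)).1 h3
  rw [pow_succ, mul_dvd_mul_iff_left (pow_ne_zero _ hf.ne_zero)] at h4
  have hu : IsUnit ((r : Poly) + 1) := by
    have : ((r : Poly) + 1) = C ((r : ℂ) + 1) := by simp
    rw [this]
    exact isUnit_C (by exact_mod_cast Nat.succ_ne_zero r)
  rw [hu.dvd_mul_left] at h4
  exact (hf.prime.dvd_or_dvd ((hf.prime.dvd_or_dvd h4).resolve_left h2)).resolve_left hR

section

open scoped Classical

namespace Net

variable {ι : Type*} [Fintype ι] {k d : ℕ} (N : Net ι k d)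

/-- A component of the fixed divisor of the `1`-form is a multiple component of a member. -/
lemma exists_mult {c c' : Fin k} (hc : c ≠ c') {f : Poly} (hf : Irreducible f) {s : ℕ} (hs : 1 ≤ s)
    (h : ∀ i, f ^ s ∣ wr i (N.F c) (N.F c')) :
    ∃ K ∈ W N.X N.n d d, K ≠ 0 ∧ f ^ (s + 1) ∣ K := by
  obtain ⟨a, b, hab, hd⟩ := exists_dvd_of_dvd_wr hf fun i => (dvd_pow_self f (by omega)).trans (h i)
  have hmem := Pencil.comb_mem (N.F_mem_W c) (N.F_mem_W c') a b
  have hne := N.pencil.comb_ne_zero N.d_pos (N.F_mem_W c) (N.F_mem_W c') (N.F_relPrime hc) hab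
  refine ⟨_, hmem, hne, ?_⟩
  rcases hab with ha | hb
  · refine pow_succ_dvd_of_wr hf hne hd (K' := N.F c') ?_ fun i => ?_
    · intro h'
      refine N.not_dvd_both hf hc ?_ h'
      have := (dvd_add_left (h'.mul_left (C b))).1 hd
      exact (isUnit_C ha).dvd_mul_left.1 this
    · have := wr_comb i (N.F c) (N.F c') 0 1 a b
      simp only [C_0, zero_mul, zero_add, C_1, one_mul] at this
      rw [this]
      exact (h i).mul_left _
  · refine pow_succ_dvd_of_wr hf hne hd (K' := N.F c) ?_ fun i => ?_
    · intro h'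
      refine N.not_dvd_both hf hc h' ?_
      have := (dvd_add_right (h'.mul_left (C a))).1 hd
      exact (isUnit_C hb).dvd_mul_left.1 this
    · have := wr_comb i (N.F c) (N.F c') 1 0 a b
      simp only [C_0, zero_mul, add_zero, C_1, one_mul] at this
      rw [this]
      exact (h i).mul_left _

lemma pow_dvd_F (i : ι) : N.line i ^ N.m i ∣ N.F (N.cls i) :=
  Finset.dvd_prod_of_mem (fun i => N.line i ^ N.m i) (by simp)

/-- All pairs of classes determine the same `1`-form up to constants. -/
lemma exists_wr_eq {c c' : Fin k} (hc : c ≠ c') (e : Fin k) :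
    ∃ K ∈ W N.X N.n d d, K ≠ 0 ∧ ∃ u : ℂ, u ≠ 0 ∧
      ∀ i, wr i (N.F e) K = C u * wr i (N.F c) (N.F c') := by
  obtain ⟨s, t, hst⟩ := N.mem_span hc (N.F_mem_W e)
  by_cases hs : s = 0
  · have ht : t ≠ 0 := by
      rintro rfl
      apply N.F_ne_zero e
      rw [hst, hs]; simp
    refine ⟨N.F c, N.F_mem_W c, N.F_ne_zero c, -t, neg_ne_zero.2 ht, fun i => ?_⟩
    have := wr_comb i (N.F c) (N.F c') s t 1 0
    simp only [C_0, zero_mul, add_zero, C_1, one_mul, mul_zero, mul_one, zero_sub] at this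
    rw [hst, this]
  · refine ⟨N.F c', N.F_mem_W c', N.F_ne_zero c', s, hs, fun i => ?_⟩
    have := wr_comb i (N.F c) (N.F c') s t 0 1
    simp only [C_0, zero_mul, zero_add, C_1, one_mul, mul_zero, mul_one, sub_zero] at this
    rw [hst, this]

/-- The part of the fixed divisor of `F dG - G dF` carried by the lines of the net. -/
noncomputable def Q : Poly := ∏ i, N.line i ^ (N.m i - 1)

lemma Q_ne_zero : N.Q ≠ 0 := Finset.prod_ne_zero_iff.2 fun i _ => pow_ne_zero _ (N.line_ne_zero i)

lemma tdeg_Q : N.Q.totalDegree + Fintype.card ι = k * d := by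
  rw [Q, tdeg_prod _ _ fun i _ => pow_ne_zero _ (N.line_ne_zero i)]
  have h1 : ∀ i, (N.line i ^ (N.m i - 1)).totalDegree + 1 = N.m i := by
    intro i
    have := N.m_pos i
    rw [tdeg_pow (N.line_ne_zero i), N.tdeg]; omega
  have h2 : ∑ i, (N.line i ^ (N.m i - 1)).totalDegree + Fintype.card ι = ∑ i, N.m i := by
    rw [← Finset.sum_congr rfl fun i _ => h1 i, Finset.sum_add_distrib]; simp
  rw [h2, ← Finset.sum_fiberwise Finset.univ N.cls]
  rw [Finset.sum_congr rfl fun c _ => N.sum_m c]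
  simp

lemma ord_Q {p : Fin 2 → ℂ} : ord p N.Q + Finset.card {i | eval p (N.line i) = 0}
    = ∑ i with eval p (N.line i) = 0, N.m i := by
  rw [Q, ord_prod _ _ fun i _ => pow_ne_zero _ (N.line_ne_zero i), Finset.card_filter,
    ← Finset.sum_add_distrib, Finset.sum_filter]
  refine Finset.sum_congr rfl fun i _ => ?_
  have := N.m_pos i
  rw [ord_pow (N.line_ne_zero i), ord_line]
  split_ifs <;> omega

lemma sum_m_through {p : Fin 2 → ℂ} (hp : p ∈ N.X) :
    ∑ i with eval p (N.line i) = 0, N.m i = k * N.n p := by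
  rw [← Finset.sum_fiberwise _ N.cls]
  have : ∀ c, ∑ i ∈ Finset.filter (fun i => N.cls i = c) {i | eval p (N.line i) = 0}, N.m i
      = N.n p := by
    intro c
    rw [← N.sum_n p hp c, Finset.filter_filter]
    exact Finset.sum_congr (by ext; simp [and_comm]) fun _ _ => rfl
  rw [Finset.sum_congr rfl fun c _ => this c]
  simp

lemma Q_dvd {c c' : Fin k} (hc : c ≠ c') (l : Fin 2) : N.Q ∣ wr l (N.F c) (N.F c') := by
  refine Finset.prod_dvd_of_isRelPrime ?_ fun i _ => ?_
  · intro i _ j _ hij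
    refine IsRelPrime.pow ?_
    exact isRelPrime_of_not_dvd (N.irr i) fun h => hij (N.nondvd i j h)
  · obtain ⟨K, -, -, u, hu, he⟩ := N.exists_wr_eq hc (N.cls i)
    rw [← (isUnit_C hu).dvd_mul_left, ← he l]
    refine pow_dvd_wr ?_ l K
    rw [Nat.sub_add_cancel (N.m_pos i)]
    exact N.pow_dvd_F i

/-- The multiplicity of a line in its class is exactly `m`. -/
lemma not_pow_succ_dvd (i : ι) : ¬ N.line i ^ (N.m i + 1) ∣ N.F (N.cls i) := by
  intro h
  obtain ⟨q, -, hq, ho, -⟩ := N.exists_generic i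
  obtain ⟨u, hu⟩ := h
  have hu0 : u ≠ 0 := by rintro rfl; exact N.F_ne_zero _ (by simpa using hu)
  rw [hu, ord_mul (pow_ne_zero _ (N.line_ne_zero i)) hu0, ord_pow (N.line_ne_zero i), ord_line,
    if_pos hq] at ho
  omega

/-- The coefficients of `F dG - G dF` have greatest common divisor `Q * H`, where the
components of the residual part `H` are multiple components of members of the pencil other than
the lines of the net. -/
lemma exists_H {c c' : Fin k} (hc : c ≠ c') : ∃ H A B : Poly,
    wr 0 (N.F c) (N.F c') = N.Q * H * A ∧ wr 1 (N.F c) (N.F c') = N.Q * H * B ∧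
    IsRelPrime A B ∧ H ≠ 0 ∧ N.Mult H ∧ ∀ i, ¬ N.line i ∣ H := by
  have hne : ¬ (wr 0 (N.F c) (N.F c') = 0 ∧ wr 1 (N.F c) (N.F c') = 0) := by
    rintro ⟨h0, h1⟩
    obtain ⟨i, hi⟩ := N.surj c
    obtain ⟨K, hK, hK0, u, hu, he⟩ := N.exists_wr_eq hc (N.cls i)
    obtain ⟨K', hK', hK'0, hd⟩ := N.exists_mult hc (N.irr i) (s := N.m i) (N.m_pos i) fun l => by
      fin_cases l
      · change _ ∣ wr 0 _ _
        rw [h0]; simp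
      · change _ ∣ wr 1 _ _
        rw [h1]; simp
    obtain ⟨a, -, ha⟩ := N.proportional hK' hK'0 (N.F_mem_W _) (N.F_ne_zero (N.cls i)) (N.irr i)
      ((dvd_pow_self _ (by omega)).trans hd) (N.line_dvd_F i)
    exact N.not_pow_succ_dvd i (ha ▸ hd.mul_left _)
  obtain ⟨A1, hA1⟩ := N.Q_dvd hc 0
  obtain ⟨B1, hB1⟩ := N.Q_dvd hc 1
  obtain ⟨A, B, H, hrel, hA, hB, hH⟩ : ∃ A B H, IsRelPrime A B ∧ H * A = A1 ∧ H * B = B1 ∧ H ≠ 0 := by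
    by_cases h : A1 = 0
    · have h' : B1 ≠ 0 := by
        rintro rfl
        exact hne ⟨by rw [hA1, h, mul_zero], by rw [hB1, mul_zero]⟩
      obtain ⟨A, B, H, h1, h2, h3⟩ := UniqueFactorizationMonoid.exists_reduced_factors' A1 B1 h'
      exact ⟨A, B, H, h1, h2, h3, by rintro rfl; exact h' (by simpa using h3.symm)⟩
    · obtain ⟨A, B, H, h1, h2, h3⟩ := UniqueFactorizationMonoid.exists_reduced_factors A1 h B1
      exact ⟨A, B, H, h1, h2, h3, by rintro rfl; exact h (by simpa using h2.symm)⟩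
  have hA' : wr 0 (N.F c) (N.F c') = N.Q * H * A := by rw [hA1, ← hA, mul_assoc]
  have hB' : wr 1 (N.F c) (N.F c') = N.Q * H * B := by rw [hB1, ← hB, mul_assoc]
  have hQH : ∀ g, g ∣ N.Q * H → ∀ l, g ∣ wr l (N.F c) (N.F c') := by
    intro g hg l
    fin_cases l
    · change _ ∣ wr 0 _ _
      rw [hA']; exact hg.mul_right _
    · change _ ∣ wr 1 _ _
      rw [hB']; exact hg.mul_right _
  refine ⟨H, A, B, hA', hB', hrel, hH, ?_, ?_⟩
  · intro f hf s hs h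
    exact N.exists_mult hc hf hs (hQH _ (h.mul_left _))
  · intro i hi
    obtain ⟨K', hK', hK'0, hd⟩ := N.exists_mult hc (N.irr i) (s := N.m i) (N.m_pos i) (hQH _ (by
      rw [← Nat.sub_add_cancel (N.m_pos i), pow_succ]
      exact mul_dvd_mul (Finset.dvd_prod_of_mem (fun i => N.line i ^ (N.m i - 1)) (by simp)) hi))
    obtain ⟨a, -, ha⟩ := N.proportional hK' hK'0 (N.F_mem_W _) (N.F_ne_zero (N.cls i)) (N.irr i)
      ((dvd_pow_self _ (by omega)).trans hd) (N.line_dvd_F i)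
    exact N.not_pow_succ_dvd i (ha ▸ hd.mul_left _)

/-- A vertical curve containing no line of the net meets each line in base points only. -/
lemma sum_ord_line {H : Poly} (hH : Vertical N.X N.n d H) (hl : ∀ i, ¬ N.line i ∣ H) (i : ι) :
    ∑ p ∈ N.X with eval p (N.line i) = 0, ord p H = H.totalDegree := by
  have hle : ∀ j, ∑ p ∈ N.X with eval p (N.line j) = 0, ord p H ≤ H.totalDegree := by
    intro j
    have h := bezout hH.1 (isRelPrime_of_not_dvd (N.irr j) (hl j)) N.X
    rw [N.tdeg, one_mul] at h
    refine le_trans (le_of_eq ?_) h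
    rw [Finset.sum_filter]
    refine Finset.sum_congr rfl fun p _ => ?_
    rw [ord_line]; split_ifs <;> simp
  have hsum : ∑ j with N.cls j = N.cls i, N.m j * ∑ p ∈ N.X with eval p (N.line j) = 0, ord p H
      = ∑ j with N.cls j = N.cls i, N.m j * H.totalDegree := by
    rw [← Finset.sum_mul, N.sum_m, ← hH.2]
    have : ∀ p ∈ N.X, N.n p * ord p H = ∑ j with N.cls j = N.cls i,
        if eval p (N.line j) = 0 then N.m j * ord p H else 0 := by
      intro p hp
      rw [← N.sum_n p hp (N.cls i), Finset.sum_mul, ← Finset.filter_filter, Finset.sum_filter]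
    rw [Finset.sum_congr rfl this, Finset.sum_comm]
    refine Finset.sum_congr rfl fun j _ => ?_
    rw [Finset.mul_sum, Finset.sum_filter]
  have h1 := (Finset.sum_eq_sum_iff_of_le (s := Finset.univ.filter fun j => N.cls j = N.cls i)
    (fun j _ => Nat.mul_le_mul_left (N.m j) (hle j))).1 hsum i (by simp)
  exact Nat.eq_of_mul_eq_mul_left (N.m_pos i) h1

lemma eval_ne_zero_of_line {H : Poly} (hH : Vertical N.X N.n d H) (hl : ∀ i, ¬ N.line i ∣ H) {i : ι}
    {q : Fin 2 → ℂ} (hq : q ∉ N.X) (hqi : eval q (N.line i) = 0) : eval q H ≠ 0 := by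
  have h := bezout hH.1 (isRelPrime_of_not_dvd (N.irr i) (hl i)) (insert q N.X)
  rw [N.tdeg, one_mul, Finset.sum_insert hq, ord_line, if_pos hqi, one_mul] at h
  have h2 := N.sum_ord_line hH hl i
  have h3 : ∑ p ∈ N.X, ord p (N.line i) * ord p H
      = ∑ p ∈ N.X with eval p (N.line i) = 0, ord p H := by
    rw [Finset.sum_filter]
    refine Finset.sum_congr rfl fun p _ => ?_
    rw [ord_line]; split_ifs <;> simp
  rw [← ord_eq_zero_iff hH.1]
  omega

/-! ### Incidence counts -/

/-- The number of lines through `p`. -/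
noncomputable def mu (p : Fin 2 → ℂ) : ℕ := Finset.card {i | eval p (N.line i) = 0}

lemma sum_mu_mul (w : (Fin 2 → ℂ) → ℕ) (D : ℕ)
    (h : ∀ i, ∑ p ∈ N.X with eval p (N.line i) = 0, w p = D) :
    ∑ p ∈ N.X, N.mu p * w p = Fintype.card ι * D := by
  have : ∑ i : ι, ∑ p ∈ N.X with eval p (N.line i) = 0, w p = Fintype.card ι * D := by
    rw [Finset.sum_congr rfl fun i _ => h i]; simp
  rw [← this]
  simp_rw [Finset.sum_filter]
  rw [Finset.sum_comm]
  refine Finset.sum_congr rfl fun p _ => ?_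
  rw [← Finset.sum_filter, Finset.sum_const, mu, smul_eq_mul]

/-- Two lines meet in exactly one point. -/
lemma sum_mu_sq : ∑ p ∈ N.X ∪ N.Xb, N.mu p ^ 2 + Fintype.card ι =
    ∑ p ∈ N.X ∪ N.Xb, N.mu p + Fintype.card ι ^ 2 := by
  have h1 : ∀ p, N.mu p ^ 2 = N.mu p + ∑ i : ι, ∑ j : ι,
      if (i ≠ j ∧ eval p (N.line i) = 0 ∧ eval p (N.line j) = 0) then 1 else 0 := by
    intro p
    have e : N.mu p = ∑ i : ι, if eval p (N.line i) = 0 then 1 else 0 := by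
      rw [mu, Finset.card_filter]
    have e2 : N.mu p = ∑ i : ι, ∑ j : ι, if (i = j ∧ eval p (N.line i) = 0) then 1 else 0 := by
      rw [e]
      refine Finset.sum_congr rfl fun i _ => ?_
      simp [ite_and]
    conv_rhs => rw [e2]
    rw [sq]; conv_lhs => rw [e]
    rw [Finset.sum_mul_sum, ← Finset.sum_add_distrib]
    refine Finset.sum_congr rfl fun i _ => ?_
    rw [← Finset.sum_add_distrib]
    refine Finset.sum_congr rfl fun j _ => ?_
    by_cases hij : i = j
    · subst hij; simp
    · by_cases h1 : eval p (N.line i) = 0 <;> by_cases h2 : eval p (N.line j) = 0 <;>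
        simp [hij, h1, h2]
  have h2 : ∀ i j : ι, ∑ p ∈ N.X ∪ N.Xb,
      (if (i ≠ j ∧ eval p (N.line i) = 0 ∧ eval p (N.line j) = 0) then 1 else 0)
      = if i ≠ j then 1 else 0 := by
    intro i j
    by_cases hij : i = j
    · simp [hij]
    · obtain ⟨p, hp, hpi, hpj⟩ := N.meet i j hij
      rw [Finset.sum_eq_single p]
      · simp [hij, hpi, hpj]
      · intro q _ hq
        rw [if_neg]
        rintro ⟨-, h3, h4⟩
        exact hq (N.unique hij h3 h4 hpi hpj)
      · intro h; exact absurd (Finset.mem_union.2 hp) h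
  have h3 : ∑ p ∈ N.X ∪ N.Xb, N.mu p ^ 2 = ∑ p ∈ N.X ∪ N.Xb, N.mu p +
      ∑ i : ι, ∑ j : ι, if i ≠ j then 1 else 0 := by
    rw [Finset.sum_congr rfl fun p _ => h1 p, Finset.sum_add_distrib, Finset.sum_comm]
    congr 1
    refine Finset.sum_congr rfl fun i _ => ?_
    rw [Finset.sum_comm]
    exact Finset.sum_congr rfl fun j _ => h2 i j
  have h4 : ∑ i : ι, ∑ j : ι, (if i ≠ j then 1 else 0) + Fintype.card ι = Fintype.card ι ^ 2 := by
    have : ∀ i : ι, ∑ j : ι, (if i ≠ j then 1 else 0) + 1 = Fintype.card ι := by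
      intro i
      have e : ∑ j : ι, ((if i ≠ j then 1 else 0) + (if i = j then 1 else 0)) = Fintype.card ι := by
        rw [Finset.sum_congr rfl (g := fun _ => 1)]
        · simp
        · intro j _; by_cases h : i = j <;> simp [h]
      rw [Finset.sum_add_distrib] at e
      simpa using e
    have e2 : ∑ i : ι, (∑ j : ι, (if i ≠ j then 1 else 0) + 1) = Fintype.card ι ^ 2 := by
      rw [Finset.sum_congr rfl fun i _ => this i]; simp [sq]
    rw [Finset.sum_add_distrib] at e2
    simpa using e2
  omega

end Net

end

/-! ### Orders and degrees of the `1`-form -/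

lemma coeff_euler (f : Poly) (s : Fin 2 →₀ ℕ) :
    coeff s (X 0 * pderiv 0 f + X 1 * pderiv 1 f) = ((Finsupp.degree s : ℕ) : ℂ) * coeff s f := by
  have h3 : ∀ s : Fin 2 →₀ ℕ, Finsupp.degree s = s 0 + s 1 := by
    intro s; rw [Finsupp.degree_eq_sum]; simp
  induction f using MvPolynomial.induction_on' with
  | monomial u a =>
    rw [X_mul_pderiv_monomial, X_mul_pderiv_monomial, ← add_smul, ← h3, coeff_smul, coeff_monomial]
    split_ifs with h
    · rw [h]; simp
    · simp
  | add p q hp hq =>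
    have e : X 0 * pderiv 0 (p + q) + X 1 * pderiv 1 (p + q)
        = (X 0 * pderiv 0 p + X 1 * pderiv 1 p) + (X 0 * pderiv 0 q + X 1 * pderiv 1 q) := by
      rw [map_add, map_add]; ring
    rw [e, coeff_add, hp, hq, coeff_add, mul_add]

/-- Euler's relation cancels the top degree part. -/
lemma tdeg_euler {f : Poly} {d : ℕ} (hf : f.totalDegree ≤ d) (hd : 0 < d) :
    (X 0 * pderiv 0 f + X 1 * pderiv 1 f - C (d : ℂ) * f).totalDegree ≤ d - 1 := by
  obtain ⟨e, rfl⟩ := Nat.exists_eq_succ_of_ne_zero hd.ne'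
  rw [Nat.succ_eq_add_one, Nat.add_sub_cancel, ← mem_degLT_succ, mem_degLT]
  rw [← mem_degLT_succ, mem_degLT] at hf
  intro s hs
  rw [coeff_sub, coeff_euler, coeff_C_mul]
  rcases eq_or_lt_of_le hs with h | h
  · rw [← h]; push_cast; ring
  · rw [hf s h]; simp

/-- Euler's relation cancels the lowest order part. -/
lemma euler_mem_vanish {f : Poly} {p : Fin 2 → ℂ} {n : ℕ} (hf : f ∈ vanish p n) :
    (X 0 - C (p 0)) * pderiv 0 f + (X 1 - C (p 1)) * pderiv 1 f - C (n : ℂ) * f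
      ∈ vanish p (n + 1) := by
  rw [mem_vanish'] at hf ⊢
  intro s hs
  have e : tr p ((X 0 - C (p 0)) * pderiv 0 f + (X 1 - C (p 1)) * pderiv 1 f - C (n : ℂ) * f)
      = X 0 * pderiv 0 (tr p f) + X 1 * pderiv 1 (tr p f) - C (n : ℂ) * tr p f := by
    have hC : ∀ c : ℂ, tr p (C c) = C c := fun c => (tr p).commutes c
    simp only [map_sub, map_add, map_mul, tr_X, hC, pderiv_tr]
    ring
  rw [e, coeff_sub, coeff_euler, coeff_C_mul]
  rcases Nat.lt_or_ge (Finsupp.degree s) n with h | h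
  · rw [hf s h]; simp
  · rw [show Finsupp.degree s = n by omega]; ring

lemma wr_mem_vanish {F G : Poly} {p : Fin 2 → ℂ} {a b : ℕ} (hF : F ∈ vanish p (a + 1))
    (hG : G ∈ vanish p (b + 1)) (i : Fin 2) : wr i F G ∈ vanish p (a + b + 1) := by
  refine Ideal.sub_mem _ ?_ ?_
  · have := mul_mem_vanish hF (pderiv_mem_vanish i hG)
    rwa [show a + 1 + b = a + b + 1 by ring] at this
  · have := mul_mem_vanish hG (pderiv_mem_vanish i hF)
    rwa [show b + 1 + a = a + b + 1 by ring] at this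

lemma wr_mem_vanish' {F : Poly} (G : Poly) {p : Fin 2 → ℂ} {a : ℕ} (hF : F ∈ vanish p (a + 1))
    (i : Fin 2) : wr i F G ∈ vanish p a :=
  Ideal.sub_mem _ (Ideal.mul_mem_right _ _ (vanish_anti (by omega) hF))
    (Ideal.mul_mem_left _ _ (pderiv_mem_vanish i hF))

lemma wr_radial (F G U V : Poly) (a : ℂ) : U * wr 0 F G + V * wr 1 F G
    = F * (U * pderiv 0 G + V * pderiv 1 G - C a * G)
      - G * (U * pderiv 0 F + V * pderiv 1 F - C a * F) := by
  simp only [wr]; ring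

lemma wr_radial_mem {F G : Poly} {p : Fin 2 → ℂ} {n : ℕ} (hF : F ∈ vanish p n)
    (hG : G ∈ vanish p n) :
    (X 0 - C (p 0)) * wr 0 F G + (X 1 - C (p 1)) * wr 1 F G ∈ vanish p (2 * n + 1) := by
  rw [wr_radial F G _ _ (n : ℂ), two_mul, add_assoc]
  exact Ideal.sub_mem _ (mul_mem_vanish hF (euler_mem_vanish hG))
    (mul_mem_vanish hG (euler_mem_vanish hF))

lemma tdeg_wr {F G : Poly} {d : ℕ} (hF : F.totalDegree ≤ d) (hG : G.totalDegree ≤ d) (hd : 0 < d)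
    (i : Fin 2) : (wr i F G).totalDegree ≤ 2 * d - 1 := by
  refine (totalDegree_sub _ _).trans (max_le ?_ ?_)
  · have := totalDegree_mul F (pderiv i G)
    have := totalDegree_pderiv_le i G
    omega
  · have := totalDegree_mul G (pderiv i F)
    have := totalDegree_pderiv_le i F
    omega

lemma tdeg_wr_radial {F G : Poly} {d : ℕ} (hF : F.totalDegree ≤ d) (hG : G.totalDegree ≤ d)
    (hd : 0 < d) : (X 0 * wr 0 F G + X 1 * wr 1 F G).totalDegree ≤ 2 * d - 1 := by
  rw [wr_radial F G _ _ (d : ℂ)]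
  refine (totalDegree_sub _ _).trans (max_le ?_ ?_)
  · refine (totalDegree_mul _ _).trans ?_
    have := tdeg_euler hG hd
    omega
  · refine (totalDegree_mul _ _).trans ?_
    have := tdeg_euler hF hd
    omega

lemma mem_vanish_of_mul {T f : Poly} (hT : T ≠ 0) {p : Fin 2 → ℂ} {a b : ℕ}
    (h : T * f ∈ vanish p a) (hb : b + ord p T ≤ a) : f ∈ vanish p b := by
  rcases eq_or_ne f 0 with rfl | hf
  · simp
  · rw [mem_vanish_iff (mul_ne_zero hT hf), ord_mul hT hf] at h
    rw [mem_vanish_iff hf]; omega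

lemma tdeg_of_mul {T f : Poly} (hT : T ≠ 0) {a b : ℕ}
    (h : (T * f).totalDegree ≤ a) (hb : a ≤ b + T.totalDegree) : f.totalDegree ≤ b := by
  rcases eq_or_ne f 0 with rfl | hf
  · simp
  · rw [totalDegree_mul_of_isDomain hT hf] at h
    omega

/-- Polynomials whose quotient has vanishing differential are proportional. -/
lemma proportional_of_wr {f g : Poly} (hf : f ≠ 0) (hg : g ≠ 0) (h : ∀ i, wr i f g = 0) :
    ∃ c : ℂ, g = C c * f := by
  obtain ⟨f', g', e, hrel, he, he'⟩ := UniqueFactorizationMonoid.exists_reduced_factors f hf g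
  have he0 : e ≠ 0 := by rintro rfl; exact hf (by simpa using he.symm)
  have hf0 : f' ≠ 0 := by rintro rfl; exact hf (by simpa using he.symm)
  have hg0 : g' ≠ 0 := by rintro rfl; exact hg (by simpa using he'.symm)
  have h' : ∀ i, f' * pderiv i g' = g' * pderiv i f' := by
    intro i
    have h1 := h i
    rw [← he, ← he', wr, Derivation.leibniz, Derivation.leibniz] at h1
    simp only [smul_eq_mul] at h1
    have h2 : e ^ 2 * (f' * pderiv i g' - g' * pderiv i f') = 0 := by linear_combination h1
    exact sub_eq_zero.1 ((mul_eq_zero.1 h2).resolve_left (pow_ne_zero _ he0))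
  have uf : IsUnit f' := isUnit_of_dvd_pderiv hf0 fun i =>
    hrel.dvd_of_dvd_mul_left (Dvd.intro _ (h' i))
  have ug : IsUnit g' := isUnit_of_dvd_pderiv hg0 fun i =>
    hrel.symm.dvd_of_dvd_mul_left (Dvd.intro _ (h' i).symm)
  obtain ⟨a, ha⟩ : ∃ a : ℂ, f' = C a :=
    ⟨_, totalDegree_eq_zero_iff_eq_C.1 ((isUnit_iff_tdeg hf0).1 uf)⟩
  obtain ⟨b, hb⟩ : ∃ b : ℂ, g' = C b :=
    ⟨_, totalDegree_eq_zero_iff_eq_C.1 ((isUnit_iff_tdeg hg0).1 ug)⟩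
  have ha0 : a ≠ 0 := by rintro rfl; simp at ha; exact hf0 ha
  refine ⟨b / a, ?_⟩
  rw [← he, ← he', ha, hb]
  have : (C (b / a) * C a : Poly) = C b := by rw [← C_mul, div_mul_cancel₀ _ ha0]
  linear_combination (-e) * this

/-- If all combinations of `F` and `G` have order `n` at `p`, then `F dG - G dF` has order
`2 n - 1`. -/
lemma exists_wr_notMem {F G : Poly} {p : Fin 2 → ℂ} {n : ℕ} (hn : 0 < n) (hF : F ∈ vanish p n)
    (hF' : F ∉ vanish p (n + 1)) (hG : G ∈ vanish p n)
    (hG' : ∀ c : ℂ, G - C c * F ∉ vanish p (n + 1)) : ∃ i, wr i F G ∉ vanish p (2 * n) := by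
  by_contra! hc
  obtain ⟨r, rfl⟩ := Nat.exists_eq_succ_of_ne_zero hn.ne'
  rw [Nat.succ_eq_add_one] at *
  set f := homogeneousComponent (r + 1) (tr p F) with hfd
  set g := homogeneousComponent (r + 1) (tr p G) with hgd
  have hfh : f.IsHomogeneous (r + 1) := homogeneousComponent_isHomogeneous _ _
  have hgh : g.IsHomogeneous (r + 1) := homogeneousComponent_isHomogeneous _ _
  have hFf : F - tr (-p) f ∈ vanish p (r + 1 + 1) := by
    rw [mem_vanish, map_sub, tr_tr_neg]
    exact sub_homogeneousComponent_mem (mem_vanish.1 hF)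
  have hGg : G - tr (-p) g ∈ vanish p (r + 1 + 1) := by
    rw [mem_vanish, map_sub, tr_tr_neg]
    exact sub_homogeneousComponent_mem (mem_vanish.1 hG)
  have hfv : tr (-p) f ∈ vanish p (r + 1) := by
    have := Ideal.sub_mem _ hF (vanish_anti (Nat.le_succ _) hFf)
    simpa using this
  have hf0 : f ≠ 0 := by
    intro h; rw [h, map_zero, sub_zero] at hFf; exact hF' hFf
  have hg0 : g ≠ 0 := by
    intro h; rw [h, map_zero, sub_zero] at hGg
    refine hG' 0 ?_
    simpa using hGg
  have hw : ∀ i, wr i f g = 0 := by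
    intro i
    have h1 : wr i (tr (-p) f) (tr (-p) g) ∈ vanish p (2 * (r + 1)) := by
      have e : wr i (tr (-p) f) (tr (-p) g) = wr i F G - wr i (F - tr (-p) f) G
          - wr i (tr (-p) f) (G - tr (-p) g) := by
        simp only [wr, map_sub]; ring
      rw [e]
      refine Ideal.sub_mem _ (Ideal.sub_mem _ (hc i) ?_) ?_
      · have := wr_mem_vanish hFf hG i
        rwa [show r + 1 + r + 1 = 2 * (r + 1) by ring] at this
      · have := wr_mem_vanish hfv hGg i
        rwa [show r + (r + 1) + 1 = 2 * (r + 1) by ring] at this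
    have h2 : tr p (wr i (tr (-p) f) (tr (-p) g)) = wr i f g := by
      simp only [wr, map_sub, map_mul, ← pderiv_tr, tr_tr_neg]
    rw [mem_vanish', h2] at h1
    have h3 : (wr i f g).IsHomogeneous (r + 1 + r) := by
      refine IsHomogeneous.sub ?_ ?_
      · exact hfh.mul (by simpa using hgh.pderiv (i := i))
      · exact hgh.mul (by simpa using hfh.pderiv (i := i))
    ext s
    rw [coeff_zero]
    by_cases hs : Finsupp.degree s = r + 1 + r
    · exact h1 s (by omega)
    · exact h3.coeff_eq_zero hs
  obtain ⟨c, hcg⟩ := proportional_of_wr hf0 hg0 hw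
  refine hG' c ?_
  have : G - C c * F = (G - tr (-p) g) - C c * (F - tr (-p) f) := by
    rw [hcg, map_mul, show tr (-p) (C c) = C c from (tr (-p)).commutes c]; ring
  rw [this]
  exact Ideal.sub_mem _ hGg (Ideal.mul_mem_left _ _ hFf)

section

open scoped Classical

namespace Net

variable {ι : Type*} [Fintype ι] {k d : ℕ} (N : Net ι k d)

/-! ### The inequality in the affine plane -/

/-- At a base point the form `F dG - G dF` has order exactly `2 n - 1` and is dicritical; dividing
by `T` lowers the order by that of `T`. -/
lemma form_at_X {c c' : Fin k} (hc : c ≠ c') {T A B : Poly} (hT : T ≠ 0)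
    (hA : wr 0 (N.F c) (N.F c') = T * A) (hB : wr 1 (N.F c) (N.F c') = T * B)
    {p : Fin 2 → ℂ} (hp : p ∈ N.X) : ∃ ν, ν + ord p T + 1 = 2 * N.n p ∧
      A ∈ vanish p ν ∧ B ∈ vanish p ν ∧
      (MvPolynomial.X 0 - C (p 0)) * A + (MvPolynomial.X 1 - C (p 1)) * B ∈ vanish p (ν + 2) := by
  have hn := N.n_pos p hp
  have hF : ∀ e, N.F e ∈ vanish p (N.n p) := fun e =>
    (mem_vanish_iff (N.F_ne_zero e)).2 (N.ord_F hp e).ge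
  have hF' : ∀ s t : ℂ, s ≠ 0 ∨ t ≠ 0 →
      C s * N.F c + C t * N.F c' ∉ vanish p (N.n p + 1) := by
    intro s t hst h
    have h0 := N.pencil.comb_ne_zero N.d_pos (N.F_mem_W c) (N.F_mem_W c') (N.F_relPrime hc) hst
    have h1 := N.ord_of_mem_W (Pencil.comb_mem (N.F_mem_W c) (N.F_mem_W c') s t) h0 hp
    have h2 := (mem_vanish_iff h0).1 h
    omega
  have hwr : ∀ i, wr i (N.F c) (N.F c') ∈ vanish p (2 * N.n p - 1) := by
    intro i
    have := wr_mem_vanish (p := p) (a := N.n p - 1) (b := N.n p - 1) (F := N.F c) (G := N.F c')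
      (by rw [Nat.sub_add_cancel hn]; exact hF c) (by rw [Nat.sub_add_cancel hn]; exact hF c') i
    rwa [show N.n p - 1 + (N.n p - 1) + 1 = 2 * N.n p - 1 by omega] at this
  have hlt : ord p T < 2 * N.n p := by
    by_contra! h
    obtain ⟨i, hi⟩ := exists_wr_notMem hn (hF c)
      (by simpa using hF' 1 0 (Or.inl one_ne_zero)) (hF c')
      (fun s => by
        have := hF' (-s) 1 (Or.inr one_ne_zero)
        rwa [show C (-s) * N.F c + C 1 * N.F c' = N.F c' - C s * N.F c by
          rw [C_neg, C_1]; ring] at this)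
    have hTv : T ∈ vanish p (2 * N.n p) := (mem_vanish_iff hT).2 h
    fin_cases i
    · exact hi (by simpa [hA] using Ideal.mul_mem_right A _ hTv)
    · exact hi (by simpa [hB] using Ideal.mul_mem_right B _ hTv)
  refine ⟨2 * N.n p - 1 - ord p T, by omega, ?_, ?_, ?_⟩
  · exact mem_vanish_of_mul hT (hA ▸ hwr 0) (by omega)
  · exact mem_vanish_of_mul hT (hB ▸ hwr 1) (by omega)
  · refine mem_vanish_of_mul (a := 2 * N.n p + 1) hT ?_ (by omega)
    have := wr_radial_mem (hF c) (hF c')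
    rw [hA, hB] at this
    convert this using 1
    ring

/-- At an intersection point outside the base locus all lines lie in one class, and the form with
the factor `Q H` removed vanishes to order `mu p - 1`. -/
lemma form_at_Xb {c c' : Fin k} (hc : c ≠ c') {H A B : Poly} (hH : Vertical N.X N.n d H)
    (hl : ∀ i, ¬ N.line i ∣ H)
    (hA : wr 0 (N.F c) (N.F c') = N.Q * H * A) (hB : wr 1 (N.F c) (N.F c') = N.Q * H * B)
    {p : Fin 2 → ℂ} (hp : p ∈ N.Xb) : 0 < N.mu p ∧
      A ∈ vanish p (N.mu p - 1) ∧ B ∈ vanish p (N.mu p - 1) := by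
  have hpX : p ∉ N.X := fun h => Finset.disjoint_left.1 N.disj h hp
  have hmu : 2 ≤ N.mu p := N.card_Xb p hp
  obtain ⟨i, hi⟩ : ∃ i, eval p (N.line i) = 0 := by
    have : 0 < Finset.card {i | eval p (N.line i) = 0} := by
      have := N.card_Xb p hp; omega
    obtain ⟨i, hi⟩ := Finset.card_pos.1 this
    exact ⟨i, by simpa using hi⟩
  have hcls : ∀ j, eval p (N.line j) = 0 → N.cls j = N.cls i := by
    intro j hj
    by_contra h
    exact hpX (N.mem_X_of_cross h hj hi)
  set σ := ∑ j with eval p (N.line j) = 0, N.m j with hσ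
  have hordF : ord p (N.F (N.cls i)) = σ := by
    rw [N.ord_F', hσ]
    refine Finset.sum_congr ?_ fun _ _ => rfl
    ext j
    simp only [Finset.mem_filter, Finset.mem_univ, true_and]
    exact ⟨fun h => h.2, fun h => ⟨hcls j h, h⟩⟩
  have hQ : ord p N.Q + N.mu p = σ := N.ord_Q
  have hH0 : ord p H = 0 := (ord_eq_zero_iff hH.1).2 (N.eval_ne_zero_of_line hH hl hpX hi)
  have hT : N.Q * H ≠ 0 := mul_ne_zero N.Q_ne_zero hH.1
  have hordT : ord p (N.Q * H) = ord p N.Q := by rw [ord_mul N.Q_ne_zero hH.1, hH0, add_zero]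
  obtain ⟨K, -, -, u, hu, hK⟩ := N.exists_wr_eq hc (N.cls i)
  have hwr : ∀ l, wr l (N.F c) (N.F c') ∈ vanish p (σ - 1) := by
    intro l
    have h1 : N.F (N.cls i) ∈ vanish p (σ - 1 + 1) := by
      rw [Nat.sub_add_cancel (by omega)]
      exact (mem_vanish_iff (N.F_ne_zero _)).2 hordF.ge
    have h2 := wr_mem_vanish' K h1 l
    rw [hK l] at h2
    have h3 := Ideal.mul_mem_left _ (C u⁻¹) h2
    rwa [← mul_assoc, ← C_mul, inv_mul_cancel₀ hu, C_1, one_mul] at h3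
  refine ⟨by omega, ?_, ?_⟩
  · exact mem_vanish_of_mul hT (hA ▸ hwr 0) (by omega)
  · exact mem_vanish_of_mul hT (hB ▸ hwr 1) (by omega)

/-- The inequality obtained by counting the zeros of the reduced form, before simplification. -/
lemma count : ∃ (H : Poly) (a : ℕ) (ν : (Fin 2 → ℂ) → ℕ), H ≠ 0 ∧ N.Mult H ∧
    (∀ i, ¬ N.line i ∣ H) ∧
    a + 1 + k * d + H.totalDegree = 2 * d + Fintype.card ι ∧
    (∀ p ∈ N.X, ν p + 1 + k * N.n p + ord p H = 2 * N.n p + N.mu p) ∧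
    (∑ p ∈ N.X, (ν p ^ 2 + ν p) + ∑ p ∈ N.Xb, (N.mu p - 1) ^ 2) + a ≤
      N.X.card + (a ^ 2 + 1) := by
  obtain ⟨i₀, hi₀⟩ := N.surj ⟨0, by have := N.hk; omega⟩
  obtain ⟨c', hc⟩ := N.exists_ne_cls (N.cls i₀)
  obtain ⟨H, A, B, hA, hB, hrel, hH, hM, hl⟩ := N.exists_H hc
  have hV := hM.vertical hH
  have hT : N.Q * H ≠ 0 := mul_ne_zero N.Q_ne_zero hH
  have hdT : (N.Q * H).totalDegree = N.Q.totalDegree + H.totalDegree :=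
    totalDegree_mul_of_isDomain N.Q_ne_zero hH
  have hdQ := N.tdeg_Q
  have hd := N.d_pos
  have hwd := fun l => tdeg_wr (N.tdeg_F c').le (N.tdeg_F (N.cls i₀)).le hd l
  have hle : (N.Q * H).totalDegree ≤ 2 * d - 1 := by
    rcases eq_or_ne A 0 with hA0 | hA0
    · have hB0 : B ≠ 0 := by
        rintro rfl
        rw [hA0] at hrel
        exact not_isUnit_zero (hrel (dvd_refl 0) (dvd_refl 0))
      have := hwd 1
      rw [hB, totalDegree_mul_of_isDomain hT hB0] at this
      omega
    · have := hwd 0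
      rw [hA, totalDegree_mul_of_isDomain hT hA0] at this
      omega
  set a := 2 * d - 1 - (N.Q * H).totalDegree with ha
  have hAa : A.totalDegree ≤ a := tdeg_of_mul hT (hA ▸ hwd 0) (by omega)
  have hBa : B.totalDegree ≤ a := tdeg_of_mul hT (hB ▸ hwd 1) (by omega)
  have hRa : (MvPolynomial.X 0 * A + MvPolynomial.X 1 * B).totalDegree ≤ a := by
    refine tdeg_of_mul (a := 2 * d - 1) hT ?_ (by omega)
    have := tdeg_wr_radial (N.tdeg_F c').le (N.tdeg_F (N.cls i₀)).le hd
    rw [hA, hB] at this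
    convert this using 2
    ring
  obtain ⟨hfin, hcol⟩ := foliation_colength hrel hAa hBa hRa
  have hX := fun p (hp : p ∈ N.X) => N.form_at_X hc hT hA hB hp
  choose! ν hν using hX
  refine ⟨H, a, ν, hH, hM, hl, by omega, ?_, ?_⟩
  · intro p hp
    have h1 := (hν p hp).1
    rw [ord_mul N.Q_ne_zero hH] at h1
    have h2 : ord p N.Q + N.mu p = k * N.n p := N.ord_Q.trans (N.sum_m_through hp)
    omega
  · have hdisj := fun p (hp : p ∈ N.Xb) (h : p ∈ N.X) => Finset.disjoint_left.1 N.disj h hp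
    have key := sum_local_le (Ideal.span {A, B}) (N.X ∪ N.Xb)
      (fun p => if p ∈ N.X then 2 * ν p + 1 else (N.mu p - 1) + (N.mu p - 1))
      (fun p => if p ∈ N.X then ν p ^ 2 + ν p - 1 else (N.mu p - 1) * (N.mu p - 1)) (by
        intro p hp
        by_cases hpX : p ∈ N.X
        · rw [if_pos hpX, if_pos hpX]
          have := local_dicritical (hν p hpX).2.1 (hν p hpX).2.2.1 (hν p hpX).2.2.2
          omega
        · rw [if_neg hpX, if_neg hpX]
          have hpb : p ∈ N.Xb := (Finset.mem_union.1 hp).resolve_left hpX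
          obtain ⟨-, h1, h2⟩ := N.form_at_Xb hc hV hl hA hB hpb
          exact local_mul h1 h2)
    rw [Finset.sum_union N.disj, Finset.sum_congr rfl (fun p hp => if_pos hp),
      Finset.sum_congr (s₁ := N.Xb) rfl (fun p hp => if_neg (hdisj p hp))] at key
    have h1 : ∑ p ∈ N.X, (ν p ^ 2 + ν p) ≤ ∑ p ∈ N.X, (ν p ^ 2 + ν p - 1) + N.X.card := by
      rw [Finset.card_eq_sum_ones, ← Finset.sum_add_distrib]
      exact Finset.sum_le_sum fun p _ => by omega
    simp only [← sq] at key
    omega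

/-- The Riemann–Hurwitz type inequality for affine multinets. -/
theorem inequality : 3 + (N.X.card : ℤ) ≥
    (2 - (k : ℤ)) * (3 * (d : ℤ) - (d : ℤ) ^ 2 + ∑ p ∈ N.X, ((N.n p : ℤ) ^ 2 - (N.n p : ℤ)))
      + 2 * (Fintype.card ι : ℤ) - ∑ p ∈ N.Xb, ((N.mu p : ℤ) - 1) := by
  obtain ⟨H, a, ν, hH, hM, hl, ha, hν, hmain⟩ := N.count
  have hV := hM.vertical hH
  have hkap := N.kappa hH hM
  have e1 := N.sum_sq
  have e2 := N.sum_mu_mul N.n d N.sum_line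
  have e3 := N.sum_mu_mul (fun p => ord p H) H.totalDegree (N.sum_ord_line hV hl)
  have e4 := hV.2
  have e5 := N.sum_mu_sq
  rw [Finset.sum_union N.disj, Finset.sum_union N.disj] at e5
  have hb : ∀ p ∈ N.Xb, (((N.mu p - 1 : ℕ) ^ 2 : ℕ) : ℤ) = (N.mu p : ℤ) ^ 2 - 2 * N.mu p + 1 := by
    intro p hp
    have : 2 ≤ N.mu p := N.card_Xb p hp
    push_cast [Nat.cast_sub (show 1 ≤ N.mu p by omega)]
    ring
  have hx : ∀ p ∈ N.X, (((ν p) ^ 2 + ν p : ℕ) : ℤ) =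
      (N.mu p : ℤ) ^ 2 - N.mu p + ((k : ℤ) - 2) ^ 2 * (N.n p : ℤ) ^ 2 + (k - 2) * N.n p
      + ((ord p H : ℤ) ^ 2 + ord p H) - 2 * (k - 2) * (N.mu p * N.n p)
      - 2 * (N.mu p * ord p H) + 2 * (k - 2) * (N.n p * ord p H) := by
    intro p hp
    have h : (ν p : ℤ) = N.mu p - 1 - (k - 2) * N.n p - ord p H := by
      have := hν p hp
      zify at this
      linarith
    push_cast
    rw [h]; ring
  have haZ : (a : ℤ) = Fintype.card ι - 1 - (k - 2) * d - H.totalDegree := by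
    zify at ha
    linarith
  zify at hmain hkap e1 e2 e3 e4 e5
  have hx' := Finset.sum_congr rfl hx
  have hb' := Finset.sum_congr rfl hb
  simp only [Finset.sum_add_distrib, Finset.sum_sub_distrib, ← Finset.mul_sum] at hx' hb' hkap hmain ⊢
  push_cast at hx' hb'
  simp only [Finset.sum_add_distrib, Finset.sum_const, nsmul_eq_mul, mul_one] at hx' hb' hkap hmain ⊢
  rw [e1, e2, e3, e4] at hx'
  rw [e1]
  rw [haZ] at hmain
  linarith

end Net

end

/-! ### Choice of an affine chart -/

/-- Finitely many points of the projective plane avoid a common line, which becomes the line at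
infinity. -/
lemma exists_basis (S : Finset (Fin 3 → ℂ)) (hS : ∀ v ∈ S, v ≠ 0) :
    ∃ b : Module.Basis (Fin 3) ℂ (Fin 3 → ℂ), ∀ v ∈ S, b.coord 0 v ≠ 0 := by
  classical
  obtain ⟨l, hl⟩ : ∃ l : Module.Dual ℂ (Fin 3 → ℂ), ∀ v ∈ insert (fun _ => 1) S, l v ≠ 0 := by
    have := Module.exists_dual_forall_apply_ne_zero (K := ℂ)
      (v := fun v : (insert (fun _ => 1) S : Finset (Fin 3 → ℂ)) => v.1) (by
        rintro ⟨v, hv⟩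
        rcases Finset.mem_insert.1 hv with h | h
        · intro h0
          have h1 := congrFun (h.symm.trans h0) 0
          simp at h1
        · exact hS v h)
    obtain ⟨l, hl⟩ := this
    exact ⟨l, fun v hv => hl ⟨v, hv⟩⟩
  set u : Fin 3 → ℂ := fun _ => 1 with hu
  have hlu : l u ≠ 0 := hl u (Finset.mem_insert_self _ _)
  have hker : Module.finrank ℂ (LinearMap.ker l) = 2 := by
    have h1 := LinearMap.finrank_range_add_finrank_ker l
    have h2 : LinearMap.range l = ⊤ := LinearMap.range_eq_top.2
      (LinearMap.surjective (fun h => hlu (by rw [h]; rfl)))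
    rw [h2, finrank_top, Module.finrank_self, Module.finrank_fin_fun] at h1
    omega
  let e := Module.finBasisOfFinrankEq ℂ (LinearMap.ker l) hker
  have hli : LinearIndependent ℂ (Fin.cons u (fun i => (e i : Fin 3 → ℂ)) : Fin 3 → (Fin 3 → ℂ)) := by
    refine LinearIndependent.finCons ?_ ?_
    · exact e.linearIndependent.map' (LinearMap.ker l).subtype (Submodule.ker_subtype _)
    · intro h
      have h1 : Submodule.span ℂ (Set.range fun i => (e i : Fin 3 → ℂ)) ≤ LinearMap.ker l :=
        Submodule.span_le.2 (by rintro _ ⟨i, rfl⟩; exact (e i).2)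
      exact hlu (h1 h)
  let b := basisOfLinearIndependentOfCardEqFinrank hli (by simp)
  have hb : ∀ v, l v = l u * b.coord 0 v := by
    intro v
    have h : l = l u • b.coord 0 := by
      refine b.ext fun i => ?_
      refine Fin.cases ?_ (fun j => ?_) i
      · have : l (b 0) = l u := by simp [b]
        simp [this]
      · have : l (b j.succ) = 0 := by
          simp [b]
        rw [this]
        simp [Module.Basis.coord_apply, Fin.succ_ne_zero]
    conv_lhs => rw [h]
    simp
  refine ⟨b, fun v hv h => hl v (Finset.mem_insert_of_mem hv) ?_⟩
  rw [hb, h, mul_zero]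

/-- The vector with affine coordinates `q`. -/
noncomputable def aff (b : Module.Basis (Fin 3) ℂ (Fin 3 → ℂ)) (q : Fin 2 → ℂ) : Fin 3 → ℂ :=
  b 0 + q 0 • b 1 + q 1 • b 2

/-- The point of the projective plane with affine coordinates `q`. -/
noncomputable def pt (b : Module.Basis (Fin 3) ℂ (Fin 3 → ℂ)) (q : Fin 2 → ℂ) :
    Submodule ℂ (Fin 3 → ℂ) := Submodule.span ℂ {aff b q}

/-- The restriction of a linear form to the affine chart. -/
noncomputable def affPoly (b : Module.Basis (Fin 3) ℂ (Fin 3 → ℂ)) (f : Module.Dual ℂ (Fin 3 → ℂ)) :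
    Poly := C (f (b 0)) + C (f (b 1)) * X 0 + C (f (b 2)) * X 1

section

variable (b : Module.Basis (Fin 3) ℂ (Fin 3 → ℂ))

lemma coord_aff (q : Fin 2 → ℂ) : b.coord 0 (aff b q) = 1 := by
  simp [aff, Module.Basis.coord_apply]

lemma exists_aff {v : Fin 3 → ℂ} (hv : b.coord 0 v = 1) : ∃ q, aff b q = v := by
  refine ⟨![b.coord 1 v, b.coord 2 v], ?_⟩
  have h0 : b.repr v 0 = 1 := hv
  have h := b.sum_repr v
  rw [Fin.sum_univ_three, h0, one_smul] at h
  simpa [aff, Module.Basis.coord_apply] using h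

lemma aff_injective : Function.Injective (aff b) := by
  intro q q' h
  have h1 := congrArg (b.coord 1) h
  have h2 := congrArg (b.coord 2) h
  simp [aff, Module.Basis.coord_apply] at h1 h2
  funext i
  fin_cases i
  · exact h1
  · exact h2

lemma pt_injective : Function.Injective (pt b) := by
  intro q q' h
  have h1 : aff b q ∈ pt b q' := h ▸ Submodule.mem_span_singleton_self _
  obtain ⟨c, hc⟩ := Submodule.mem_span_singleton.1 h1
  have h2 := congrArg (b.coord 0) hc
  rw [map_smul, coord_aff, coord_aff, smul_eq_mul, mul_one] at h2
  rw [h2, one_smul] at hc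
  exact aff_injective b hc.symm

lemma exists_pt {v : Fin 3 → ℂ} (hv : b.coord 0 v ≠ 0) :
    ∃ q, pt b q = Submodule.span ℂ {v} := by
  obtain ⟨q, hq⟩ := exists_aff b (v := (b.coord 0 v)⁻¹ • v) (by
    rw [map_smul, smul_eq_mul, inv_mul_cancel₀ hv])
  refine ⟨q, ?_⟩
  rw [pt, hq]
  exact Submodule.span_singleton_smul_eq (IsUnit.mk0 _ (inv_ne_zero hv)) v

lemma eval_affPoly (f : Module.Dual ℂ (Fin 3 → ℂ)) (q : Fin 2 → ℂ) :
    eval q (affPoly b f) = f (aff b q) := by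
  simp [affPoly, aff]; ring

lemma eval_affPoly_eq_zero_iff {f : Module.Dual ℂ (Fin 3 → ℂ)} {l : Submodule ℂ (Fin 3 → ℂ)}
    (hf : LinearMap.ker f = l) (q : Fin 2 → ℂ) : eval q (affPoly b f) = 0 ↔ pt b q ≤ l := by
  rw [eval_affPoly, pt, Submodule.span_singleton_le_iff_mem, ← hf, LinearMap.mem_ker]

lemma affPoly_smul (c : ℂ) (f : Module.Dual ℂ (Fin 3 → ℂ)) :
    affPoly b (c • f) = C c * affPoly b f := by
  simp [affPoly]; ring

lemma coeff_affPoly (f : Module.Dual ℂ (Fin 3 → ℂ)) :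
    coeff 0 (affPoly b f) = f (b 0) ∧ coeff (Finsupp.single 0 1) (affPoly b f) = f (b 1) ∧
      coeff (Finsupp.single 1 1) (affPoly b f) = f (b 2) := by
  have h10 : ¬ (Finsupp.single (1 : Fin 2) 1 = Finsupp.single 0 1) := by
    rw [Finsupp.single_left_inj one_ne_zero]; decide
  have h01 : ¬ (Finsupp.single (0 : Fin 2) 1 = Finsupp.single 1 1) := fun h => h10 h.symm
  have e0 : ∀ i : Fin 2, ¬ ((0 : Fin 2 →₀ ℕ) = Finsupp.single i 1) := fun i h => by
    have := congrArg (fun s => s i) h; simp at this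
  have e1 : ∀ i : Fin 2, ¬ (Finsupp.single i 1 = (0 : Fin 2 →₀ ℕ)) := fun i h => e0 i h.symm
  simp [affPoly, coeff_C_mul, coeff_X, coeff_C, h10, h01, e0, e1]

lemma affPoly_injective : Function.Injective (affPoly b) := by
  intro f g h
  refine b.ext fun i => ?_
  fin_cases i
  · simpa [coeff_affPoly] using congrArg (coeff 0) h
  · simpa [coeff_affPoly] using congrArg (coeff (Finsupp.single 0 1)) h
  · simpa [coeff_affPoly] using congrArg (coeff (Finsupp.single 1 1)) h

/-- A line through a point of the chart is given by a polynomial of degree exactly one. -/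
lemma totalDegree_affPoly {f : Module.Dual ℂ (Fin 3 → ℂ)} (hf : f ≠ 0) {q : Fin 2 → ℂ}
    (hq : eval q (affPoly b f) = 0) : (affPoly b f).totalDegree = 1 := by
  refine le_antisymm ?_ ?_
  · have hx : ∀ (c : ℂ) (i : Fin 2), (C c * X i : Poly).totalDegree ≤ 1 := fun c i =>
      (totalDegree_mul _ _).trans (by rw [totalDegree_C, totalDegree_X])
    refine (totalDegree_add _ _).trans (max_le ((totalDegree_add _ _).trans (max_le ?_ ?_)) ?_)
    · rw [totalDegree_C]; omega
    · exact hx _ _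
    · exact hx _ _
  · by_contra h
    have h0 : affPoly b f = C (coeff 0 (affPoly b f)) :=
      totalDegree_eq_zero_iff_eq_C.1 (by omega)
    rw [h0, eval_C] at hq
    rw [hq, C_0] at h0
    refine hf (affPoly_injective b ?_)
    rw [h0]; simp [affPoly]

/-- Polynomials of degree one dividing each other cut out the same line. -/
lemma ker_eq_of_affPoly_dvd {f g : Module.Dual ℂ (Fin 3 → ℂ)} (hf : (affPoly b f).totalDegree = 1)
    (hg : (affPoly b g).totalDegree = 1) (h : affPoly b f ∣ affPoly b g) :
    LinearMap.ker f = LinearMap.ker g := by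
  obtain ⟨r, hr⟩ := h
  have hg0 : affPoly b g ≠ 0 := by intro h; rw [h] at hg; simp at hg
  have hf0 : affPoly b f ≠ 0 := by intro h; rw [h] at hf; simp at hf
  have hr0 : r ≠ 0 := by rintro rfl; exact hg0 (by simpa using hr)
  have hd : r.totalDegree = 0 := by
    have := congrArg totalDegree hr
    rw [totalDegree_mul_of_isDomain hf0 hr0] at this
    omega
  obtain ⟨c, rfl⟩ : ∃ c : ℂ, r = C c := ⟨_, totalDegree_eq_zero_iff_eq_C.1 hd⟩
  have hc : c ≠ 0 := by rintro rfl; simp at hr0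
  have : g = c • f := affPoly_injective b (by rw [affPoly_smul, hr, mul_comm])
  rw [this, LinearMap.ker_smul _ _ hc]

end

lemma exists_dual_ker {l : Submodule ℂ (Fin 3 → ℂ)} (hl : Module.finrank ℂ l = 2) :
    ∃ f : Module.Dual ℂ (Fin 3 → ℂ), f ≠ 0 ∧ LinearMap.ker f = l := by
  have hlt : l < ⊤ := by
    rw [lt_top_iff_ne_top]
    rintro rfl
    rw [finrank_top, Module.finrank_fin_fun] at hl
    omega
  obtain ⟨f, hf, hle⟩ := Submodule.exists_le_ker_of_lt_top l hlt
  refine ⟨f, hf, (Submodule.eq_of_le_of_finrank_eq hle ?_).symm⟩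
  have h1 := LinearMap.finrank_range_add_finrank_ker f
  have h2 : LinearMap.range f = ⊤ := LinearMap.range_eq_top.2 (LinearMap.surjective hf)
  rw [h2, finrank_top, Module.finrank_self, Module.finrank_fin_fun] at h1
  omega

lemma finrank_inf {l l' : Submodule ℂ (Fin 3 → ℂ)} (hl : Module.finrank ℂ l = 2)
    (hl' : Module.finrank ℂ l' = 2) (h : l ≠ l') :
    Module.finrank ℂ (l ⊓ l' : Submodule ℂ (Fin 3 → ℂ)) = 1 := by
  have h1 := Submodule.finrank_sup_add_finrank_inf_eq l l'
  have h2 : Module.finrank ℂ (l ⊔ l' : Submodule ℂ (Fin 3 → ℂ)) ≤ 3 := by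
    simpa using Submodule.finrank_le (l ⊔ l')
  have h3 : Module.finrank ℂ (l ⊓ l' : Submodule ℂ (Fin 3 → ℂ)) < 2 := by
    by_contra! h3
    have e1 : l ⊓ l' = l := Submodule.eq_of_le_of_finrank_le inf_le_left (by omega)
    have e2 : l ⊓ l' = l' := Submodule.eq_of_le_of_finrank_le inf_le_right (by omega)
    exact h (e1.symm.trans e2)
  omega

lemma sum_subtype_filter {α : Type*} {L s : Finset α} (hs : s ⊆ L) (g : α → ℕ)
    {P : L → Prop} [DecidablePred P] (hP : ∀ i : L, P i ↔ i.1 ∈ s) :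
    ∑ i with P i, g i.1 = ∑ l ∈ s, g l := by
  refine Finset.sum_bij (fun i _ => i.1) ?_ ?_ ?_ ?_
  · intro i hi; exact (hP i).1 (Finset.mem_filter.1 hi).2
  · intro i _ j _ h; exact Subtype.ext h
  · intro l hl
    exact ⟨⟨l, hs hl⟩, Finset.mem_filter.2 ⟨Finset.mem_univ _, (hP _).2 hl⟩, rfl⟩
  · intro i _; rfl
end Multinet

open Finset
open scoped Classical

/-- Riemann–Hurwitz type inequality: For a multinet with gcd of
multiplicities 1, with X̄ the set of intersection points of L not in X and m_p the
number of lines through p: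
3 + |X| ≥ (2−k)·[3d − d² + ∑_{p∈X}(n_p² − n_p)] + 2|L| − ∑_{p∈X̄}(m_p − 1). -/
theorem multinet_riemann_hurwitz
    (L : Finset (Submodule ℂ (Fin 3 → ℂ)))
    (hL2 : ∀ ℓ ∈ L, Module.finrank ℂ ℓ = 2)
    (k d : ℕ) (hk : 3 ≤ k)
    (Li : Fin k → Finset (Submodule ℂ (Fin 3 → ℂ)))
    (hsub : ∀ i, Li i ⊆ L)
    (hcover : ∀ ℓ ∈ L, ∃ i, ℓ ∈ Li i)
    (hdisj : ∀ i j, i ≠ j → Disjoint (Li i) (Li j))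
    (hne : ∀ i, (Li i).Nonempty)
    (m : Submodule ℂ (Fin 3 → ℂ) → ℕ)
    (hm : ∀ ℓ ∈ L, 0 < m ℓ)
    (X : Finset (Submodule ℂ (Fin 3 → ℂ)))
    (hX : ∀ p ∈ X, Module.finrank ℂ p = 1 ∧ 3 ≤ (L.filter (fun ℓ => p ≤ ℓ)).card)
    (h1 : ∀ i, ∑ ℓ ∈ Li i, m ℓ = d)
    (h2 : ∀ i j, i ≠ j → ∀ ℓ ∈ Li i, ∀ ℓ' ∈ Li j, ℓ ⊓ ℓ' ∈ X)
    (n : Submodule ℂ (Fin 3 → ℂ) → ℕ)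
    (h3 : ∀ p ∈ X, ∀ i, ∑ ℓ ∈ (Li i).filter (fun ℓ => p ≤ ℓ), m ℓ = n p)
    (h4 : ∀ i, ∀ ℓ ∈ Li i, ∀ ℓ' ∈ Li i,
      Relation.ReflTransGen
        (fun a b => a ∈ Li i ∧ b ∈ Li i ∧ a ≠ b ∧ a ⊓ b ∉ X) ℓ ℓ')
    (hgcd : L.gcd m = 1)
    (Xbar : Finset (Submodule ℂ (Fin 3 → ℂ)))
    (hXbar : ∀ p, p ∈ Xbar ↔ Module.finrank ℂ p = 1 ∧ p ∉ X ∧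
        2 ≤ (L.filter (fun ℓ => p ≤ ℓ)).card)
    :
    3 + (X.card : ℤ)
      ≥ (2 - (k : ℤ)) * (3 * (d : ℤ) - (d : ℤ) ^ 2 + ∑ p ∈ X, ((n p : ℤ) ^ 2 - (n p : ℤ)))
        + 2 * (L.card : ℤ)
        - ∑ p ∈ Xbar, (((L.filter (fun ℓ => p ≤ ℓ)).card : ℤ) - 1) := by
  -- an affine chart containing all intersection points
  have hgen : ∀ p ∈ X ∪ Xbar, ∃ v : Fin 3 → ℂ, v ≠ 0 ∧ p = Submodule.span ℂ {v} := by
    intro p hp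
    have hp1 : Module.finrank ℂ p = 1 := by
      rcases Finset.mem_union.1 hp with h | h
      · exact (hX p h).1
      · exact ((hXbar p).1 h).1
    obtain ⟨v, hv0, hv⟩ := finrank_eq_one_iff'.1 hp1
    refine ⟨v, by simpa using hv0, le_antisymm ?_ ?_⟩
    · intro w hw
      obtain ⟨c, hc⟩ := hv ⟨w, hw⟩
      exact Submodule.mem_span_singleton.2 ⟨c, congrArg Subtype.val hc⟩
    · exact (Submodule.span_singleton_le_iff_mem _ _).2 v.2
  choose! v hv0 hv using hgen
  obtain ⟨b, hb⟩ := Multinet.exists_basis ((X ∪ Xbar).image v) (by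
    intro w hw
    obtain ⟨p, hp, rfl⟩ := Finset.mem_image.1 hw
    exact hv0 p hp)
  have hpt : ∀ p ∈ X ∪ Xbar, ∃ q, Multinet.pt b q = p := by
    intro p hp
    obtain ⟨q, hq⟩ := Multinet.exists_pt b (hb (v p) (Finset.mem_image_of_mem v hp))
    exact ⟨q, hq.trans (hv p hp).symm⟩
  have hinj : ∀ S : Set (Submodule ℂ (Fin 3 → ℂ)), Set.InjOn (Multinet.pt b) (Multinet.pt b ⁻¹' S) :=
    fun S => (Multinet.pt_injective b).injOn
  have hline : ∀ l ∈ L, ∃ f : Module.Dual ℂ (Fin 3 → ℂ), f ≠ 0 ∧ LinearMap.ker f = l :=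
    fun l hl => Multinet.exists_dual_ker (hL2 l hl)
  choose! f hf0 hf using hline
  have hcls : ∀ l ∈ L, ∃ i, l ∈ Li i := hcover
  have : NeZero k := ⟨by omega⟩
  choose! cls hcls using hcls
  have hcls_iff : ∀ l ∈ L, ∀ c, cls l = c ↔ l ∈ Li c := by
    intro l hl c
    refine ⟨fun h => h ▸ hcls l hl, fun h => ?_⟩
    by_contra hne
    exact Finset.disjoint_left.1 (hdisj _ _ hne) (hcls l hl) h
  have hev : ∀ l ∈ L, ∀ q, MvPolynomial.eval q (Multinet.affPoly b (f l)) = 0 ↔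
      Multinet.pt b q ≤ l := fun l hl q => Multinet.eval_affPoly_eq_zero_iff b (hf l hl) q
  have hmeet : ∀ l ∈ L, ∀ l' ∈ L, l ≠ l' → l ⊓ l' ∈ X ∪ Xbar := by
    intro l hl l' hl' hne
    by_cases h : l ⊓ l' ∈ X
    · exact Finset.mem_union_left _ h
    · refine Finset.mem_union_right _ ((hXbar _).2
        ⟨Multinet.finrank_inf (hL2 l hl) (hL2 l' hl') hne, h, ?_⟩)
      refine Finset.one_lt_card.2 ⟨l, ?_, l', ?_, hne⟩
      · exact Finset.mem_filter.2 ⟨hl, inf_le_left⟩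
      · exact Finset.mem_filter.2 ⟨hl', inf_le_right⟩
  have hother : ∀ l ∈ L, ∃ l' ∈ L, cls l ≠ cls l' := by
    intro l hl
    obtain ⟨c, hc⟩ : ∃ c : Fin k, c ≠ cls l := by
      have : Nontrivial (Fin k) := Fin.nontrivial_iff_two_le.2 (by omega)
      exact exists_ne _
    obtain ⟨l', hl'⟩ := hne c
    refine ⟨l', hsub c hl', ?_⟩
    rw [(hcls_iff l' (hsub c hl') c).2 hl']
    exact hc.symm
  have hcross : ∀ l ∈ L, ∀ l' ∈ L, cls l ≠ cls l' → l ⊓ l' ∈ X := fun l hl l' hl' h =>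
    h2 _ _ h l (hcls l hl) l' (hcls l' hl')
  have hdeg : ∀ l ∈ L, (Multinet.affPoly b (f l)).totalDegree = 1 := by
    intro l hl
    obtain ⟨l', hl', hne'⟩ := hother l hl
    obtain ⟨q, hq⟩ := hpt _ (Finset.mem_union_left _ (hcross l hl l' hl' hne'))
    exact Multinet.totalDegree_affPoly b (hf0 l hl) (q := q)
      ((hev l hl q).2 (hq.le.trans inf_le_left))
  have hcard : ∀ q, Finset.card {i : L | MvPolynomial.eval q (Multinet.affPoly b (f i.1)) = 0}
      = (L.filter (fun l => Multinet.pt b q ≤ l)).card := by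
    intro q
    rw [Finset.card_eq_sum_ones, Finset.card_eq_sum_ones]
    refine Multinet.sum_subtype_filter (Finset.filter_subset _ _) (fun _ => 1) fun i => ?_
    rw [hev i.1 i.2, Finset.mem_filter]
    exact ⟨fun h => ⟨i.2, h⟩, fun h => h.2⟩
  let N : Multinet.Net L k d :=
    { line := fun i => Multinet.affPoly b (f i.1)
      cls := fun i => cls i.1
      m := fun i => m i.1
      X := X.preimage (Multinet.pt b) (hinj _)
      Xb := Xbar.preimage (Multinet.pt b) (hinj _)
      n := fun q => n (Multinet.pt b q)
      hk := hk
      surj := by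
        intro c
        obtain ⟨l, hl⟩ := hne c
        exact ⟨⟨l, hsub c hl⟩, (hcls_iff l (hsub c hl) c).2 hl⟩
      tdeg := fun i => hdeg i.1 i.2
      nondvd := by
        intro i j h
        have := Multinet.ker_eq_of_affPoly_dvd b (hdeg i.1 i.2) (hdeg j.1 j.2) h
        rw [hf i.1 i.2, hf j.1 j.2] at this
        exact Subtype.ext this
      m_pos := fun i => hm i.1 i.2
      sum_m := by
        intro c
        rw [← h1 c]
        exact Multinet.sum_subtype_filter (hsub c) m fun i => hcls_iff i.1 i.2 c
      sum_n := by
        intro q hq c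
        rw [← h3 _ (Finset.mem_preimage.1 hq) c]
        refine Multinet.sum_subtype_filter ((Finset.filter_subset _ _).trans (hsub c)) m fun i => ?_
        rw [hcls_iff i.1 i.2, hev i.1 i.2, Finset.mem_filter]
      n_pos := by
        intro q hq
        have hq' := Finset.mem_preimage.1 hq
        have h3c := (hX _ hq').2
        obtain ⟨l, hl⟩ := Finset.card_pos.1 (by omega :
          0 < (L.filter (fun l => Multinet.pt b q ≤ l)).card)
        obtain ⟨hlL, hql⟩ := Finset.mem_filter.1 hl
        rw [← h3 _ hq' (cls l)]
        exact (hm l hlL).trans_le (Finset.single_le_sum (f := m) (fun _ _ => Nat.zero_le _)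
          (Finset.mem_filter.2 ⟨hcls l hlL, hql⟩))
      disj := by
        rw [Finset.disjoint_left]
        intro q h h'
        exact ((hXbar _).1 (Finset.mem_preimage.1 h')).2.1 (Finset.mem_preimage.1 h)
      meet := by
        intro i j hij
        have hmem := hmeet i.1 i.2 j.1 j.2 (fun h => hij (Subtype.ext h))
        obtain ⟨q, hq⟩ := hpt _ hmem
        refine ⟨q, ?_, (hev i.1 i.2 q).2 (hq.le.trans inf_le_left),
          (hev j.1 j.2 q).2 (hq.le.trans inf_le_right)⟩
        rw [Finset.mem_preimage, Finset.mem_preimage, hq]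
        exact Finset.mem_union.1 hmem
      cross := by
        intro i j hij
        have hmem := hcross i.1 i.2 j.1 j.2 hij
        obtain ⟨q, hq⟩ := hpt _ (Finset.mem_union_left _ hmem)
        exact ⟨q, Finset.mem_preimage.2 (hq ▸ hmem), (hev i.1 i.2 q).2 (hq.le.trans inf_le_left),
          (hev j.1 j.2 q).2 (hq.le.trans inf_le_right)⟩
      conn := by
        intro i j hij
        have hi := hcls i.1 i.2
        have hj : j.1 ∈ Li (cls i.1) := hij ▸ hcls j.1 j.2
        have key : ∀ l, Relation.ReflTransGen
            (fun a b => a ∈ Li (cls i.1) ∧ b ∈ Li (cls i.1) ∧ a ≠ b ∧ a ⊓ b ∉ X) i.1 l →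
            ∀ hl : l ∈ L, Relation.ReflTransGen (fun a c : L => cls a.1 = cls c.1 ∧
              ∃ q, q ∉ X.preimage (Multinet.pt b) (hinj _) ∧
                MvPolynomial.eval q (Multinet.affPoly b (f a.1)) = 0 ∧
                MvPolynomial.eval q (Multinet.affPoly b (f c.1)) = 0) i ⟨l, hl⟩ := by
          intro l h
          induction h with
          | refl => intro _; exact Relation.ReflTransGen.refl
          | @tail a c _ hac ih =>
            intro hc
            have ha : a ∈ L := hsub _ hac.1
            refine (ih ha).tail ⟨?_, ?_⟩
            · exact ((hcls_iff a ha _).2 hac.1).trans ((hcls_iff c hc _).2 hac.2.1).symm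
            · obtain ⟨q, hq⟩ := hpt _ (hmeet a ha c hc hac.2.2.1)
              exact ⟨q, fun h => hac.2.2.2 (hq ▸ Finset.mem_preimage.1 h),
                (hev a ha q).2 (hq.le.trans inf_le_left), (hev c hc q).2 (hq.le.trans inf_le_right)⟩
        exact key j.1 (h4 _ i.1 hi j.1 hj) j.2
      gcd_m := by
        intro e he
        have : e ∣ L.gcd m := Finset.dvd_gcd fun l hl => he ⟨l, hl⟩
        rw [hgcd] at this
        exact Nat.dvd_one.1 this
      card_Xb := by
        intro q hq
        rw [hcard]
        exact ((hXbar _).1 (Finset.mem_preimage.1 hq)).2.2 }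
  have key := N.inequality
  have hrange : ∀ Y ⊆ X ∪ Xbar, ∀ p ∈ Y, p ∉ Set.range (Multinet.pt b) → False :=
    fun Y hY p hp h => h (hpt p (hY hp))
  have hsum : ∀ Y ⊆ X ∪ Xbar, ∀ g : Submodule ℂ (Fin 3 → ℂ) → ℤ,
      ∑ q ∈ Y.preimage (Multinet.pt b) (hinj _), g (Multinet.pt b q) = ∑ p ∈ Y, g p :=
    fun Y hY g => Finset.sum_preimage _ Y (hinj _) g
      fun p hp h => (hrange Y hY p hp h).elim
  have eX : ((X.preimage (Multinet.pt b) (hinj _)).card : ℤ) = X.card := by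
    have := hsum X Finset.subset_union_left (fun _ => 1)
    simpa using this
  have eN := hsum X Finset.subset_union_left (fun p => (n p : ℤ) ^ 2 - n p)
  have eB := hsum Xbar Finset.subset_union_right
    (fun p => ((L.filter (fun l => p ≤ l)).card : ℤ) - 1)
  have eB' : ∑ q ∈ N.Xb, ((N.mu q : ℤ) - 1)
      = ∑ p ∈ Xbar, (((L.filter (fun l => p ≤ l)).card : ℤ) - 1) := by
    rw [← eB]
    refine Finset.sum_congr rfl fun q _ => ?_
    rw [← hcard q]
    rfl
  rw [eB', Fintype.card_coe] at key
  rw [← eX, ← eN]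
  exact key
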